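/- Every proper gradient map f : ℝ² → ℝ² with Brouwer degree deg f = 1 is proper gradient homotopic to the identity map id_{ℝ²} or to the minus identity map −id_{ℝ²}; in particular, the set of proper gradient homotopy classes of proper gradient maps of degree 1 on ℝ² has at most two elements. -/

import Mathlib

open Set Metric Filter

noncomputable section

/-- Euclidean space `ℝⁿ`. -/
abbrev Euc (n : ℕ) := EuclideanSpace ℝ (Fin n)

/-- A map `f : ℝⁿ → ℝⁿ` is gradient if it is the gradient of a `C¹` function `φ : ℝⁿ → ℝ`. -/
def IsGradient {n : ℕ} (f : Euc n → Euc n) : Prop :=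
  ∃ φ : Euc n → ℝ, ContDiff ℝ 1 φ ∧ ∀ x, gradient φ x = f x

/-- A map is proper if preimages of compact sets are compact (our maps are continuous anyway). -/
def IsProper {n : ℕ} (f : Euc n → Euc n) : Prop :=
  ∀ K : Set (Euc n), IsCompact K → IsCompact (f ⁻¹' K)

/-- `h : [0,1] × ℝⁿ → ℝⁿ` is a gradient homotopy: it is continuous, each `h t` is a
gradient map, and the zero set `h⁻¹(0)` (within `[0,1] × ℝⁿ`) is compact. -/
def IsGradientHomotopy {n : ℕ} (h : ℝ → Euc n → Euc n) : Prop :=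
  ContinuousOn (fun p : ℝ × Euc n => h p.1 p.2) (Icc 0 1 ×ˢ univ) ∧
  (∀ t ∈ Icc (0:ℝ) 1, IsGradient (h t)) ∧
  IsCompact {p : ℝ × Euc n | p.1 ∈ Icc (0:ℝ) 1 ∧ h p.1 p.2 = 0}

/-- Two maps are gradient homotopic if some gradient homotopy connects them. -/
def GradientHomotopic {n : ℕ} (f g : Euc n → Euc n) : Prop :=
  ∃ h : ℝ → Euc n → Euc n, IsGradientHomotopy h ∧ h 0 = f ∧ h 1 = g

/-- `h : [0,1] × ℝⁿ → ℝⁿ` is a proper gradient homotopy: it is continuous, each `h t` is a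
gradient map, and `h` is proper as a map on `[0,1] × ℝⁿ`. -/
def IsProperGradientHomotopy {n : ℕ} (h : ℝ → Euc n → Euc n) : Prop :=
  ContinuousOn (fun p : ℝ × Euc n => h p.1 p.2) (Icc 0 1 ×ˢ univ) ∧
  (∀ t ∈ Icc (0:ℝ) 1, IsGradient (h t)) ∧
  (∀ K : Set (Euc n), IsCompact K →
    IsCompact {p : ℝ × Euc n | p.1 ∈ Icc (0:ℝ) 1 ∧ h p.1 p.2 ∈ K})

/-- Two maps are proper gradient homotopic if some proper gradient homotopy connects them. -/
def ProperGradientHomotopic {n : ℕ} (f g : Euc n → Euc n) : Prop :=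
  ∃ h : ℝ → Euc n → Euc n, IsProperGradientHomotopy h ∧ h 0 = f ∧ h 1 = g
/-- A Brouwer degree theory on `ℝⁿ`: an integer-valued function `deg f Ω`, defined for
continuous maps nonvanishing on `∂Ω`, satisfying the classical axioms of normalization,
additivity and homotopy invariance, which determine it uniquely. -/
structure DegreeTheory (n : ℕ) where
  deg : (Euc n → Euc n) → Set (Euc n) → ℤ
  normalized : ∀ Ω : Set (Euc n), IsOpen Ω → Bornology.IsBounded Ω → (0 : Euc n) ∈ Ω →
    deg id Ω = 1
  additive : ∀ (f : Euc n → Euc n) (Ω Ω₁ Ω₂ : Set (Euc n)),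
    IsOpen Ω → Bornology.IsBounded Ω → IsOpen Ω₁ → IsOpen Ω₂ →
    Ω₁ ⊆ Ω → Ω₂ ⊆ Ω → Disjoint Ω₁ Ω₂ →
    ContinuousOn f (closure Ω) →
    (∀ x ∈ closure Ω \ (Ω₁ ∪ Ω₂), f x ≠ 0) →
    deg f Ω = deg f Ω₁ + deg f Ω₂
  homotopyInv : ∀ (h : ℝ → Euc n → Euc n) (Ω : Set (Euc n)),
    IsOpen Ω → Bornology.IsBounded Ω →
    ContinuousOn (fun p : ℝ × Euc n => h p.1 p.2) (Icc 0 1 ×ˢ closure Ω) →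
    (∀ t ∈ Icc (0:ℝ) 1, ∀ x ∈ frontier Ω, h t x ≠ 0) →
    deg (h 0) Ω = deg (h 1) Ω

/-- `f` has Brouwer degree `k`: `deg f` computed on any ball containing `f⁻¹(0)` equals `k`. -/
def HasDeg {n : ℕ} (D : DegreeTheory n) (f : Euc n → Euc n) (k : ℤ) : Prop :=
  ∀ R : ℝ, 0 < R → f ⁻¹' {0} ⊆ ball 0 R → D.deg f (ball 0 R) = k

noncomputable section
open scoped NNReal Topology

section ODE
variable {X : Type*} [NormedAddCommGroup X] [NormedSpace ℝ X]

lemma ode_exists_bdd [CompleteSpace X] (v : ℝ → X → X) (K L : ℝ≥0) (hK : ∀ t, LipschitzWith K (v t))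
    (hc : ∀ x, Continuous fun t => v t x) (hL : ∀ t x, ‖v t x‖ ≤ L) (x₀ : X) :
    ∃ y : ℝ → X, y 0 = x₀ ∧ ∀ t ∈ Icc (0:ℝ) 1, HasDerivAt y (v t (y t)) t := by
  have h0 : (0:ℝ) ∈ Icc (-1:ℝ) 2 := by constructor <;> norm_num
  have hp : IsPicardLindelof v (tmin := -1) (tmax := 2) ⟨0, h0⟩ x₀ (L * 2) 0 L K :=
    { lipschitzOnWith := fun t _ => (hK t).lipschitzOnWith
      continuousOn := fun x _ => (hc x).continuousOn
      norm_le := fun t _ x _ => hL t x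
      mul_max_le := by
        have : max ((2:ℝ) - 0) (0 - (-1)) = 2 := by norm_num
        simp only [this]; simp }
  obtain ⟨y, hy0, hy⟩ := hp.exists_eq_forall_mem_Icc_hasDerivWithinAt₀
  refine ⟨y, hy0, fun t ht => ?_⟩
  exact (hy t ⟨by linarith [ht.1], by linarith [ht.2]⟩).hasDerivAt
    (Icc_mem_nhds (by linarith [ht.1]) (by linarith [ht.2]))

lemma gronwall_bd {δ K ε t : ℝ} (hδ : 0 ≤ δ) (hK : 0 ≤ K) (hε : 0 ≤ ε) (ht : t ≤ 1) :
    gronwallBound δ K ε t ≤ (δ + ε) * Real.exp (K + 1) := by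
  have h1 : gronwallBound δ K ε t ≤ gronwallBound δ K ε 1 := gronwallBound_mono hδ hε hK ht
  refine h1.trans ?_
  by_cases h : K = 0
  · subst h
    rw [gronwallBound_K0]
    have := Real.add_one_le_exp (0 + 1 : ℝ)
    nlinarith
  · rw [gronwallBound_of_K_ne_0 h]
    have hKp : 0 < K := lt_of_le_of_ne hK (Ne.symm h)
    have e1 : (Real.exp (K * 1) - 1) / K ≤ Real.exp (K + 1) := by
      rw [div_le_iff₀ hKp, mul_one]
      have h2 : Real.exp K * (1 - K) ≤ 1 := by
        have := Real.add_one_le_exp (-K)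
        calc Real.exp K * (1 - K) ≤ Real.exp K * Real.exp (-K) := by
              apply mul_le_mul_of_nonneg_left (by linarith) (Real.exp_pos _).le
          _ = 1 := by rw [← Real.exp_add]; simp
      have h3 : Real.exp K ≤ Real.exp (K+1) := Real.exp_le_exp.2 (by linarith)
      nlinarith
    have e2 : Real.exp (K * 1) ≤ Real.exp (K+1) := Real.exp_le_exp.2 (by linarith)
    simp only
    have : ε / K * (Real.exp (K * 1) - 1) = ε * ((Real.exp (K * 1) - 1) / K) := by ring
    rw [this]
    nlinarith [mul_le_mul_of_nonneg_left e1 hε, mul_le_mul_of_nonneg_left e2 hδ]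

lemma ode_exists_linear [FiniteDimensional ℝ X] (A : ℝ → X →L[ℝ] X) (hA : Continuous A) (C : ℝ≥0)
    (hC : ∀ t, ‖A t‖ ≤ C) :
    ∃ L : ℝ → X →L[ℝ] X, L 0 = ContinuousLinearMap.id ℝ X ∧
      (∀ t ∈ Icc (0:ℝ) 1, HasDerivAt L (A t ∘L L t) t) ∧
      ∀ t ∈ Icc (0:ℝ) 1, ‖L t‖ ≤ Real.exp (C + 1) := by
  let χ : ContDiffBump (0 : X →L[ℝ] X) := ⟨Real.exp (C+1), Real.exp (C+1) + 1, Real.exp_pos _, by linarith⟩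
  let w : (X →L[ℝ] X) → (X →L[ℝ] X) := fun ξ => χ ξ • ξ
  have hwc : ContDiff ℝ 1 w := χ.contDiff.smul contDiff_id
  have hws : HasCompactSupport w := χ.hasCompactSupport.smul_right
  obtain ⟨K, hK⟩ := hwc.lipschitzWith_of_hasCompactSupport hws (by norm_num)
  obtain ⟨B, hB⟩ := hws.exists_bound_of_continuous hwc.continuous
  have hB0 : 0 ≤ B := (norm_nonneg _).trans (hB 0)
  have hwle : ∀ ξ, ‖w ξ‖ ≤ ‖ξ‖ := by
    intro ξ
    simp only [w, norm_smul, Real.norm_eq_abs, abs_of_nonneg (χ.nonneg (x := ξ))]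
    exact mul_le_of_le_one_left (norm_nonneg _) χ.le_one
  obtain ⟨L, hL0, hL⟩ := ode_exists_bdd (fun t ξ => A t ∘L w ξ) (C * K) (C * B.toNNReal)
    (by
      intro t
      refine LipschitzWith.of_dist_le_mul fun a b => ?_
      rw [dist_eq_norm, dist_eq_norm, ← ContinuousLinearMap.comp_sub]
      refine (ContinuousLinearMap.opNorm_comp_le _ _).trans ?_
      have := hK.dist_le_mul a b
      rw [dist_eq_norm, dist_eq_norm] at this
      push_cast
      rw [mul_assoc]
      exact mul_le_mul (hC t) this (norm_nonneg _) C.2)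
    (by intro ξ; exact hA.clm_comp continuous_const)
    (by
      intro t ξ
      refine (ContinuousLinearMap.opNorm_comp_le _ _).trans ?_
      push_cast
      rw [Real.coe_toNNReal _ hB0]
      exact mul_le_mul (hC t) (hB ξ) (norm_nonneg _) C.2)
    (ContinuousLinearMap.id ℝ X)
  have hbd : ∀ t ∈ Icc (0:ℝ) 1, ‖L t‖ ≤ Real.exp (C + 1) := by
    intro t ht
    have := norm_le_gronwallBound_of_norm_deriv_right_le (f := L) (δ := 1) (K := C) (ε := 0)
      (fun t ht => (hL t ht).continuousAt.continuousWithinAt)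
      (fun t ht => (hL t ⟨ht.1, ht.2.le⟩).hasDerivWithinAt)
      (by rw [hL0]; exact ContinuousLinearMap.norm_id_le)
      (by
        intro t ht
        rw [add_zero]
        refine (ContinuousLinearMap.opNorm_comp_le _ _).trans ?_
        exact mul_le_mul (hC t) (hwle _) (norm_nonneg _) C.2) t ht
    refine this.trans ((gronwall_bd zero_le_one C.2 le_rfl (by linarith [ht.2])).trans ?_)
    simp
  refine ⟨L, hL0, fun t ht => ?_, hbd⟩
  have h1 : w (L t) = L t := by
    have : χ (L t) = 1 := χ.one_of_mem_closedBall (by simpa using hbd t ht)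
    simp [w, this]
  have := hL t ht
  simpa only [h1] using this

lemma fderiv_unif_approx [FiniteDimensional ℝ X] (F : X → X) (hF : ContDiff ℝ 1 F)
    (hs : HasCompactSupport F) {ε : ℝ} (hε : 0 < ε) :
    ∃ δ > 0, (∀ a b, ‖a - b‖ ≤ δ → ‖fderiv ℝ F a - fderiv ℝ F b‖ ≤ ε) ∧
      ∀ a b, ‖b - a‖ ≤ δ → ‖F b - F a - fderiv ℝ F a (b - a)‖ ≤ ε * ‖b - a‖ := by
  have hc : Continuous (fderiv ℝ F) := hF.continuous_fderiv (by norm_num)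
  have hu : UniformContinuous (fderiv ℝ F) :=
    hc.uniformContinuous_of_tendsto_cocompact (x := 0)
      ((hs.fderiv (𝕜 := ℝ)).is_zero_at_infty) 
  obtain ⟨δ, hδ, h⟩ := Metric.uniformContinuous_iff.1 hu ε hε
  have h1 : ∀ a b, ‖a - b‖ ≤ δ / 2 → ‖fderiv ℝ F a - fderiv ℝ F b‖ ≤ ε := by
    intro a b hab
    have := h (a := a) (b := b) (by rw [dist_eq_norm]; linarith)
    rw [dist_eq_norm] at this
    exact this.le
  refine ⟨δ / 2, by positivity, h1, fun a b hab => ?_⟩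
  refine (convex_closedBall a (δ/2)).norm_image_sub_le_of_norm_hasFDerivWithin_le'
    (f' := fderiv ℝ F) (fun x _ => ((hF.differentiable (by norm_num)) x).hasFDerivAt.hasFDerivWithinAt)
    (fun x hx => h1 x a (by simpa [dist_eq_norm] using hx)) (by simpa using by positivity)
    (by simpa [dist_eq_norm] using hab)

theorem flow_C1 [FiniteDimensional ℝ X] (F : X → X) (hF : ContDiff ℝ 1 F) (hs : HasCompactSupport F) :
    ∃ (Φ : X → ℝ → X) (L : X → ℝ → X →L[ℝ] X),
      (∀ a, Φ a 0 = a) ∧ (∀ a, ∀ t ∈ Icc (0:ℝ) 1, HasDerivAt (Φ a) (F (Φ a t)) t) ∧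
      (∀ a, L a 0 = ContinuousLinearMap.id ℝ X) ∧
      (∀ a, ∀ t ∈ Icc (0:ℝ) 1, HasDerivAt (L a) (fderiv ℝ F (Φ a t) ∘L L a t) t) ∧
      (∀ a, ∀ t ∈ Icc (0:ℝ) 1, HasStrictFDerivAt (fun b => Φ b t) (L a t) a) := by
  obtain ⟨K, hK⟩ := hF.lipschitzWith_of_hasCompactSupport hs (by norm_num)
  obtain ⟨B, hB⟩ := hs.exists_bound_of_continuous hF.continuous
  have hB0 : 0 ≤ B := (norm_nonneg _).trans (hB 0)
  have hFc : Continuous (fderiv ℝ F) := hF.continuous_fderiv (by norm_num)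
  have hDF : ∀ x, ‖fderiv ℝ F x‖ ≤ K := fun x => norm_fderiv_le_of_lipschitz ℝ hK
  have hex : ∀ a, ∃ y : ℝ → X, y 0 = a ∧ ∀ t ∈ Icc (0:ℝ) 1, HasDerivAt y (F (y t)) t := fun a =>
    ode_exists_bdd (fun _ => F) K B.toNNReal (fun _ => hK) (fun x => continuous_const)
      (fun t x => by rw [Real.coe_toNNReal _ hB0]; exact hB x) a
  choose Φ hΦ0 hΦ using hex
  have hΦc : ∀ a, ContinuousOn (Φ a) (Icc 0 1) := fun a t ht => (hΦ a t ht).continuousAt.continuousWithinAt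
  have hlin : ∀ a, ∃ L : ℝ → X →L[ℝ] X, L 0 = ContinuousLinearMap.id ℝ X ∧
      (∀ t ∈ Icc (0:ℝ) 1, HasDerivAt L (fderiv ℝ F (Φ a t) ∘L L t) t) ∧
      ∀ t ∈ Icc (0:ℝ) 1, ‖L t‖ ≤ Real.exp (K + 1) := by
    intro a
    obtain ⟨L, h0, h1, h2⟩ := ode_exists_linear
      (fun t => fderiv ℝ F (Φ a (projIcc (0:ℝ) 1 zero_le_one t)))
      (hFc.comp ((continuousOn_iff_continuous_domRestrict.1 (hΦc a)).comp continuous_projIcc)) K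
      (fun t => hDF _)
    refine ⟨L, h0, fun t ht => ?_, h2⟩
    have := h1 t ht
    simpa only [projIcc_of_mem zero_le_one ht] using this
  choose L hL0 hL hLb using hlin
  set M := Real.exp (K + 1) with hM
  have hM0 : 0 < M := Real.exp_pos _
  have hdist : ∀ a b, ∀ t ∈ Icc (0:ℝ) 1, ‖Φ b t - Φ a t‖ ≤ M * ‖b - a‖ := by
    intro a b t ht
    have := dist_le_of_trajectories_ODE (v := fun _ => F) (K := K) (a := 0) (b := 1) (δ := ‖b - a‖)
      (fun _ => hK) (hΦc b) (fun t ht => (hΦ b t ⟨ht.1, ht.2.le⟩).hasDerivWithinAt)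
      (hΦc a) (fun t ht => (hΦ a t ⟨ht.1, ht.2.le⟩).hasDerivWithinAt)
      (by rw [hΦ0, hΦ0, dist_eq_norm]) t ht
    rw [dist_eq_norm] at this
    refine this.trans ?_
    rw [mul_comm]
    refine mul_le_mul_of_nonneg_right (Real.exp_le_exp.2 ?_) (norm_nonneg _)
    have : (K:ℝ) * (t - 0) ≤ K * 1 := mul_le_mul_of_nonneg_left (by linarith [ht.2]) K.2
    linarith
  have hfd : ∀ a, ∀ t ∈ Icc (0:ℝ) 1, HasFDerivAt (fun b => Φ b t) (L a t) a := by
    intro a t ht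
    rw [hasFDerivAt_iff_isLittleO, Asymptotics.isLittleO_iff]
    intro c hc
    obtain ⟨δ, hδ, -, h2⟩ := fderiv_unif_approx F hF hs (ε := c / (M * M)) (by positivity)
    have hnear : ∀ᶠ b in 𝓝 a, ‖b - a‖ < δ / M := by
      filter_upwards [Metric.ball_mem_nhds a (div_pos hδ hM0)] with b hb
      simpa [dist_eq_norm] using hb
    filter_upwards [hnear] with b hb
    have hLs : ∀ t ∈ Icc (0:ℝ) 1, ‖L a t (b - a)‖ ≤ M * ‖b - a‖ := fun t ht =>
      (L a t).le_of_opNorm_le (hLb a t ht) _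
    have hd : ∀ t ∈ Icc (0:ℝ) 1, HasDerivAt (fun t => Φ a t + L a t (b - a))
        (F (Φ a t) + fderiv ℝ F (Φ a t) (L a t (b - a))) t := by
      intro t ht
      exact (hΦ a t ht).add (((hL a t ht).clm_apply (hasDerivAt_const t (b - a))).congr_deriv (by simp))
    have := dist_le_of_approx_trajectories_ODE (v := fun _ => F) (K := K) (a := 0) (b := 1) (δ := 0)
      (f := Φ b) (g := fun t => Φ a t + L a t (b - a)) (εf := 0) (εg := c / (M * M) * (M * ‖b - a‖))
      (fun _ => hK) (hΦc b) (fun t ht => (hΦ b t ⟨ht.1, ht.2.le⟩).hasDerivWithinAt)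
      (fun t ht => by simp)
      (fun t ht => (hd t ht).continuousAt.continuousWithinAt)
      (fun t ht => (hd t ⟨ht.1, ht.2.le⟩).hasDerivWithinAt)
      (by
        intro t ht
        have ht' : t ∈ Icc (0:ℝ) 1 := ⟨ht.1, ht.2.le⟩
        have hh := hLs t ht'
        have := h2 (Φ a t) (Φ a t + L a t (b - a)) (by
          rw [add_sub_cancel_left]
          refine hh.trans ?_
          rw [lt_div_iff₀ hM0] at hb
          linarith)
        rw [add_sub_cancel_left] at this
        rw [dist_eq_norm, norm_sub_rev]
        calc _ = ‖F (Φ a t + (L a t) (b - a)) - F (Φ a t) - (fderiv ℝ F (Φ a t)) ((L a t) (b - a))‖ := by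
              congr 1; abel
          _ ≤ _ := this
          _ ≤ _ := by gcongr)
      (by simp [hΦ0, hL0]) t ht
    rw [dist_eq_norm] at this
    have h3 := this.trans (gronwall_bd le_rfl K.2 (by positivity) (by linarith [ht.2]))
    calc _ = ‖Φ b t - (Φ a t + (L a t) (b - a))‖ := by congr 1; abel
      _ ≤ _ := h3
      _ = _ := by rw [← hM]; field_simp; ring
  have hcont : ∀ a, ∀ t ∈ Icc (0:ℝ) 1, ContinuousAt (fun b => L b t) a := by
    intro a t ht
    rw [Metric.continuousAt_iff']
    intro c hc
    obtain ⟨δ, hδ, h1, -⟩ := fderiv_unif_approx F hF hs (ε := c / (2 * M * M)) (by positivity)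
    have hnear : ∀ᶠ b in 𝓝 a, ‖b - a‖ < δ / M := by
      filter_upwards [Metric.ball_mem_nhds a (div_pos hδ hM0)] with b hb
      simpa [dist_eq_norm] using hb
    filter_upwards [hnear] with b hb
    have := dist_le_of_approx_trajectories_ODE
      (v := fun t (N : X →L[ℝ] X) => fderiv ℝ F (Φ a t) ∘L N) (K := K) (a := 0) (b := 1) (δ := 0)
      (f := L b) (g := L a) (εf := c / (2 * M * M) * M) (εg := 0)
      (by
        intro t
        refine LipschitzWith.of_dist_le_mul fun a b => ?_
        rw [dist_eq_norm, dist_eq_norm, ← ContinuousLinearMap.comp_sub]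
        refine (ContinuousLinearMap.opNorm_comp_le _ _).trans ?_
        exact mul_le_mul_of_nonneg_right (hDF _) (norm_nonneg _))
      (fun t ht => (hL b t ht).continuousAt.continuousWithinAt)
      (fun t ht => (hL b t ⟨ht.1, ht.2.le⟩).hasDerivWithinAt)
      (by
        intro t ht
        have ht' : t ∈ Icc (0:ℝ) 1 := ⟨ht.1, ht.2.le⟩
        rw [dist_eq_norm, ← ContinuousLinearMap.sub_comp]
        refine (ContinuousLinearMap.opNorm_comp_le _ _).trans ?_
        refine mul_le_mul (h1 _ _ ?_) (hLb b t ht') (norm_nonneg _) (by positivity)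
        refine (hdist a b t ht').trans ?_
        rw [lt_div_iff₀ hM0] at hb
        linarith)
      (fun t ht => (hL a t ht).continuousAt.continuousWithinAt)
      (fun t ht => (hL a t ⟨ht.1, ht.2.le⟩).hasDerivWithinAt)
      (fun t ht => by simp)
      (by simp [hL0]) t ht
    refine (this.trans (gronwall_bd le_rfl K.2 (by positivity) (by linarith [ht.2]))).trans_lt ?_
    have : (0 + (c / (2 * M * M) * M + 0)) * Real.exp (K + 1) = c / 2 := by rw [← hM]; field_simp; ring
    rw [this]; linarith
  refine ⟨Φ, L, hΦ0, hΦ, hL0, hL, fun a t ht => ?_⟩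
  exact hasStrictFDerivAt_of_hasFDerivAt_of_continuousAt
    (Eventually.of_forall fun b => hfd b t ht) (hcont a t ht)
end ODE
end

noncomputable section
open scoped NNReal Topology

/-- Standing assumptions on the conformal factor. -/
structure ConfData (u : ℂ → ℝ) (g : ℂ → ℂ) (R : ℝ) : Prop where
  grad : ∀ x, HasFDerivAt u (innerSL ℝ (g x)) x
  smooth : ContDiff ℝ 1 g
  nonneg : ∀ x, 0 ≤ u x
  Rpos : 0 < R
  zero : ∀ x, ‖x‖ < R → u x = 0
  trace : ∀ x, 0 ≤ (fderiv ℝ g x 1).re + (fderiv ℝ g x Complex.I).im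

/-- Hamiltonian vector field of the conformal metric. -/
def hamF (u : ℂ → ℝ) (g : ℂ → ℂ) (y : ℂ × ℂ) : ℂ × ℂ :=
  (Real.exp (-2 * u y.1) • y.2, (Real.exp (-2 * u y.1) * ‖y.2‖ ^ 2) • g y.1)

section
variable {u : ℂ → ℝ} {g : ℂ → ℂ} {R : ℝ}

lemma ConfData.contDiff_u (h : ConfData u g R) : ContDiff ℝ 1 u := by
  rw [contDiff_one_iff_hasFDerivAt]
  exact ⟨fun x => innerSL ℝ (g x), (innerSL ℝ).continuous.comp h.smooth.continuous, h.grad⟩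

lemma ConfData.g_zero (h : ConfData u g R) {x : ℂ} (hx : ‖x‖ < R) : g x = 0 := by
  have h1 : HasFDerivAt u (0 : ℂ →L[ℝ] ℝ) x := by
    refine (hasFDerivAt_const (0:ℝ) x).congr_of_eventuallyEq ?_
    have : ∀ᶠ y in 𝓝 x, ‖y‖ < R := continuous_norm.continuousAt.eventually_lt_const hx
    filter_upwards [this] with y hy using h.zero y hy
  have h2 := (h.grad x).unique h1
  have h3 := congrArg (fun l => l (g x)) h2
  simpa using h3

lemma ConfData.contDiff_F (h : ConfData u g R) : ContDiff ℝ 1 (hamF u g) := by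
  unfold hamF
  have hu : ContDiff ℝ 1 fun y : ℂ × ℂ => Real.exp (-2 * u y.1) :=
    (contDiff_const.mul (h.contDiff_u.comp contDiff_fst)).exp
  exact (hu.smul contDiff_snd).prodMk ((hu.mul (contDiff_snd.norm_sq ℝ)).smul (h.smooth.comp contDiff_fst))

lemma ConfData.deriv_u (h : ConfData u g R) {x : ℝ → ℂ} {x' : ℂ} {t : ℝ} (hx : HasDerivAt x x' t) :
    HasDerivAt (fun s => u (x s)) (inner ℝ (g (x t)) x') t := by
  exact (h.grad (x t)).comp_hasDerivAt t hx

lemma ConfData.deriv_Q (h : ConfData u g R) {x : ℝ → ℂ} {x' : ℂ} {t : ℝ} (hx : HasDerivAt x x' t) :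
    HasDerivAt (fun s => Real.exp (-2 * u (x s)))
      (Real.exp (-2 * u (x t)) * (-2 * inner ℝ (g (x t)) x')) t :=
  ((h.deriv_u hx).const_mul (-2)).exp

lemma ConfData.apriori (h : ConfData u g R) {Y : ℝ → ℂ × ℂ} {c : ℝ → ℝ} {z : ℂ} {τ : ℝ} 
    (hc0 : ∀ t, 0 ≤ c t) (hc1 : ∀ t, c t ≤ 1) (hY0 : Y 0 = (0, z))
    (hY : ∀ t ∈ Icc (0:ℝ) τ, HasDerivAt Y (c t • hamF u g (Y t)) t) :
    ∀ t ∈ Icc (0:ℝ) τ, Real.exp (-2 * u (Y t).1) * ‖(Y t).2‖ ^ 2 = ‖z‖ ^ 2 ∧ ‖(Y t).1‖ ≤ ‖z‖ * t := by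
  have hx : ∀ t ∈ Icc (0:ℝ) τ, HasDerivAt (fun t => (Y t).1) 
      (c t • Real.exp (-2 * u (Y t).1) • (Y t).2) t := fun t ht =>
    (hY t ht).fst
  have hp : ∀ t ∈ Icc (0:ℝ) τ, HasDerivAt (fun t => (Y t).2) 
      (c t • (Real.exp (-2 * u (Y t).1) * ‖(Y t).2‖ ^ 2) • g (Y t).1) t := fun t ht =>
    (hY t ht).snd
  have hu0 : u 0 = 0 := h.zero 0 (by simpa using h.Rpos)
  have hH : ∀ t ∈ Icc (0:ℝ) τ, Real.exp (-2 * u (Y t).1) * ‖(Y t).2‖ ^ 2 = ‖z‖ ^ 2 := by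
    have hd : ∀ t ∈ Icc (0:ℝ) τ, HasDerivAt (fun t => Real.exp (-2 * u (Y t).1) * ‖(Y t).2‖ ^ 2) 0 t := by
      intro t ht
      refine ((h.deriv_Q (hx t ht)).mul (hp t ht).norm_sq).congr_deriv ?_
      simp only [inner_smul_right]
      rw [real_inner_comm (g _) ((Y t).2)]
      ring
    intro t ht
    have := constant_of_has_deriv_right_zero (a := 0) (b := τ)
      (f := fun t => Real.exp (-2 * u (Y t).1) * ‖(Y t).2‖ ^ 2)
      (fun t ht => (hd t ht).continuousAt.continuousWithinAt)
      (fun t ht => (hd t ⟨ht.1, ht.2.le⟩).hasDerivWithinAt) t ht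
    simpa [hY0, hu0] using this
  intro t ht
  refine ⟨hH t ht, ?_⟩
  have hb : ∀ t ∈ Icc (0:ℝ) τ, ‖c t • Real.exp (-2 * u (Y t).1) • (Y t).2‖ ≤ ‖z‖ := by
    intro t ht
    have h1 := hH t ht
    set q := Real.exp (-2 * u (Y t).1) with hq
    have hq0 : 0 < q := Real.exp_pos _
    have hq1 : q ≤ 1 := Real.exp_le_one_iff.2 (by linarith [h.nonneg (Y t).1])
    rw [norm_smul, norm_smul, Real.norm_of_nonneg (hc0 t), Real.norm_of_nonneg hq0.le]
    have h2 : q * ‖(Y t).2‖ ≤ ‖z‖ := by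
      apply le_of_sq_le_sq _ (norm_nonneg _)
      rw [← h1, mul_pow, sq q, mul_assoc]
      nlinarith [mul_nonneg hq0.le (sq_nonneg ‖(Y t).2‖)]
    calc _ ≤ 1 * (q * ‖(Y t).2‖) := mul_le_mul_of_nonneg_right (hc1 t) (by positivity)
      _ ≤ _ := by linarith
  have := norm_image_sub_le_of_norm_deriv_right_le_segment (a := 0) (b := τ) (f := fun t => (Y t).1)
    (f' := fun t => c t • Real.exp (-2 * u (Y t).1) • (Y t).2)
      (fun t ht => (hx t ht).continuousAt.continuousWithinAt)
      (fun t ht => (hx t ⟨ht.1, ht.2.le⟩).hasDerivWithinAt) (C := ‖z‖) 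
      (fun t ht => hb t ⟨ht.1, ht.2.le⟩) t ht
  simpa [hY0] using this

/-- uniform bound for trajectories starting with momentum of norm at most `m` -/
lemma ConfData.exists_bound (h : ConfData u g R) (m : ℝ) : ∃ N > 0, ∀ (Y : ℝ → ℂ × ℂ) (c : ℝ → ℝ) (z : ℂ),
    ‖z‖ ≤ m → (∀ t, 0 ≤ c t) → (∀ t, c t ≤ 1) → Y 0 = (0, z) →
    (∀ t ∈ Icc (0:ℝ) 1, HasDerivAt Y (c t • hamF u g (Y t)) t) → ∀ t ∈ Icc (0:ℝ) 1, ‖Y t‖ < N := by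
  obtain ⟨U, hU⟩ := (isCompact_closedBall (0:ℂ) (max m 0)).exists_bound_of_continuousOn
    h.contDiff_u.continuous.continuousOn
  refine ⟨max m 0 * Real.exp U + max m 0 + 1, by positivity, ?_⟩
  intro Y c z hz hc0 hc1 hY0 hY t ht
  obtain ⟨h1, h2⟩ := h.apriori hc0 hc1 hY0 hY t ht
  have hzm : ‖z‖ ≤ max m 0 := hz.trans (le_max_left _ _)
  have hm0 : 0 ≤ max m 0 := le_max_right _ _
  have h3 : ‖(Y t).1‖ ≤ max m 0 := by
    refine h2.trans ?_
    nlinarith [norm_nonneg z, ht.1, ht.2]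
  have h4 := hU (Y t).1 (by simpa using h3)
  have h5 : ‖(Y t).2‖ ≤ max m 0 * Real.exp U := by
    apply le_of_sq_le_sq _ (by positivity)
    have e1 : ‖(Y t).2‖ ^ 2 = Real.exp (2 * u (Y t).1) * ‖z‖ ^ 2 := by
      rw [← h1, ← mul_assoc, ← Real.exp_add]; simp
    have e2 : Real.exp (2 * u (Y t).1) ≤ Real.exp U ^ 2 := by
      rw [← Real.exp_nat_mul]
      apply Real.exp_le_exp.2
      push_cast
      linarith [le_abs_self (u (Y t).1), h4, Real.norm_eq_abs (u (Y t).1)]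
    rw [e1, mul_pow, mul_comm (max m 0 ^ 2)]
    gcongr
  rw [Prod.norm_def, max_lt_iff]
  constructor
  · have : 0 ≤ max m 0 * Real.exp U := by positivity
    linarith
  · linarith

lemma ConfData.sol_unique (h : ConfData u g R) {Y Z : ℝ → ℂ × ℂ} {z : ℂ} (hY0 : Y 0 = (0, z)) 
    (hY : ∀ t ∈ Icc (0:ℝ) 1, HasDerivAt Y (hamF u g (Y t)) t) (hZ0 : Z 0 = (0, z)) 
    (hZ : ∀ t ∈ Icc (0:ℝ) 1, HasDerivAt Z (hamF u g (Z t)) t) : EqOn Y Z (Icc 0 1) := by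
  obtain ⟨N, hN, hb⟩ := h.exists_bound ‖z‖
  have hYb := hb Y (fun _ => 1) z le_rfl (by simp) (by simp) hY0 (by simpa using hY)
  have hZb := hb Z (fun _ => 1) z le_rfl (by simp) (by simp) hZ0 (by simpa using hZ)
  obtain ⟨K, hK⟩ := (h.contDiff_F.contDiffOn (s := closedBall 0 N)).exists_lipschitzOnWith (by norm_num)
    (convex_closedBall _ _) (isCompact_closedBall _ _)
  refine ODE_solution_unique_of_mem_Icc_right (v := fun _ => hamF u g) (s := fun _ => closedBall 0 N) (K := K)
    (fun t _ => hK) (fun t ht => (hY t ht).continuousAt.continuousWithinAt)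
      (fun t ht => (hY t ⟨ht.1, ht.2.le⟩).hasDerivWithinAt) 
      (fun t ht => by simpa using (hYb t ⟨ht.1, ht.2.le⟩).le)
      (fun t ht => (hZ t ht).continuousAt.continuousWithinAt)
      (fun t ht => (hZ t ⟨ht.1, ht.2.le⟩).hasDerivWithinAt) 
      (fun t ht => by simpa using (hZb t ⟨ht.1, ht.2.le⟩).le) (by rw [hY0, hZ0])

theorem ConfData.exists_flow (h : ConfData u g R) : ∃ (Γ : ℂ → ℝ → ℂ × ℂ) (Λ : ℂ → ℝ → ℂ →L[ℝ] ℂ × ℂ),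
    (∀ z, Γ z 0 = (0, z)) ∧ (∀ z, ∀ t ∈ Icc (0:ℝ) 1, HasDerivAt (Γ z) (hamF u g (Γ z t)) t) ∧
    (∀ z, Λ z 0 = ContinuousLinearMap.inr ℝ ℂ ℂ) ∧ 
    (∀ z, ∀ t ∈ Icc (0:ℝ) 1, HasDerivAt (Λ z) (fderiv ℝ (hamF u g) (Γ z t) ∘L Λ z t) t) ∧
    (∀ z, ∀ t ∈ Icc (0:ℝ) 1, HasStrictFDerivAt (fun w => Γ w t) (Λ z t) z) := by
  have key : ∀ z : ℂ, ∃ (Γ : ℂ → ℝ → ℂ × ℂ) (Λ : ℝ → ℂ →L[ℝ] ℂ × ℂ),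
    (∀ w, Γ w 0 = (0, w)) ∧ 
    (∀ w, ‖w‖ ≤ ‖z‖ + 1 → ∀ t ∈ Icc (0:ℝ) 1, HasDerivAt (Γ w) (hamF u g (Γ w t)) t) ∧
    (Λ 0 = ContinuousLinearMap.inr ℝ ℂ ℂ) ∧ 
    (∀ t ∈ Icc (0:ℝ) 1, HasDerivAt Λ (fderiv ℝ (hamF u g) (Γ z t) ∘L Λ t) t) ∧
    (∀ t ∈ Icc (0:ℝ) 1, HasStrictFDerivAt (fun w => Γ w t) (Λ t) z) := by
    intro z
    obtain ⟨N, hN, hb⟩ := h.exists_bound (‖z‖ + 1)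
    let χ : ContDiffBump (0 : ℂ × ℂ) := ⟨N, N + 1, hN, by linarith⟩
    obtain ⟨Φ, L, h1, h2, h3, h4, h5⟩ := flow_C1 (fun y => χ y • hamF u g y)
      (χ.contDiff.smul h.contDiff_F) χ.hasCompactSupport.smul_right
    have hbd : ∀ w, ‖w‖ ≤ ‖z‖ + 1 → ∀ t ∈ Icc (0:ℝ) 1, ‖Φ (0, w) t‖ < N := fun w hw =>
      hb (Φ (0, w)) (fun t => χ (Φ (0, w) t)) w hw (fun t => χ.nonneg) (fun t => χ.le_one) (h1 _)
        (fun t ht => h2 _ t ht)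
    have hχ : ∀ y, ‖y‖ < N → χ y = 1 := fun y hy => χ.one_of_mem_closedBall (by simpa using hy.le)
    refine ⟨fun w => Φ (0, w), fun t => L (0, z) t ∘L ContinuousLinearMap.inr ℝ ℂ ℂ, fun w => h1 _, ?_, ?_, ?_, ?_⟩
    · intro w hw t ht
      have := h2 (0, w) t ht
      rwa [hχ _ (hbd w hw t ht), one_smul] at this
    · simp only [h3]; rfl
    · intro t ht
      have e := (h4 (0, z) t ht).clm_comp (hasDerivAt_const t (ContinuousLinearMap.inr ℝ ℂ ℂ))
      refine e.congr_deriv ?_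
      have : fderiv ℝ (fun y => χ y • hamF u g y) (Φ (0, z) t) = fderiv ℝ (hamF u g) (Φ (0, z) t) := by
        apply Filter.EventuallyEq.fderiv_eq
        have : ∀ᶠ y in 𝓝 (Φ (0, z) t), ‖y‖ < N := 
          continuous_norm.continuousAt.eventually_lt_const (hbd z (by linarith) t ht)
        filter_upwards [this] with y hy
        rw [hχ y hy, one_smul]
      rw [this]
      ext <;> simp
    · intro t ht
      have e := h5 (0, z) t ht
      have e2 : HasStrictFDerivAt (fun w : ℂ => ((0:ℂ), w)) (ContinuousLinearMap.inr ℝ ℂ ℂ) z :=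
        (ContinuousLinearMap.inr ℝ ℂ ℂ).hasStrictFDerivAt
      exact HasStrictFDerivAt.comp z e e2
  choose Γ' Λ' h1 h2 h3 h4 h5 using key
  refine ⟨fun z => Γ' z z, Λ', fun z => h1 z z, fun z => h2 z z (by linarith), h3, h4, fun z t ht => ?_⟩
  refine (h5 z t ht).congr_of_eventuallyEq ?_
  have : ∀ᶠ y in 𝓝 z, ‖y‖ < ‖z‖ + 1 := continuous_norm.continuousAt.eventually_lt_const (by linarith)
  filter_upwards [this] with w hw
  exact h.sol_unique (h1 z w) (h2 z w hw.le) (h1 w w) (h2 w w (by linarith)) ht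

end
end

noncomputable section
set_option linter.unusedSimpArgs false
open scoped NNReal Topology

lemma jacobi_pos {J K q : ℝ → ℝ} (hJ : ∀ t ∈ Icc (0:ℝ) 1, HasDerivAt J (K t) t)
    (hK : ∀ t ∈ Icc (0:ℝ) 1, HasDerivAt K (q t * J t) t) (hq : ∀ t, 0 ≤ q t) (hJ0 : J 0 = 0) (hK0 : 0 < K 0)
    {t : ℝ} (ht : t ∈ Ioc (0:ℝ) 1) : 0 < J t := by
  have hJc : ContinuousOn J (Icc 0 1) := fun s hs => (hJ s hs).continuousAt.continuousWithinAt
  have hKc : ContinuousOn K (Icc 0 1) := fun s hs => (hK s hs).continuousAt.continuousWithinAt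
  have hmono : MonotoneOn (fun t => J t * K t) (Icc 0 1) := by
    refine monotoneOn_of_hasDerivWithinAt_nonneg (convex_Icc _ _) (hJc.mul hKc)
      (f' := fun t => K t * K t + J t * (q t * J t)) ?_ ?_
    · intro s hs
      rw [interior_Icc] at hs
      exact ((hJ s (Ioo_subset_Icc_self hs)).mul (hK s (Ioo_subset_Icc_self hs))).hasDerivWithinAt
    · intro s hs
      nlinarith [mul_self_nonneg (K s), mul_nonneg (hq s) (mul_self_nonneg (J s))]
  have hJK : ∀ s ∈ Icc (0:ℝ) 1, 0 ≤ J s * K s := by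
    intro s hs
    have := hmono (left_mem_Icc.2 zero_le_one) hs hs.1
    simpa [hJ0] using this
  have hmono2 : MonotoneOn (fun t => J t ^ 2) (Icc 0 1) := by
    refine monotoneOn_of_hasDerivWithinAt_nonneg (convex_Icc _ _) (hJc.pow 2)
      (f' := fun t => 2 * J t * K t) ?_ ?_
    · intro s hs
      rw [interior_Icc] at hs
      refine (((hJ s (Ioo_subset_Icc_self hs)).pow 2).congr_deriv ?_).hasDerivWithinAt
      simp
    · intro s hs
      rw [interior_Icc] at hs
      nlinarith [hJK s (Ioo_subset_Icc_self hs)]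
  have hev : ∀ᶠ s in 𝓝[>] (0:ℝ), 0 < J s := by
    have h1 := (hJ 0 (left_mem_Icc.2 zero_le_one)).hasDerivWithinAt (s := Ioi 0)
    have h2 := hasDerivWithinAt_iff_tendsto_slope.1 h1
    have h3 : ∀ᶠ s in 𝓝[Ioi 0 \ {0}] (0:ℝ), 0 < slope J 0 s := h2.eventually (lt_mem_nhds hK0)
    have e : Ioi (0:ℝ) \ {0} = Ioi 0 := by ext x; simp
    rw [e] at h3
    filter_upwards [h3, self_mem_nhdsWithin] with s hs hs0
    rw [slope_def_field, hJ0, sub_zero, sub_zero] at hs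
    exact (div_pos_iff_of_pos_right hs0).1 hs
  have hsmall : ∀ r ∈ Ioc (0:ℝ) 1, ∃ s ∈ Ioo 0 r, 0 < J s := by
    intro r hr
    obtain ⟨s, hs1, hs2⟩ := (hev.and (Ioo_mem_nhdsGT hr.1)).exists
    exact ⟨s, hs2, hs1⟩
  have hne : ∀ r ∈ Ioc (0:ℝ) 1, J r ≠ 0 := by
    intro r hr h0
    obtain ⟨s, hs, hsJ⟩ := hsmall r hr
    have := hmono2 ⟨hs.1.le, hs.2.le.trans hr.2⟩ ⟨hr.1.le, hr.2⟩ hs.2.le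
    simp only [h0] at this
    nlinarith
  by_contra hneg
  push Not at hneg
  obtain ⟨s, hs, hsJ⟩ := hsmall t ht
  have hc : ContinuousOn J (Icc s t) := hJc.mono (Icc_subset_Icc hs.1.le ht.2)
  obtain ⟨r, hr, hr0⟩ := intermediate_value_Icc' hs.2.le hc ⟨hneg, hsJ.le⟩
  exact hne r ⟨hs.1.trans_le hr.1, hr.2.trans ht.2⟩ hr0

lemma cinner (a b : ℂ) : inner ℝ a b = a.re * b.re + a.im * b.im := by
  rw [Complex.inner]; simp; ring

lemma decomp_orth {p a : ℂ} (hp : p ≠ 0) :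
    a = (inner ℝ a p / ‖p‖ ^ 2) • p + (inner ℝ a (Complex.I * p) / ‖p‖ ^ 2) • (Complex.I * p) := by
  have hn : ‖p‖ ^ 2 = p.re ^ 2 + p.im ^ 2 := by rw [← Complex.normSq_eq_norm_sq, Complex.normSq_apply]; ring
  have h0 : p.re ^ 2 + p.im ^ 2 ≠ 0 := by rw [← hn]; simpa using hp
  rw [hn]
  apply Complex.ext
  · simp only [cinner, Complex.add_re, Complex.add_im, Complex.smul_re, Complex.smul_im, smul_eq_mul, Complex.mul_re, Complex.mul_im, Complex.I_re, Complex.I_im]; field_simp; ring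
  · simp only [cinner, Complex.add_re, Complex.add_im, Complex.smul_re, Complex.smul_im, smul_eq_mul, Complex.mul_re, Complex.mul_im, Complex.I_re, Complex.I_im]; field_simp; ring

section
variable {u : ℂ → ℝ} {g : ℂ → ℂ} {R : ℝ}

lemma ConfData.fderiv_F (h : ConfData u g R) (x p a b : ℂ) :
    fderiv ℝ (hamF u g) (x, p) (a, b) =
      (Real.exp (-2 * u x) • b + (Real.exp (-2 * u x) * (-2 * inner ℝ (g x) a)) • p,
       (Real.exp (-2 * u x) * ‖p‖ ^ 2) • fderiv ℝ g x a +
        (Real.exp (-2 * u x) * (-2 * inner ℝ (g x) a) * ‖p‖ ^ 2 +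
          Real.exp (-2 * u x) * (2 * inner ℝ p b)) • g x) := by
  have hx : HasDerivAt (fun s : ℝ => x + s • a) a 0 := by
    simpa using ((hasDerivAt_id (0:ℝ)).smul_const a).const_add x
  have hp : HasDerivAt (fun s : ℝ => p + s • b) b 0 := by
    simpa using ((hasDerivAt_id (0:ℝ)).smul_const b).const_add p
  have hdF : DifferentiableAt ℝ (hamF u g) (x + (0:ℝ) • a, p + (0:ℝ) • b) :=
    h.contDiff_F.differentiable (by norm_num) _
  have h1 := hdF.hasFDerivAt.comp_hasDerivAt (0:ℝ) (hx.prodMk hp)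
  have hg : DifferentiableAt ℝ g (x + (0:ℝ) • a) := h.smooth.differentiable (by norm_num) _
  have h2 := ((h.deriv_Q hx).smul hp).prodMk
    (((h.deriv_Q hx).mul hp.norm_sq).smul (hg.hasFDerivAt.comp_hasDerivAt (0:ℝ) hx))
  have := h1.unique h2
  simpa only [zero_smul, add_zero, Pi.mul_apply, Function.comp_apply] using this

/-- Exponential map package. -/
structure ExpData (u : ℂ → ℝ) (g : ℂ → ℂ) (R : ℝ) (E P : ℂ → ℂ) (L : ℂ → ℂ →L[ℝ] ℂ) : Prop where
  strict : ∀ z, HasStrictFDerivAt E (L z) z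
  contP : Continuous P
  inj : ∀ z ζ, L z ζ = 0 → ζ = 0
  gauss : ∀ z ζ, inner ℝ (P z) (L z ζ) = inner ℝ z ζ
  near : ∀ z, ‖z‖ < R → E z = z ∧ P z = z
  normP : ∀ z, ‖P z‖ = Real.exp (u (E z)) * ‖z‖
  normE : ∀ z, ‖E z‖ ≤ ‖z‖
  jac : ∀ z, z ≠ 0 → ∃ η : ℝ, 0 < η ∧ L z (Complex.I * z) = η • (Complex.I * P z)
  curve : ∀ z, ∃ Y : ℝ → ℂ × ℂ, Y 0 = (0, z) ∧ Y 1 = (E z, P z) ∧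
    (∀ t ∈ Icc (0:ℝ) 1, HasDerivAt Y (hamF u g (Y t)) t) ∧
    (∀ t ∈ Icc (0:ℝ) 1, ‖(Y t).2‖ = Real.exp (u (Y t).1) * ‖z‖)

theorem ConfData.exists_exp (h : ConfData u g R) : ∃ E P L, ExpData u g R E P L := by
  obtain ⟨Γ, Λ, hΓ0, hΓ, hΛ0, hΛ, hst⟩ := h.exists_flow
  have one_mem : (1:ℝ) ∈ Icc (0:ℝ) 1 := right_mem_Icc.2 zero_le_one
  have hH : ∀ z, ∀ t ∈ Icc (0:ℝ) 1,
      Real.exp (-2 * u (Γ z t).1) * ‖(Γ z t).2‖ ^ 2 = ‖z‖ ^ 2 ∧ ‖(Γ z t).1‖ ≤ ‖z‖ * t := fun z =>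
    h.apriori (c := fun _ => 1) (by simp) (by simp) (hΓ0 z) (by simpa using hΓ z)
  have hnP : ∀ z, ∀ t ∈ Icc (0:ℝ) 1, ‖(Γ z t).2‖ = Real.exp (u (Γ z t).1) * ‖z‖ := by
    intro z t ht
    have h1 := (hH z t ht).1
    have : ‖(Γ z t).2‖ ^ 2 = (Real.exp (u (Γ z t).1) * ‖z‖) ^ 2 := by
      rw [mul_pow, ← h1, ← mul_assoc, ← Real.exp_nat_mul, ← Real.exp_add]
      simp
    exact (sq_eq_sq₀ (norm_nonneg _) (by positivity)).1 this
  -- curve derivatives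
  have hx : ∀ z, ∀ t ∈ Icc (0:ℝ) 1, HasDerivAt (fun t => (Γ z t).1)
      (Real.exp (-2 * u (Γ z t).1) • (Γ z t).2) t := fun z t ht => (hΓ z t ht).fst
  have hp : ∀ z, ∀ t ∈ Icc (0:ℝ) 1, HasDerivAt (fun t => (Γ z t).2)
      ((Real.exp (-2 * u (Γ z t).1) * ‖(Γ z t).2‖ ^ 2) • g (Γ z t).1) t := fun z t ht => (hΓ z t ht).snd
  have hdH : ∀ z ζ, ∀ t ∈ Icc (0:ℝ) 1,
      Real.exp (-2 * u (Γ z t).1) * (-2 * inner ℝ (g (Γ z t).1) (Λ z t ζ).1) * ‖(Γ z t).2‖ ^ 2 +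
          Real.exp (-2 * u (Γ z t).1) * (2 * inner ℝ (Γ z t).2 (Λ z t ζ).2) = 2 * inner ℝ z ζ := by
    intro z ζ t ht
    have hl : HasDerivAt (fun s : ℝ => z + s • ζ) ζ 0 := by
      simpa using ((hasDerivAt_id (0:ℝ)).smul_const ζ).const_add z
    have hst' : HasFDerivAt (fun w => Γ w t) (Λ z t) (z + (0:ℝ) • ζ) := by
      simpa using (hst z t ht).hasFDerivAt
    have hc := hst'.comp_hasDerivAt (0:ℝ) hl
    have hc1 : HasDerivAt (fun s : ℝ => (Γ (z + s • ζ) t).1) (Λ z t ζ).1 0 := hc.fst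
    have hc2 : HasDerivAt (fun s : ℝ => (Γ (z + s • ζ) t).2) (Λ z t ζ).2 0 := hc.snd
    have h1 := (h.deriv_Q hc1).mul hc2.norm_sq
    have h2 := hl.norm_sq
    have h3 := h2.congr_of_eventuallyEq (f₁ := fun s : ℝ =>
      Real.exp (-2 * u (Γ (z + s • ζ) t).1) * ‖(Γ (z + s • ζ) t).2‖ ^ 2)
      (Eventually.of_forall fun s => (hH _ t ht).1)
    have := h1.unique h3
    simpa using this
  have hΛd : ∀ z ζ, ∀ t ∈ Icc (0:ℝ) 1, HasDerivAt (fun t => Λ z t ζ)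
      (fderiv ℝ (hamF u g) (Γ z t) (Λ z t ζ)) t := by
    intro z ζ t ht
    refine ((hΛ z t ht).clm_apply (hasDerivAt_const t ζ)).congr_deriv ?_
    simp
  have ha : ∀ z ζ, ∀ t ∈ Icc (0:ℝ) 1, HasDerivAt (fun t => (Λ z t ζ).1)
      (Real.exp (-2 * u (Γ z t).1) • (Λ z t ζ).2 +
        (Real.exp (-2 * u (Γ z t).1) * (-2 * inner ℝ (g (Γ z t).1) (Λ z t ζ).1)) • (Γ z t).2) t := by
    intro z ζ t ht
    have := (hΛd z ζ t ht).fst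
    rw [show Γ z t = ((Γ z t).1, (Γ z t).2) from rfl, show Λ z t ζ = ((Λ z t ζ).1, (Λ z t ζ).2) from rfl,
      h.fderiv_F] at this
    exact this
  have hb : ∀ z ζ, ∀ t ∈ Icc (0:ℝ) 1, HasDerivAt (fun t => (Λ z t ζ).2)
      ((‖z‖ ^ 2) • fderiv ℝ g (Γ z t).1 (Λ z t ζ).1 + (2 * inner ℝ z ζ) • g (Γ z t).1) t := by
    intro z ζ t ht
    have := (hΛd z ζ t ht).snd
    rw [show Γ z t = ((Γ z t).1, (Γ z t).2) from rfl, show Λ z t ζ = ((Λ z t ζ).1, (Λ z t ζ).2) from rfl,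
      h.fderiv_F] at this
    simp only [hdH z ζ t ht, (hH z t ht).1] at this
    exact this
  have hgauss : ∀ z ζ, ∀ t ∈ Icc (0:ℝ) 1, inner ℝ (Γ z t).2 (Λ z t ζ).1 = t * inner ℝ z ζ := by
    intro z ζ
    have hd : ∀ t ∈ Icc (0:ℝ) 1, HasDerivAt (fun t => inner ℝ (Γ z t).2 (Λ z t ζ).1 - t * inner ℝ z ζ) 0 t := by
      intro t ht
      refine (((hp z t ht).inner ℝ (ha z ζ t ht)).sub
        ((hasDerivAt_id t).mul_const (inner ℝ z ζ : ℝ))).congr_deriv ?_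
      have e := hdH z ζ t ht
      simp only [inner_add_right, inner_smul_right, inner_smul_left, real_inner_self_eq_norm_sq, one_mul]
      simp only [RCLike.conj_to_real]
      linear_combination (1/2) * e
    intro t ht
    have := constant_of_has_deriv_right_zero (a := 0) (b := 1)
      (f := fun t => inner ℝ (Γ z t).2 (Λ z t ζ).1 - t * inner ℝ z ζ)
      (fun t ht => (hd t ht).continuousAt.continuousWithinAt)
      (fun t ht => (hd t ⟨ht.1, ht.2.le⟩).hasDerivWithinAt) t ht
    rw [hΛ0] at this
    simp at this
    simp
    linarith
  have hjac : ∀ z, z ≠ 0 → ∃ η : ℝ, 0 < η ∧ (Λ z 1 (Complex.I * z)).1 = η • (Complex.I * (Γ z 1).2) := by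
    intro z hz
    set ζ := Complex.I * z with hζ
    have hzz : inner ℝ z ζ = (0:ℝ) := by simp [hζ, Complex.inner]; ring
    have hpne : ∀ t ∈ Icc (0:ℝ) 1, (Γ z t).2 ≠ 0 := by
      intro t ht
      rw [← norm_pos_iff, hnP z t ht]
      exact mul_pos (Real.exp_pos _) (norm_pos_iff.2 hz)
    have hpos : 0 < (inner ℝ (Λ z 1 ζ).1 (Complex.I * (Γ z 1).2) : ℝ) := by
      refine jacobi_pos (J := fun t => inner ℝ (Λ z t ζ).1 (Complex.I * (Γ z t).2))
        (K := fun t => Real.exp (-2 * u (Γ z t).1) * inner ℝ (Λ z t ζ).2 (Complex.I * (Γ z t).2) +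
          ‖z‖ ^ 2 * inner ℝ (Λ z t ζ).1 (Complex.I * g (Γ z t).1))
        (q := fun t => ‖z‖ ^ 2 * Real.exp (-2 * u (Γ z t).1) *
          ((fderiv ℝ g (Γ z t).1 1).re + (fderiv ℝ g (Γ z t).1 Complex.I).im)) ?_ ?_ ?_ ?_ ?_ ⟨zero_lt_one, le_rfl⟩
      · intro t ht
        refine ((ha z ζ t ht).inner ℝ ((hp z t ht).const_mul Complex.I)).congr_deriv ?_
        rw [(hH z t ht).1]
        simp only [cinner, Complex.add_re, Complex.add_im, Complex.smul_re, Complex.smul_im, smul_eq_mul, Complex.mul_re, Complex.mul_im, Complex.I_re, Complex.I_im]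
        ring
      · intro t ht
        have hgd : HasDerivAt (fun t => g (Γ z t).1) (fderiv ℝ g (Γ z t).1
            (Real.exp (-2 * u (Γ z t).1) • (Γ z t).2)) t :=
          (h.smooth.differentiable (by norm_num) _).hasFDerivAt.comp_hasDerivAt t (hx z t ht)
        refine (((h.deriv_Q (hx z t ht)).mul ((hb z ζ t ht).inner ℝ ((hp z t ht).const_mul Complex.I))).add
          (((ha z ζ t ht).inner ℝ (hgd.const_mul Complex.I)).const_mul (‖z‖ ^ 2))).congr_deriv ?_
        have hlin : ∀ v : ℂ, fderiv ℝ g (Γ z t).1 v =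
            v.re • fderiv ℝ g (Γ z t).1 1 + v.im • fderiv ℝ g (Γ z t).1 Complex.I := by
          intro v
          rw [← map_smul, ← map_smul, ← map_add]
          congr 1
          apply Complex.ext <;> simp
        have e1 := hdH z ζ t ht
        have e2 := hgauss z ζ t ht
        have e3 := (hH z t ht).1
        rw [hzz] at e1 e2
        have hQ0 : Real.exp (-2 * u (Γ z t).1) ≠ 0 := (Real.exp_pos _).ne'
        have hp0 : ‖(Γ z t).2‖ ^ 2 ≠ 0 := by simpa using hpne t ht
        have hda := decomp_orth (a := (Λ z t ζ).1) (hpne t ht)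
        have hdb := decomp_orth (a := (Λ z t ζ).2) (hpne t ht)
        rw [real_inner_comm, e2, mul_zero, zero_div, zero_smul, zero_add] at hda
        have e4 : inner ℝ (Λ z t ζ).2 (Γ z t).2 / ‖(Γ z t).2‖ ^ 2 = inner ℝ (g (Γ z t).1) (Λ z t ζ).1 := by
          rw [div_eq_iff hp0, real_inner_comm]
          have : Real.exp (-2 * u (Γ z t).1) * (inner ℝ (Γ z t).2 (Λ z t ζ).2 -
            inner ℝ (g (Γ z t).1) (Λ z t ζ).1 * ‖(Γ z t).2‖ ^ 2) = 0 := by linarith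
          rcases mul_eq_zero.1 this with h | h
          · exact absurd h hQ0
          · linarith
        rw [e4] at hdb
        rw [hzz, hlin (Λ z t ζ).1, hlin (Real.exp (-2 * u (Γ z t).1) • (Γ z t).2)]
        have hn : ‖(Γ z t).2‖ ^ 2 = (Γ z t).2.re ^ 2 + (Γ z t).2.im ^ 2 := by
          rw [← Complex.normSq_eq_norm_sq, Complex.normSq_apply]; ring
        rw [← e3]
        generalize (inner ℝ (Λ z t ζ).1 (Complex.I * (Γ z t).2) / ‖(Γ z t).2‖ ^ 2 : ℝ) = η at hda
        generalize (inner ℝ (Λ z t ζ).2 (Complex.I * (Γ z t).2) / ‖(Γ z t).2‖ ^ 2 : ℝ) = β at hdb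
        rw [hn]
        generalize Real.exp (-2 * u (Γ z t).1) = Q
        generalize fderiv ℝ g (Γ z t).1 1 = A
        generalize fderiv ℝ g (Γ z t).1 Complex.I = B
        generalize g (Γ z t).1 = G at *
        generalize (Γ z t).2 = p at *
        generalize (Λ z t ζ).1 = a at *
        generalize (Λ z t ζ).2 = b at *
        subst hda
        subst hdb
        simp only [cinner, Complex.add_re, Complex.add_im, Complex.smul_re, Complex.smul_im, smul_eq_mul, Complex.mul_re, Complex.mul_im, Complex.I_re, Complex.I_im]
        ring
      · intro t
        have := h.trace (Γ z t).1
        positivity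
      · simp [hΛ0]
      · have : 0 < ‖z‖ ^ 2 := by positivity
        have hu0 : u 0 = 0 := h.zero 0 (by simpa using h.Rpos)
        simp only [hΛ0, hΓ0, hu0]
        simp only [ContinuousLinearMap.inr_apply, hζ, real_inner_self_eq_norm_sq]
        simpa using this
    have hn2 : 0 < ‖(Γ z 1).2‖ ^ 2 := by
      have := hpne 1 one_mem
      positivity
    refine ⟨inner ℝ (Λ z 1 ζ).1 (Complex.I * (Γ z 1).2) / ‖(Γ z 1).2‖ ^ 2, div_pos hpos hn2, ?_⟩
    have hda := decomp_orth (a := (Λ z 1 ζ).1) (hpne 1 one_mem)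
    have e2 := hgauss z ζ 1 one_mem
    rw [real_inner_comm, e2, hzz, mul_zero, zero_div, zero_smul, zero_add] at hda
    exact hda
  have hnear : ∀ z, ‖z‖ < R → ∀ t ∈ Icc (0:ℝ) 1, Γ z t = (t • z, z) := by
    intro z hz t ht
    refine h.sol_unique (hΓ0 z) (hΓ z) (Z := fun t => (t • z, z)) (by simp) ?_ ht
    intro t ht
    have hlt : ‖t • z‖ < R := by
      rw [norm_smul, Real.norm_of_nonneg ht.1]
      nlinarith [norm_nonneg z, ht.2]
    have : hamF u g (t • z, z) = ((1:ℝ) • z, 0) := by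
      unfold hamF
      simp only [h.zero _ hlt, h.g_zero hlt, smul_zero]
      simp
    rw [this]
    exact ((hasDerivAt_id t).smul_const z).prodMk (hasDerivAt_const t z)
  have hnear2 : ∀ z, ‖z‖ < R → (Λ z 1) = (ContinuousLinearMap.id ℝ ℂ).prod (ContinuousLinearMap.id ℝ ℂ) := by
    intro z hz
    refine (hst z 1 one_mem).hasFDerivAt.unique ?_
    refine ((hasFDerivAt_id z).prodMk (hasFDerivAt_id z)).congr_of_eventuallyEq ?_
    have : ∀ᶠ y in 𝓝 z, ‖y‖ < R := continuous_norm.continuousAt.eventually_lt_const hz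
    filter_upwards [this] with y hy
    rw [hnear y hy 1 one_mem]; simp
  refine ⟨fun z => (Γ z 1).1, fun z => (Γ z 1).2, fun z => ContinuousLinearMap.fst ℝ ℂ ℂ ∘L Λ z 1, ?_⟩
  constructor
  · intro z
    exact (hst z 1 one_mem).fst
  · exact continuous_snd.comp (continuous_iff_continuousAt.2 fun z => (hst z 1 one_mem).continuousAt)
  · intro z ζ h0
    by_cases hz : z = 0
    · subst hz
      rw [hnear2 0 (by simpa using h.Rpos)] at h0
      simpa using h0
    · have e := hgauss z ζ 1 one_mem
      simp only [ContinuousLinearMap.comp_apply, ContinuousLinearMap.coe_fst'] at h0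
      rw [h0, inner_zero_right, one_mul] at e
      have hd := decomp_orth (a := ζ) hz
      rw [real_inner_comm, ← e, zero_div, zero_smul, zero_add] at hd
      obtain ⟨η, hη, hj⟩ := hjac z hz
      rw [hd, map_smul, Prod.smul_fst, hj] at h0
      have hpne : (Γ z 1).2 ≠ 0 := by
        rw [← norm_pos_iff, hnP z 1 one_mem]
        exact mul_pos (Real.exp_pos _) (norm_pos_iff.2 hz)
      simp only [smul_eq_zero, hη.ne', mul_eq_zero, Complex.I_ne_zero, hpne, or_false, or_self] at h0
      rw [hd]
      have h0' : (inner ℝ ζ (Complex.I * z) / ‖z‖ ^ 2 : ℝ) = 0 := by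
        simpa [hz] using h0
      rw [h0', zero_smul]
  · intro z ζ
    have := hgauss z ζ 1 one_mem
    rw [one_mul] at this
    exact this
  · intro z hz
    rw [hnear z hz 1 one_mem]; simp
  · intro z
    exact hnP z 1 one_mem
  · intro z
    have := (hH z 1 one_mem).2
    rw [mul_one] at this
    exact this
  · exact hjac
  · intro z
    exact ⟨Γ z, hΓ0 z, rfl, hΓ z, hnP z⟩
end
end

noncomputable section
open scoped NNReal Topology

section
variable {u : ℂ → ℝ} {g : ℂ → ℂ} {R : ℝ} {E P : ℂ → ℂ} {L : ℂ → ℂ →L[ℝ] ℂ}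

lemma ExpData.exists_equiv (h : ExpData u g R E P L) (z : ℂ) :
    ∃ e : ℂ ≃L[ℝ] ℂ, (e : ℂ →L[ℝ] ℂ) = L z := by
  have hi : Function.Injective (L z : ℂ →ₗ[ℝ] ℂ) :=
    (injective_iff_map_eq_zero _).2 fun ζ hζ => h.inj z ζ hζ
  refine ⟨(LinearEquiv.ofInjectiveEndo (L z : ℂ →ₗ[ℝ] ℂ) hi).toContinuousLinearEquiv, ?_⟩
  ext ζ; simp

lemma ExpData.isLocalHomeomorph (h : ExpData u g R E P L) : IsLocalHomeomorph E := by
  intro z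
  obtain ⟨e, he⟩ := h.exists_equiv z
  have hs : HasStrictFDerivAt E (e : ℂ →L[ℝ] ℂ) z := he ▸ h.strict z
  exact ⟨hs.toOpenPartialHomeomorph E, hs.mem_toOpenPartialHomeomorph_source, rfl⟩

lemma ExpData.continuous (h : ExpData u g R E P L) : Continuous E :=
  h.isLocalHomeomorph.continuous

lemma ExpData.lift_deriv (h : ExpData u g R E P L) {v : ℝ → ℂ} {x : ℂ} {t : ℝ} (hv : ContinuousAt v t)
    (hl : ∀ᶠ s in 𝓝 t, E (v s) = s • x) : ∃ w, HasDerivAt v w t ∧ L (v t) w = x := by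
  obtain ⟨e, he⟩ := h.exists_equiv (v t)
  have hs : HasStrictFDerivAt E (e : ℂ →L[ℝ] ℂ) (v t) := he ▸ h.strict (v t)
  have h1 : ∀ᶠ s in 𝓝 t, hs.localInverse E e (v t) (s • x) = v s := by
    filter_upwards [hv.eventually hs.eventually_left_inverse, hl] with s h1 h2
    rw [← h2, h1]
  have h2 : HasFDerivAt (hs.localInverse E e (v t)) (e.symm : ℂ →L[ℝ] ℂ) (t • x) := by
    rw [← hl.self_of_nhds]
    exact hs.to_localInverse.hasFDerivAt
  have h3 := h2.comp_hasDerivAt t ((hasDerivAt_id t).smul_const x)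
  refine ⟨e.symm x, ?_, ?_⟩
  · have := h3.congr_of_eventuallyEq (f₁ := v) (h1.mono fun s hs => hs.symm)
    simpa using this
  · rw [← he]; simp

lemma ExpData.lift_bound (h : ExpData u g R E P L) {v : ℝ → ℂ} {x : ℂ} {T M : ℝ}
    (hv : Continuous v) (hT : T ≤ 1) (hv0 : v 0 = 0)
    (hM : ∀ t ∈ Icc (0:ℝ) 1, Real.exp (u (t • x)) ≤ M)
    (hl : ∀ t ∈ Icc 0 T, E (v t) = t • x) {t : ℝ} (ht : t ∈ Icc 0 T) : ‖v t‖ ≤ 1 + M * ‖x‖ := by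
  have hM0 : 0 ≤ M := (Real.exp_pos _).le.trans (hM 0 (by simp))
  have hanti : AntitoneOn (fun t => Real.sqrt (1 + ‖v t‖ ^ 2) - (M * ‖x‖) * t) (Icc 0 T) := by
    choose! w hw using fun t (ht : t ∈ Ioo 0 T) => h.lift_deriv (hv.continuousAt (x := t))
      ((Icc_mem_nhds ht.1 ht.2 : Icc 0 T ∈ 𝓝 t) |> fun hm => Filter.mem_of_superset hm hl)
    refine antitoneOn_of_hasDerivWithinAt_nonpos (convex_Icc _ _) (by fun_prop)
      (f' := fun t => (2 * inner ℝ (v t) (w t)) / (2 * Real.sqrt (1 + ‖v t‖ ^ 2)) - M * ‖x‖) ?_ ?_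
    · intro s hs
      rw [interior_Icc] at hs
      have h1 : HasDerivAt (fun t => 1 + ‖v t‖ ^ 2) (2 * inner ℝ (v s) (w s)) s :=
        ((hw s hs).1.norm_sq).const_add 1
      have h2 := (h1.sqrt (by positivity)).sub ((hasDerivAt_id s).const_mul (M * ‖x‖))
      exact (h2.congr_deriv (by simp)).hasDerivWithinAt
    · intro s hs
      rw [interior_Icc] at hs
      have e1 : (inner ℝ (v s) (w s) : ℝ) = inner ℝ (P (v s)) x := by
        rw [← h.gauss, (hw s hs).2]
      have e2 : (inner ℝ (P (v s)) x : ℝ) ≤ (M * ‖v s‖) * ‖x‖ := by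
        refine (real_inner_le_norm _ _).trans ?_
        gcongr
        rw [h.normP, hl s ⟨hs.1.le, hs.2.le⟩]
        gcongr
        exact hM s ⟨hs.1.le, hs.2.le.trans hT⟩
      have e3 : ‖v s‖ ≤ Real.sqrt (1 + ‖v s‖ ^ 2) := Real.le_sqrt_of_sq_le (by linarith)
      have e4 : 0 < Real.sqrt (1 + ‖v s‖ ^ 2) := Real.sqrt_pos.2 (by positivity)
      rw [sub_nonpos, mul_div_mul_left _ _ two_ne_zero, div_le_iff₀ e4, e1]
      refine e2.trans ?_
      have : 0 ≤ M * ‖x‖ := by positivity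
      nlinarith
  have h0 := hanti ⟨le_rfl, ht.1.trans ht.2⟩ ht ht.1
  simp only [hv0] at h0
  simp at h0
  have e3 : ‖v t‖ ≤ Real.sqrt (1 + ‖v t‖ ^ 2) := Real.le_sqrt_of_sq_le (by linarith)
  have : M * ‖x‖ * t ≤ M * ‖x‖ := mul_le_of_le_one_right (by positivity) (ht.2.trans hT)
  linarith

lemma ExpData.unif_section (h : ExpData u g R E P L) {K : Set ℂ} (hK : IsCompact K) :
    ∃ ε > 0, ∀ z ∈ K, ∃ s : ℂ → ℂ, ContinuousOn s (ball (E z) ε) ∧ s (E z) = z ∧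
      ∀ y ∈ ball (E z) ε, E (s y) = y := by
  refine hK.induction_on (p := fun K => ∃ ε > 0, ∀ z ∈ K, ∃ s : ℂ → ℂ, ContinuousOn s (ball (E z) ε) ∧ s (E z) = z ∧
      ∀ y ∈ ball (E z) ε, E (s y) = y) ⟨1, one_pos, by simp⟩ ?_ ?_ ?_
  · rintro A B hAB ⟨ε, hε, hs⟩
    exact ⟨ε, hε, fun z hz => hs z (hAB hz)⟩
  · rintro A B ⟨ε, hε, hs⟩ ⟨ε', hε', hs'⟩
    refine ⟨min ε ε', lt_min hε hε', ?_⟩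
    rintro z (hz | hz)
    · obtain ⟨s, h1, h2, h3⟩ := hs z hz
      exact ⟨s, h1.mono (ball_subset_ball (min_le_left _ _)), h2,
        fun y hy => h3 y (ball_subset_ball (min_le_left _ _) hy)⟩
    · obtain ⟨s, h1, h2, h3⟩ := hs' z hz
      exact ⟨s, h1.mono (ball_subset_ball (min_le_right _ _)), h2,
        fun y hy => h3 y (ball_subset_ball (min_le_right _ _) hy)⟩
  · intro z _
    obtain ⟨e, hz, he⟩ := h.isLocalHomeomorph z
    obtain ⟨ε, hε, hb⟩ := Metric.isOpen_iff.1 e.open_target (E z) (he ▸ e.map_source hz)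
    refine ⟨{y | y ∈ e.source ∧ dist (E y) (E z) < ε / 2}, mem_nhdsWithin_of_mem_nhds ?_, ε / 2, half_pos hε, ?_⟩
    · filter_upwards [e.open_source.mem_nhds hz,
        h.continuous.continuousAt.eventually (ball_mem_nhds _ (half_pos hε))] with y h1 h2
      exact ⟨h1, h2⟩
    · rintro y ⟨hy, hy2⟩
      have hsub : ball (E y) (ε / 2) ⊆ e.target := by
        refine Subset.trans (fun a ha => ?_) hb
        rw [mem_ball] at *
        linarith [dist_triangle a (E y) (E z)]
      refine ⟨e.symm, e.continuousOn_symm.mono hsub, ?_, ?_⟩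
      · rw [he, e.left_inv hy]
      · intro a ha
        rw [he, e.right_inv (hsub ha)]

lemma ExpData.exists_lift (h : ExpData u g R E P L) (hu : Continuous u) (hE0 : E 0 = 0) (x : ℂ) :
    ∃ v : ℝ → ℂ, Continuous v ∧ v 0 = 0 ∧ ∀ t ∈ Icc (0:ℝ) 1, E (v t) = t • x := by
  have hc : Continuous (fun t : ℝ => Real.exp (u (t • x))) := by fun_prop
  obtain ⟨M, hM⟩ := isCompact_Icc.bddAbove_image (K := Icc (0:ℝ) 1) hc.continuousOn
  have hM' : ∀ t ∈ Icc (0:ℝ) 1, Real.exp (u (t • x)) ≤ M := fun t ht => hM (mem_image_of_mem _ ht)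
  obtain ⟨ε, hε, hsec⟩ := h.unif_section (isCompact_closedBall (0:ℂ) (1 + M * ‖x‖))
  obtain ⟨δ, hδ, hδx⟩ : ∃ δ > 0, δ * ‖x‖ < ε := by
    refine ⟨ε / (‖x‖ + 1), by positivity, ?_⟩
    rw [div_mul_eq_mul_div, div_lt_iff₀ (by positivity)]
    nlinarith [norm_nonneg x]
  have key : ∀ n : ℕ, ∃ v : ℝ → ℂ, Continuous v ∧ v 0 = 0 ∧ ∀ t ∈ Icc (0:ℝ) (min 1 (n * δ)), E (v t) = t • x := by
    intro n
    induction n with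
    | zero =>
      refine ⟨fun _ => 0, continuous_const, rfl, ?_⟩
      intro t ht
      simp at ht
      simp [ht, hE0]
    | succ n ih =>
      obtain ⟨v, hv, hv0, hl⟩ := ih
      set T := min 1 (n * δ) with hT
      have hT0 : 0 ≤ T := by positivity
      have hT1 : T ≤ 1 := min_le_left _ _
      set T' := min 1 ((n + 1 : ℕ) * δ) with hT'
      have hTT : T ≤ T' := by
        refine min_le_min_left _ ?_
        gcongr
        simp
      have hTT2 : T' ≤ T + δ := by
        rw [hT, hT', ← min_add_add_right]
        refine min_le_min (by linarith) ?_
        push_cast; linarith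
      have hb := h.lift_bound hv hT1 hv0 hM' hl (right_mem_Icc.2 hT0)
      obtain ⟨s, s1, s2, s3⟩ := hsec (v T) (by simpa using hb)
      have hET := hl T (right_mem_Icc.2 hT0)
      rw [hET] at s1 s2 s3
      have hcl : ∀ t, (max T (min t T')) • x ∈ ball (T • x) ε := by
        intro t
        rw [mem_ball, dist_eq_norm, ← sub_smul, norm_smul, Real.norm_eq_abs, abs_of_nonneg (by simp)]
        refine lt_of_le_of_lt ?_ hδx
        gcongr
        rw [sub_le_iff_le_add]
        refine max_le (by linarith) ((min_le_right _ _).trans (by linarith))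
      have hc2 : Continuous (fun t => s ((max T (min t T')) • x)) :=
        s1.comp_continuous (by fun_prop) hcl
      refine ⟨fun t => if t ≤ T then v t else s ((max T (min t T')) • x), ?_, ?_, ?_⟩
      · refine Continuous.if_le hv hc2 continuous_id continuous_const ?_
        intro t ht
        rw [show t = T from ht, min_eq_left hTT, max_self, s2]
      · simp [hT0, hv0]
      · intro t ht
        by_cases htT : t ≤ T
        · simp only [htT, if_true]
          exact hl t ⟨ht.1, htT⟩
        · simp only [htT, if_false]
          rw [s3 _ (hcl t), min_eq_left ht.2, max_eq_right (le_of_not_ge htT)]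
  obtain ⟨n, hn⟩ := exists_nat_gt (1 / δ)
  obtain ⟨v, h1, h2, h3⟩ := key n
  refine ⟨v, h1, h2, ?_⟩
  rwa [min_eq_left ?_] at h3
  rw [div_lt_iff₀ hδ] at hn
  exact hn.le

theorem ExpData.exists_inv (h : ExpData u g R E P L) (hu : Continuous u) (hR : 0 < R) :
    ∃ S : ℂ → ℂ, Continuous S ∧ (∀ x, E (S x) = x) ∧ (∀ z, S (E z) = z) := by
  have hE0 : E 0 = 0 := (h.near 0 (by simpa using hR)).1
  choose v hv hv0 hl using h.exists_lift hu hE0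
  have hcont : Continuous (fun q : unitInterval × ℂ => v q.2 q.1) := by
    refine h.isLocalHomeomorph.continuous_lift (T2Space.isSeparatedMap E)
      ⟨fun q : unitInterval × ℂ => (q.1 : ℝ) • q.2, by fun_prop⟩ ?_ ?_ ?_
    · ext q
      exact hl q.2 q.1 q.1.2
    · simpa [hv0] using continuous_const
    · intro a
      exact (hv a).comp continuous_subtype_val
  have hS : Continuous (fun x => v x 1) := hcont.comp (Continuous.prodMk_right (1 : unitInterval))
  have hES : ∀ x, E (v x 1) = x := fun x => by simpa using hl x 1 (by simp)
  refine ⟨fun x => v x 1, hS, hES, ?_⟩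
  have hcl : IsClosed {z | v (E z) 1 = z} := isClosed_eq (hS.comp h.continuous) continuous_id
  have hop : IsOpen {z | v (E z) 1 = z} := by
    rw [isOpen_iff_mem_nhds]
    intro z hz
    obtain ⟨U, hU, hzU, hinj⟩ := h.isLocalHomeomorph.isLocallyInjective z
    have h1 : ∀ᶠ y in 𝓝 z, v (E y) 1 ∈ U := by
      have : ContinuousAt (fun y => v (E y) 1) z := (hS.comp h.continuous).continuousAt
      refine this.eventually (hU.mem_nhds ?_)
      show v (E z) 1 ∈ U
      rw [show v (E z) 1 = z from hz]; exact hzU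
    filter_upwards [h1, hU.mem_nhds hzU] with y hy1 hy2
    exact hinj hy1 hy2 (hES _)
  have hne : (v 0 1) ∈ {z | v (E z) 1 = z} := by
    show v (E (v 0 1)) 1 = v 0 1
    rw [hES]
  have := IsClopen.eq_univ ⟨hcl, hop⟩ ⟨_, hne⟩
  intro z
  have hz : z ∈ {z | v (E z) 1 = z} := this ▸ mem_univ z
  exact hz

lemma ExpData.dist_grad (h : ExpData u g R E P L) {S : ℂ → ℂ} (hS : Continuous S) (hES : ∀ x, E (S x) = x)
    (x : ℂ) : HasFDerivAt (fun x => ‖S x‖ ^ 2 / 2) (innerSL ℝ (P (S x))) x := by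
  obtain ⟨e, he⟩ := h.exists_equiv (S x)
  have hs : HasFDerivAt E (e : ℂ →L[ℝ] ℂ) (S x) := he ▸ (h.strict (S x)).hasFDerivAt
  have h1 := HasFDerivAt.of_local_left_inverse hS.continuousAt hs (Eventually.of_forall hES)
  have h2 := (h1.norm_sq).mul_const (1/2 : ℝ)
  have h3 : (fun x => ‖S x‖ ^ 2 / 2) = fun x => ‖S x‖ ^ 2 * (1/2) := by ext; ring
  rw [h3]
  refine h2.congr_fderiv ?_
  ext ζ
  have e1 := h.gauss (S x) (e.symm ζ)
  rw [← he] at e1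
  simp only [cinner] at e1
  simp at e1 ⊢
  linarith
end
end

noncomputable section
open scoped NNReal Topology

lemma exists_dominating {B : ℂ → ℝ} (hB : Continuous B) (hB0 : ∀ x, 0 ≤ B x) :
    ∃ κ : ℝ → ℝ, Continuous κ ∧ Monotone κ ∧ (∀ s, 0 ≤ κ s) ∧ ∀ x s, ‖x‖ ≤ s → B x ≤ κ s := by
  set b : ℝ → ℝ := fun s => sSup (B '' closedBall 0 (max s 0)) with hb
  have hbdd : ∀ s, BddAbove (B '' closedBall (0:ℂ) s) := fun s =>
    (isCompact_closedBall _ _).bddAbove_image hB.continuousOn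
  have hmono : Monotone b := by
    intro s t hst
    refine csSup_le_csSup (hbdd _) ?_ ?_
    · exact ⟨B 0, 0, by simp, rfl⟩
    · exact image_mono (closedBall_subset_closedBall (max_le_max_right _ hst))
  have hb0 : ∀ s, 0 ≤ b s := by
    intro s
    exact (hB0 0).trans (le_csSup (hbdd _) ⟨0, by simp, rfl⟩)
  have hIntg : ∀ s, IntervalIntegrable (fun t => b (s + t)) MeasureTheory.volume 0 1 := by
    intro s
    apply Monotone.intervalIntegrable
    intro x y hxy
    exact hmono (by linarith)
  refine ⟨fun s => ∫ t in (0:ℝ)..1, b (s + t), ?_, ?_, ?_, ?_⟩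
  · have hF := intervalIntegral.continuous_primitive (f := b) (μ := MeasureTheory.volume)
      (fun a c => hmono.intervalIntegrable) 0
    have : (fun s => ∫ t in (0:ℝ)..1, b (s + t)) = fun s => (∫ t in (0:ℝ)..(s+1), b t) - ∫ t in (0:ℝ)..s, b t := by
      ext s
      rw [intervalIntegral.integral_comp_add_left (fun t => b t), add_zero,
        intervalIntegral.integral_interval_sub_left hmono.intervalIntegrable hmono.intervalIntegrable]
    rw [this]
    exact (hF.comp (continuous_id.add continuous_const)).sub hF
  · intro s t hst
    refine intervalIntegral.integral_mono_on zero_le_one (hIntg s) (hIntg t) ?_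
    intro x _
    exact hmono (by linarith)
  · intro s
    exact intervalIntegral.integral_nonneg zero_le_one fun t _ => hb0 _
  · intro x s hx
    have h1 : B x ≤ b s := le_csSup (hbdd _) ⟨x, mem_closedBall_zero_iff.2 (hx.trans (le_max_left _ _)), rfl⟩
    have h2 : ∫ t in (0:ℝ)..1, b s ≤ ∫ t in (0:ℝ)..1, b (s + t) := by
      refine intervalIntegral.integral_mono_on zero_le_one (by simp) (hIntg s) ?_
      intro t ht
      exact hmono (by linarith [ht.1])
    rw [intervalIntegral.integral_const, sub_zero, one_smul] at h2
    exact h1.trans h2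

lemma hasDerivAt_psi_sq (s0 s : ℝ) :
    HasDerivAt (fun s : ℝ => (max (s - s0) 0) ^ 2) (2 * max (s - s0) 0) s := by
  have hbase : HasDerivAt (fun s : ℝ => (s - s0) ^ 2) (2 * (s - s0)) s := by
    exact (((hasDerivAt_id s).sub_const s0).pow 2).congr_deriv (by simp)
  rcases lt_trichotomy s s0 with h | h | h
  · rw [max_eq_right (by linarith), mul_zero]
    refine (hasDerivAt_const s (0:ℝ)).congr_of_eventuallyEq ?_
    filter_upwards [Iio_mem_nhds h] with y hy
    rw [max_eq_right (by linarith [mem_Iio.1 hy])]; simp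
  · subst h
    simp only [sub_self, max_self, mul_zero] at hbase ⊢
    rw [hasDerivAt_iff_isLittleO] at hbase ⊢
    refine Asymptotics.IsBigO.trans_isLittleO ?_ hbase
    refine Asymptotics.isBigO_of_le _ fun y => ?_
    simp only [sub_self, smul_zero, sub_zero, max_self]
    simp only [ne_eq, OfNat.ofNat_ne_zero, not_false_eq_true, zero_pow, sub_zero, norm_pow]
    gcongr
    rw [Real.norm_eq_abs, Real.norm_eq_abs]
    rcases le_total (y - s) 0 with h | h
    · rw [max_eq_right h]; simp
    · rw [max_eq_left h]
  · rw [max_eq_left (by linarith)]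
    refine hbase.congr_of_eventuallyEq ?_
    filter_upwards [Ioi_mem_nhds h] with y hy
    rw [max_eq_left (by linarith [mem_Ioi.1 hy])]

/-- One dimensional profile functions. -/
lemma exists_profile {κ : ℝ → ℝ} (hκ : Continuous κ) (hm : Monotone κ) (h0 : ∀ s, 0 ≤ κ s) (s0 : ℝ) :
    ∃ G G1 G2 : ℝ → ℝ, (∀ s, HasDerivAt G (G1 s) s) ∧ (∀ s, HasDerivAt G1 (G2 s) s) ∧ Continuous G2 ∧
      Monotone G1 ∧ Monotone G2 ∧ (∀ s ≤ s0, G s = 0 ∧ G1 s = 0 ∧ G2 s = 0) ∧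
      (∀ s, 0 ≤ G1 s) ∧ (∀ s, κ s * G1 s ≤ G2 s) ∧ (∀ s, s0 + 1 ≤ s → κ s ≤ G2 s) := by
  set A : ℝ → ℝ := fun s => ∫ t in s0..s, κ t with hA
  have hAd : ∀ s, HasDerivAt A (κ s) s := fun s =>
    intervalIntegral.integral_hasDerivAt_right (hκ.intervalIntegrable _ _)
      (hκ.stronglyMeasurableAtFilter _ _) hκ.continuousAt
  have hAc : Continuous A := continuous_iff_continuousAt.2 fun s => (hAd s).continuousAt
  have hAm : Monotone A := monotone_of_hasDerivAt_nonneg hAd h0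
  set ψ : ℝ → ℝ := fun s => max (s - s0) 0 with hψ
  have hψc : Continuous ψ := by fun_prop
  have hψ0 : ∀ s, 0 ≤ ψ s := fun s => le_max_right _ _
  have hψm : Monotone ψ := fun s t hst => max_le_max_right _ (by linarith)
  set G1 : ℝ → ℝ := fun s => ψ s ^ 2 * Real.exp (A s) with hG1
  set G2 : ℝ → ℝ := fun s => (2 * ψ s + κ s * ψ s ^ 2) * Real.exp (A s) with hG2
  have hd : ∀ s, HasDerivAt G1 (G2 s) s := by
    intro s
    refine ((hasDerivAt_psi_sq s0 s).mul ((hAd s).exp)).congr_deriv ?_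
    simp only [hG2, hψ]; ring
  have hG2c : Continuous G2 := by fun_prop
  have hG1c : Continuous G1 := by fun_prop
  have hG2nn : ∀ s, 0 ≤ G2 s := fun s => by
    have := hψ0 s; have := h0 s; positivity
  have hG1m : Monotone G1 := monotone_of_hasDerivAt_nonneg hd hG2nn
  have hG2m : Monotone G2 := by
    intro s t hst
    have h1 := hψm hst; have h2 := hm hst; have h3 := hAm hst
    have := hψ0 s; have := h0 s; have := hψ0 t; have := h0 t
    simp only [hG2]
    gcongr
  have hz : ∀ s ≤ s0, G1 s = 0 ∧ G2 s = 0 := by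
    intro s hs
    have : ψ s = 0 := max_eq_right (by linarith)
    simp [hG1, hG2, this]
  refine ⟨fun s => ∫ t in s0..s, G1 t, G1, G2, ?_, hd, hG2c, hG1m, hG2m, ?_, ?_, ?_, ?_⟩
  · exact fun s => intervalIntegral.integral_hasDerivAt_right (hG1c.intervalIntegrable _ _)
      (hG1c.stronglyMeasurableAtFilter _ _) hG1c.continuousAt
  · intro s hs
    refine ⟨?_, hz s hs⟩
    have : ∫ t in s0..s, G1 t = ∫ t in s0..s, (0:ℝ) := by
      refine intervalIntegral.integral_congr fun t ht => ?_
      rw [uIcc_of_ge hs] at ht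
      exact (hz t ht.2).1
    simpa using this
  · intro s; positivity
  · intro s
    have := hψ0 s
    simp only [hG1, hG2]
    rw [← mul_assoc]
    gcongr
    linarith
  · intro s hs
    have h1 : 1 ≤ ψ s := le_max_of_le_left (by linarith)
    have h2 : 1 ≤ Real.exp (A s) := by
      rw [Real.one_le_exp_iff]
      have := hAm (show s0 ≤ s by linarith)
      simpa [hA] using this
    have h3 : κ s ≤ 2 * ψ s + κ s * ψ s ^ 2 := by
      have := h0 s
      nlinarith [mul_nonneg (h0 s) (show 0 ≤ ψ s ^ 2 - 1 by nlinarith)]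
    have := h0 s
    calc κ s = κ s * 1 := (mul_one _).symm
      _ ≤ (2 * ψ s + κ s * ψ s ^ 2) * Real.exp (A s) := by gcongr

/-- `√(1+|x|²)` and its gradient. -/
def rr (x : ℂ) : ℝ := Real.sqrt (1 + ‖x‖ ^ 2)
def rg (x : ℂ) : ℂ := (rr x)⁻¹ • x

lemma rr_sq (x : ℂ) : rr x ^ 2 = 1 + ‖x‖ ^ 2 := Real.sq_sqrt (by positivity)
lemma rr_ge_one (x : ℂ) : 1 ≤ rr x := Real.one_le_sqrt.2 (by nlinarith [norm_nonneg x])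
lemma rr_pos (x : ℂ) : 0 < rr x := zero_lt_one.trans_le (rr_ge_one x)
lemma norm_le_rr (x : ℂ) : ‖x‖ ≤ rr x := Real.le_sqrt_of_sq_le (by linarith)
lemma rr_le (x : ℂ) : rr x ≤ 1 + ‖x‖ := Real.sqrt_le_iff.2 ⟨by positivity, by nlinarith [norm_nonneg x]⟩
lemma norm_rg_le (x : ℂ) : ‖rg x‖ ≤ 1 := by
  rw [rg, norm_smul, norm_inv, Real.norm_of_nonneg (rr_pos x).le, inv_mul_le_one₀ (rr_pos x)]
  exact norm_le_rr x
lemma contDiff_rr : ContDiff ℝ 1 rr := by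
  unfold rr
  exact ContDiff.sqrt (contDiff_const.add (contDiff_norm_sq ℝ)) (fun x => by positivity)
lemma hasFDerivAt_rr (x : ℂ) : HasFDerivAt rr (innerSL ℝ (rg x)) x := by
  have h1 : HasFDerivAt (fun x : ℂ => 1 + ‖x‖ ^ 2) (2 • innerSL ℝ x) x :=
    (hasStrictFDerivAt_norm_sq x).hasFDerivAt.const_add 1
  refine (h1.sqrt (by positivity)).congr_fderiv ?_
  ext ζ
  have := rr_pos x
  rw [rg, show Real.sqrt (1 + ‖x‖ ^ 2) = rr x from rfl]
  simp only [map_smul, ContinuousLinearMap.smul_apply, nsmul_eq_mul, smul_eq_mul, innerSL_apply_apply]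
  simp
  field_simp
lemma contDiff_rg : ContDiff ℝ 1 rg := by
  unfold rg
  exact (contDiff_rr.inv fun x => (rr_pos x).ne').smul contDiff_id

/-- real trace -/
def ctr (M : ℂ →L[ℝ] ℂ) : ℝ := (M 1).re + (M Complex.I).im

lemma abs_ctr_le (M : ℂ →L[ℝ] ℂ) : |ctr M| ≤ 2 * ‖M‖ := by
  have h1 : |(M 1).re| ≤ ‖M‖ := (Complex.abs_re_le_norm _).trans (by simpa using M.le_opNorm 1)
  have h2 : |(M Complex.I).im| ≤ ‖M‖ := (Complex.abs_im_le_norm _).trans (by simpa using M.le_opNorm Complex.I)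
  calc _ ≤ |(M 1).re| + |(M Complex.I).im| := abs_add_le _ _
    _ ≤ _ := by linarith

lemma ctr_smul {h : ℂ → ℝ} {w : ℂ} {V : ℂ → ℂ} {x : ℂ} (hh : HasFDerivAt h (innerSL ℝ w) x)
    (hV : DifferentiableAt ℝ V x) :
    ctr (fderiv ℝ (fun y => h y • V y) x) = inner ℝ w (V x) + h x * ctr (fderiv ℝ V x) := by
  have := (hh.smul hV.hasFDerivAt).fderiv
  rw [show (fun y => h y • V y) = h • V from rfl, this, ctr, ctr, cinner]
  simp
  ring

lemma ctr_rg (x : ℂ) : 0 ≤ ctr (fderiv ℝ rg x) ∧ ctr (fderiv ℝ rg x) ≤ 2 := by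
  have h1 : HasFDerivAt (fun y => (rr y)⁻¹) (innerSL ℝ (-((rr x ^ 2)⁻¹) • rg x)) x := by
    refine ((hasDerivAt_inv (rr_pos x).ne').comp_hasFDerivAt x (hasFDerivAt_rr x)).congr_fderiv ?_
    rw [map_smul]
  have h2 := ctr_smul (V := fun y => y) h1 differentiableAt_id
  have h3 : ctr (fderiv ℝ (fun y : ℂ => y) x) = 2 := by simp [ctr]; norm_num
  rw [h3] at h2
  have h4 : ctr (fderiv ℝ rg x) = inner ℝ (-((rr x ^ 2)⁻¹) • rg x) x + (rr x)⁻¹ * 2 := h2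
  have h5 : (inner ℝ (-((rr x ^ 2)⁻¹) • rg x) x : ℝ) = - (rr x ^ 2)⁻¹ * ((rr x)⁻¹ * ‖x‖ ^ 2) := by
    rw [rg, inner_smul_left, inner_smul_left, real_inner_self_eq_norm_sq]; simp
  have h6 := rr_sq x
  have h7 := rr_ge_one x
  have h8 : ctr (fderiv ℝ rg x) = (rr x ^ 2 + 1) / rr x ^ 3 := by
    rw [h4, h5, show ‖x‖ ^ 2 = rr x ^ 2 - 1 by linarith]
    field_simp
    ring
  rw [h8]
  have := rr_pos x
  refine ⟨by positivity, ?_⟩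
  rw [div_le_iff₀ (by positivity)]
  nlinarith [mul_nonneg (show 0 ≤ rr x ^ 2 by positivity) (show 0 ≤ rr x - 1 by linarith)]

structure Prof (f : ℂ → ℂ) (φ : ℂ → ℝ) (g : ℂ → ℂ) (G1 G2 : ℝ → ℝ) (R1 : ℝ) : Prop where
  form : ∀ x, g x = G1 (rr x + φ x) • (rg x + f x) + G1 (rr x - φ x) • (rg x - f x) - (2 * G1 (rr x)) • rg x
  deriv : ∀ s, HasDerivAt G1 (G2 s) s
  mono1 : Monotone G1
  mono2 : Monotone G2
  nonneg2 : ∀ s, 0 ≤ G2 s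
  big : ∀ x, R1 ≤ ‖x‖ → 10 ≤ ‖f x‖ ∧ 100 * (1 + ‖fderiv ℝ f x‖) ^ 3 ≤ G2 (rr x)

/-- positivity of the trace, one sided version -/
lemma trace_aux {a b c Ga Gb Gc tr tf K n1 n2 n0 : ℝ} (hc : 0 ≤ c) (hcb : c ≤ b) (hba : b ≤ a) (hGc : 0 ≤ Gc)
    (hGb : 0 ≤ Gb) (hGba : Gb ≤ Ga) (hK : 0 ≤ K) (htr : 0 ≤ tr) (htr2 : tr ≤ 2) (htf : |tf| ≤ 2 * K)
    (hGa : 100 * (1 + K) ^ 3 * a ≤ Ga) (hn1 : 81 ≤ n1) (hn2 : 0 ≤ n2) (hn0 : n0 ≤ 1) :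
    0 ≤ Ga * n1 + a * (tr + tf) + (Gc * n2 + c * (tr - tf)) - (2 * (Gb * n0) + 2 * b * tr) := by
  have h1 : 0 ≤ Ga := hGb.trans hGba
  have h2 : 81 * Ga ≤ Ga * n1 := by nlinarith
  have h3 : Gb * n0 ≤ Ga := by nlinarith
  have h4 : 0 ≤ Gc * n2 := by positivity
  have ha : 0 ≤ a := hc.trans (hcb.trans hba)
  obtain ⟨t1, t2⟩ := abs_le.1 htf
  have h5 : -(a * (2 * K)) ≤ a * tf := by nlinarith
  have h6 : -(a * (2 * K)) ≤ c * (- tf) := by nlinarith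
  have h7 : b * tr ≤ a * 2 := by nlinarith
  have h8 : 0 ≤ a * tr := by positivity
  have h9 : 0 ≤ c * tr := by positivity
  have h10 : 100 * (1 + K) * a ≤ 100 * (1 + K) ^ 3 * a := by
    gcongr
    nlinarith [mul_nonneg hK hK, mul_nonneg (mul_nonneg hK hK) hK]
  nlinarith [mul_nonneg hK ha]

theorem exists_conf {f : ℂ → ℂ} {φ : ℂ → ℝ} (hφ : ∀ x, HasFDerivAt φ (innerSL ℝ (f x)) x)
    (hf : ContDiff ℝ 1 f) {R : ℝ} (hR : 0 < R) (hfR : ∀ x, R ≤ ‖x‖ → 10 ≤ ‖f x‖) :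
    ∃ u g G1 G2 R1, ConfData u g R ∧ Prof f φ g G1 G2 R1 ∧ R ≤ R1 := by
  have hφc : Continuous φ := continuous_iff_continuousAt.2 fun x => (hφ x).continuousAt
  have hrc : Continuous rr := contDiff_rr.continuous
  have hdfc : Continuous (fderiv ℝ f) := hf.continuous_fderiv (by norm_num)
  obtain ⟨s1, hs1⟩ := (isCompact_closedBall (0:ℂ) R).bddAbove_image
    (f := fun x => rr x + |φ x|) (by fun_prop)
  set s0 := max s1 R with hs0
  have hs0' : ∀ x, ‖x‖ ≤ R → rr x + |φ x| ≤ s0 := fun x hx =>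
    (hs1 ⟨x, by simpa using hx, rfl⟩).trans (le_max_left _ _)
  obtain ⟨κ, hκc, hκm, hκ0, hκB⟩ := exists_dominating (B := fun x => 100 * (1 + ‖fderiv ℝ f x‖) ^ 3)
    (by fun_prop) (fun x => by positivity)
  obtain ⟨G, G1, G2, hG, hG1, hG2c, hG1m, hG2m, hz, hG1nn, hκG, hκG2⟩ := exists_profile hκc hκm hκ0 s0
  have hG1c : Continuous G1 := continuous_iff_continuousAt.2 fun x => (hG1 x).continuousAt
  have hG1C : ContDiff ℝ 1 G1 := by
    rw [contDiff_one_iff_deriv]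
    refine ⟨fun s => (hG1 s).differentiableAt, ?_⟩
    rw [show deriv G1 = G2 from funext fun s => (hG1 s).deriv]
    exact hG2c
  have hφC : ContDiff ℝ 1 φ := by
    rw [contDiff_one_iff_fderiv]
    refine ⟨fun s => (hφ s).differentiableAt, ?_⟩
    rw [show fderiv ℝ φ = fun x => innerSL ℝ (f x) from funext fun s => (hφ s).fderiv]
    exact (innerSL ℝ).continuous.comp hf.continuous
  have hG2nn : ∀ s, 0 ≤ G2 s := fun s => (mul_nonneg (hκ0 s) (hG1nn s)).trans (hκG s)
  set g : ℂ → ℂ := fun x => G1 (rr x + φ x) • (rg x + f x) + G1 (rr x - φ x) • (rg x - f x) -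
    (2 * G1 (rr x)) • rg x with hg
  have hgC : ContDiff ℝ 1 g := by
    have h1 := contDiff_rr
    have h2 := contDiff_rg
    exact (((hG1C.comp (h1.add hφC)).smul (h2.add hf)).add ((hG1C.comp (h1.sub hφC)).smul (h2.sub hf))).sub
      ((contDiff_const.mul (hG1C.comp h1)).smul h2)
  have hrp : ∀ x, HasFDerivAt (fun y => rr y + φ y) (innerSL ℝ (rg x + f x)) x := fun x =>
    ((hasFDerivAt_rr x).add (hφ x)).congr_fderiv (by simp)
  have hrm : ∀ x, HasFDerivAt (fun y => rr y - φ y) (innerSL ℝ (rg x - f x)) x := fun x =>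
    ((hasFDerivAt_rr x).sub (hφ x)).congr_fderiv (by simp)
  have hcomp : ∀ (F F' : ℝ → ℝ) (hF : ∀ s, HasDerivAt F (F' s) s) (ρ : ℂ → ℝ) (w x : ℂ)
      (_ : HasFDerivAt ρ (innerSL ℝ w) x), HasFDerivAt (fun y => F (ρ y)) (innerSL ℝ (F' (ρ x) • w)) x := by
    intro F F' hF ρ w x hρ
    exact ((hF (ρ x)).comp_hasFDerivAt x hρ).congr_fderiv (by rw [map_smul])
  refine ⟨fun x => G (rr x + φ x) + G (rr x - φ x) - 2 * G (rr x), g, G1, G2, s0 + 1, ⟨?_, hgC, ?_, hR, ?_, ?_⟩,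
    ⟨fun x => rfl, hG1, hG1m, hG2m, hG2nn, ?_⟩, by linarith [le_max_right s1 R]⟩
  · intro x
    refine (((hcomp G G1 hG _ _ x (hrp x)).add (hcomp G G1 hG _ _ x (hrm x))).sub
      ((hcomp G G1 hG _ _ x (hasFDerivAt_rr x)).const_mul 2)).congr_fderiv ?_
    simp only [hg, map_add, map_sub, map_smul, smul_smul]
  · intro x
    have hconv : ConvexOn ℝ univ G := by
      refine Monotone.convexOn_univ_of_deriv (fun s => (hG s).differentiableAt) ?_
      rw [show deriv G = G1 from funext fun s => (hG s).deriv]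
      exact hG1m
    have := hconv.2 (mem_univ (rr x + φ x)) (mem_univ (rr x - φ x)) (show (0:ℝ) ≤ 1/2 by norm_num)
      (show (0:ℝ) ≤ 1/2 by norm_num) (by norm_num)
    simp only [smul_eq_mul] at this
    rw [show 1 / 2 * (rr x + φ x) + 1 / 2 * (rr x - φ x) = rr x by ring] at this
    linarith
  · intro x hx
    have h1 := hs0' x hx.le
    have h2 := neg_abs_le (φ x)
    have h3 := le_abs_self (φ x)
    have h4 := abs_nonneg (φ x)
    simp [(hz (rr x + φ x) (by linarith)).1, (hz (rr x - φ x) (by linarith)).1, (hz (rr x) (by linarith)).1]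
  · intro x
    have hfd : DifferentiableAt ℝ f x := hf.differentiable (by norm_num) x
    have hrd : DifferentiableAt ℝ rg x := contDiff_rg.differentiable (by norm_num) x
    have d1 := hcomp G1 G2 hG1 _ _ x (hrp x)
    have d2 := hcomp G1 G2 hG1 _ _ x (hrm x)
    have d3 := (hcomp G1 G2 hG1 _ _ x (hasFDerivAt_rr x)).const_mul 2
    have d3' : HasFDerivAt (fun y => 2 * G1 (rr y)) (innerSL ℝ ((2 * G2 (rr x)) • rg x)) x :=
      d3.congr_fderiv (by rw [map_smul, map_smul, smul_smul])
    have t1 := ctr_smul d1 (hrd.add hfd)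
    have t2 := ctr_smul d2 (hrd.sub hfd)
    have t3 := ctr_smul d3' hrd
    have hsum : ctr (fderiv ℝ g x) = ctr (fderiv ℝ (fun y => G1 (rr y + φ y) • (rg + f) y) x) +
        ctr (fderiv ℝ (fun y => G1 (rr y - φ y) • (rg - f) y) x) - ctr (fderiv ℝ (fun y => (2 * G1 (rr y)) • rg y) x) := by
      have e1 : DifferentiableAt ℝ (fun y => G1 (rr y + φ y) • (rg + f) y) x := d1.differentiableAt.smul (hrd.add hfd)
      have e2 : DifferentiableAt ℝ (fun y => G1 (rr y - φ y) • (rg - f) y) x := d2.differentiableAt.smul (hrd.sub hfd)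
      have e3 : DifferentiableAt ℝ (fun y => (2 * G1 (rr y)) • rg y) x := d3'.differentiableAt.smul hrd
      have : fderiv ℝ g x = fderiv ℝ (fun y => G1 (rr y + φ y) • (rg + f) y) x +
        fderiv ℝ (fun y => G1 (rr y - φ y) • (rg - f) y) x - fderiv ℝ (fun y => (2 * G1 (rr y)) • rg y) x :=
        ((e1.hasFDerivAt.add e2.hasFDerivAt).sub e3.hasFDerivAt).fderiv
      rw [this]
      simp only [ctr, sub_apply, add_apply, Complex.sub_re, Complex.add_re,
        Complex.sub_im, Complex.add_im]
      ring
    have ta : ctr (fderiv ℝ (rg + f) x) = ctr (fderiv ℝ rg x) + ctr (fderiv ℝ f x) := by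
      rw [fderiv_add hrd hfd]
      simp only [ctr, add_apply, Complex.add_re, Complex.add_im]; ring
    have tb : ctr (fderiv ℝ (rg - f) x) = ctr (fderiv ℝ rg x) - ctr (fderiv ℝ f x) := by
      rw [fderiv_sub hrd hfd]
      simp only [ctr, sub_apply, Complex.sub_re, Complex.sub_im]; ring
    show 0 ≤ ctr (fderiv ℝ g x)
    rw [hsum, t1, t2, t3, ta, tb]
    simp only [Pi.add_apply, Pi.sub_apply, inner_smul_left, real_inner_self_eq_norm_sq, RCLike.conj_to_real]
    obtain ⟨tr0, tr2⟩ := ctr_rg x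
    have tf := abs_ctr_le (fderiv ℝ f x)
    have n0 : ‖rg x‖ ^ 2 ≤ 1 := by nlinarith [norm_rg_le x, norm_nonneg (rg x)]
    rcases lt_or_ge ‖x‖ R with hx | hx
    · have h1 := hs0' x hx.le
      have h2 := neg_abs_le (φ x)
      have h3 := le_abs_self (φ x)
      have h4 := abs_nonneg (φ x)
      have z1 := hz (rr x + φ x) (by linarith)
      have z2 := hz (rr x - φ x) (by linarith)
      have z3 := hz (rr x) (by linarith)
      rw [z1.2.1, z1.2.2, z2.2.1, z2.2.2, z3.2.1, z3.2.2]
      simp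
    · have hfx := hfR x hx
      have hrgx := norm_rg_le x
      have np : 81 ≤ ‖rg x + f x‖ ^ 2 := by
        have : 9 ≤ ‖rg x + f x‖ := by
          have := norm_sub_norm_le (f x) (-rg x)
          rw [norm_neg, sub_neg_eq_add, add_comm (f x)] at this
          linarith
        nlinarith
      have nm : 81 ≤ ‖rg x - f x‖ ^ 2 := by
        have : 9 ≤ ‖rg x - f x‖ := by
          have := norm_sub_norm_le (f x) (rg x)
          rw [norm_sub_rev] at this
          linarith
        nlinarith
      rcases le_total 0 (φ x) with hpos | hneg
      · have hB := hκB x (rr x + φ x) (by linarith [norm_le_rr x])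
        have := trace_aux (hG1nn (rr x - φ x)) (hG1m (show rr x - φ x ≤ rr x by linarith))
          (hG1m (show rr x ≤ rr x + φ x by linarith)) (hG2nn (rr x - φ x)) (hG2nn (rr x))
          (hG2m (show rr x ≤ rr x + φ x by linarith)) (norm_nonneg (fderiv ℝ f x)) tr0 tr2 tf
          (le_trans (mul_le_mul_of_nonneg_right hB (hG1nn _)) (hκG _)) np (sq_nonneg ‖rg x - f x‖) n0
        linarith
      · have hB := hκB x (rr x - φ x) (by linarith [norm_le_rr x])
        have := trace_aux (tf := -ctr (fderiv ℝ f x)) (hG1nn (rr x + φ x)) (hG1m (show rr x + φ x ≤ rr x by linarith))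
          (hG1m (show rr x ≤ rr x - φ x by linarith)) (hG2nn (rr x + φ x)) (hG2nn (rr x))
          (hG2m (show rr x ≤ rr x - φ x by linarith)) (norm_nonneg (fderiv ℝ f x)) tr0 tr2 (by rwa [abs_neg])
          (le_trans (mul_le_mul_of_nonneg_right hB (hG1nn _)) (hκG _)) nm (sq_nonneg ‖rg x + f x‖) n0
        linarith
  · intro x hx
    refine ⟨hfR x (by linarith [le_max_right s1 R]), ?_⟩
    exact (hκB x (rr x) (norm_le_rr x)).trans (hκG2 _ (hx.trans (norm_le_rr x)))
end

noncomputable section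
open scoped NNReal Topology

lemma q_deriv_bound {F T ρ F' gg : ℂ} {a b c σ K N q : ℝ} (hN : N = ‖F‖) (h10 : 10 ≤ N) (hT : ‖T‖ = 1)
    (hρ : ‖ρ‖ ≤ 1) (hcb : c ≤ b) (hba : b ≤ a) (hσ : 0 ≤ σ) (hK : ‖F'‖ ≤ σ * K)
    (hg : gg = a • (ρ + F) + c • (ρ - F) - (2 * b) • ρ) (hq : q = inner ℝ F T / N) :
    σ * ((a - c) * N * (0.9 - q ^ 2) - K) ≤
      (inner ℝ F' T + inner ℝ F (σ • gg - (σ * inner ℝ gg T) • T)) / N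
        - inner ℝ F T * (inner ℝ F F' / N) / N ^ 2 := by
  have hN0 : 0 < N := by linarith
  have hFT : (inner ℝ F T : ℝ) = q * N := by rw [hq]; field_simp
  have hFF : (inner ℝ F F : ℝ) = N ^ 2 := by rw [real_inner_self_eq_norm_sq, hN]
  have hTT : (inner ℝ T T : ℝ) = 1 := by rw [real_inner_self_eq_norm_sq, hT]; norm_num
  have hTF : (inner ℝ T F : ℝ) = q * N := by rw [real_inner_comm, hFT]
  set n : ℂ := N⁻¹ • F - q • T with hn
  set m : ℂ := T - (q / N) • F with hm
  have hnn : ‖n‖ ^ 2 = 1 - q ^ 2 := by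
    rw [← real_inner_self_eq_norm_sq, hn]
    simp only [inner_sub_left, inner_sub_right, inner_smul_left, inner_smul_right, RCLike.conj_to_real, hFT, hTF, hFF, hTT]
    field_simp; ring
  have hmm : ‖m‖ ^ 2 = 1 - q ^ 2 := by
    rw [← real_inner_self_eq_norm_sq, hm]
    simp only [inner_sub_left, inner_sub_right, inner_smul_left, inner_smul_right, RCLike.conj_to_real, hFT, hTF, hFF, hTT]
    field_simp; ring
  have hn1 : ‖n‖ ≤ 1 := by nlinarith [norm_nonneg n, sq_nonneg q]
  have hm1 : ‖m‖ ≤ 1 := by nlinarith [norm_nonneg m, sq_nonneg q]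
  have hFn : (inner ℝ F n : ℝ) = N * (1 - q ^ 2) := by
    rw [hn]
    simp only [inner_sub_right, inner_smul_right, hFT, hFF]
    field_simp
  have hgn : (inner ℝ gg n : ℝ) = (a - c) * (N * (1 - q ^ 2)) + (a + c - 2 * b) * inner ℝ ρ n := by
    rw [← hFn, hg]
    simp only [inner_sub_left, inner_add_left, inner_smul_left, RCLike.conj_to_real]
    ring
  have e : (inner ℝ F' T + inner ℝ F (σ • gg - (σ * inner ℝ gg T) • T)) / N
        - inner ℝ F T * (inner ℝ F F' / N) / N ^ 2 = σ * inner ℝ gg n + inner ℝ F' m / N := by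
    rw [hn, hm]
    simp only [inner_sub_right, inner_smul_right, hFT, real_inner_comm F' F, real_inner_comm gg F]
    field_simp; ring
  rw [e, hgn]
  have b1 : |(inner ℝ ρ n : ℝ)| ≤ 1 := (abs_real_inner_le_norm _ _).trans (by nlinarith [norm_nonneg n, norm_nonneg ρ])
  have b2 : |(inner ℝ F' m : ℝ)| ≤ σ * K :=
    (abs_real_inner_le_norm _ _).trans (by nlinarith [norm_nonneg m, norm_nonneg F'])
  have b3 : -(a - c) ≤ (a + c - 2 * b) * inner ℝ ρ n := by
    have : |(a + c - 2 * b) * inner ℝ ρ n| ≤ (a - c) * 1 := by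
      rw [abs_mul]
      exact mul_le_mul (abs_le.2 ⟨by linarith, by linarith⟩) b1 (abs_nonneg _) (by linarith)
    linarith [(abs_le.1 this).1]
  have b4 : -(σ * K) ≤ inner ℝ F' m / N := by
    rw [le_div_iff₀ hN0]
    have := (abs_le.1 b2).1
    have h0 : 0 ≤ σ * K := (norm_nonneg _).trans hK
    nlinarith
  have b5 : (a - c) ≤ (a - c) * N * 0.1 := by nlinarith
  have b6 : σ * ((a - c) * N * (0.9 - q ^ 2)) ≤ σ * ((a - c) * (N * (1 - q ^ 2)) + (a + c - 2 * b) * inner ℝ ρ n) := by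
    apply mul_le_mul_of_nonneg_left _ hσ
    linarith
  linarith

lemma eventually_gt_left {h : ℝ → ℝ} {h' t : ℝ} (hd : HasDerivAt h h' t) (hneg : h' < 0) :
    ∀ᶠ s in 𝓝[<] t, h t < h s := by
  have h2 := hasDerivWithinAt_iff_tendsto_slope.1 (hd.hasDerivWithinAt (s := Iio t))
  have h3 : ∀ᶠ s in 𝓝[Iio t \ {t}] t, slope h t s < 0 := h2.eventually (gt_mem_nhds hneg)
  have e : Iio t \ {t} = Iio t := by simp
  rw [e] at h3
  filter_upwards [h3, self_mem_nhdsWithin] with s hs hs0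
  rw [slope_def_field] at hs
  rcases div_neg_iff.1 hs with h | h
  · linarith
  · have := mem_Iio.1 hs0
    linarith [h.2]

/-- backward continuation principle -/
lemma backward_induct {A : Set ℝ} {a b : ℝ} (hab : a ≤ b) (hcl : IsClosed (A ∩ Icc a b)) (hb : b ∈ A)
    (hstep : ∀ t ∈ A ∩ Ioc a b, A ∈ 𝓝[<] t) : Icc a b ⊆ A := by
  have hmap : ∀ τ, Tendsto (fun τ : ℝ => b - τ) (𝓝[>] τ) (𝓝[<] (b - τ)) := by
    intro τ
    refine tendsto_nhdsWithin_iff.2 ⟨?_, ?_⟩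
    · exact (Continuous.tendsto (by fun_prop) τ).mono_left nhdsWithin_le_nhds
    · filter_upwards [self_mem_nhdsWithin] with s hs
      exact mem_Iio.2 (by linarith [mem_Ioi.1 hs])
  have key : Icc 0 (b - a) ⊆ (fun τ => b - τ) ⁻¹' A := by
    refine IsClosed.Icc_subset_of_forall_mem_nhdsWithin ?_ (by simpa using hb) ?_
    · have h1 : IsClosed ((fun τ => b - τ) ⁻¹' (A ∩ Icc a b)) := hcl.preimage (by fun_prop)
      convert h1 using 1
      ext τ
      simp only [mem_inter_iff, mem_preimage, mem_Icc]
      constructor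
      · rintro ⟨h, h1, h2⟩; exact ⟨h, by linarith, by linarith⟩
      · rintro ⟨h, h1, h2⟩; exact ⟨h, by linarith, by linarith⟩
    · rintro τ ⟨h1, h2, h3⟩
      exact hmap τ (hstep (b - τ) ⟨h1, by linarith, by linarith⟩)
  intro t ht
  have := key (show b - t ∈ Icc 0 (b - a) from ⟨by linarith [ht.2], by linarith [ht.1]⟩)
  simpa using this

lemma H_ineq {w K G q m : ℝ} (hw : 0 ≤ w) (hK : 0 ≤ K) (hG : 100 * (1 + K) ^ 3 ≤ G) (hq : q ^ 2 ≤ 0.43)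
    (hm : 10 * w ≤ m) : -(m * (0.9 - q ^ 2) - K) - 0.05 * (3 * G) / (1 + w ^ 2) < 0 := by
  have h1 : 4.7 * w ≤ m * (0.9 - q ^ 2) := by nlinarith
  have hG0 : 0 < G := lt_of_lt_of_le (by positivity) hG
  have h2 : 0 < 0.05 * (3 * G) / (1 + w ^ 2) := by positivity
  rcases le_total K w with h | h
  · linarith
  · have : K < 0.05 * (3 * G) / (1 + w ^ 2) := by
      rw [lt_div_iff₀ (by positivity)]
      have h3 : K * (1 + w ^ 2) ≤ K * (1 + K ^ 2) := by gcongr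
      nlinarith [mul_nonneg hK hK, mul_nonneg (mul_nonneg hK hK) hK]
    linarith

section
variable {u : ℂ → ℝ} {g : ℂ → ℂ} {R R1 : ℝ} {E P : ℂ → ℂ} {L : ℂ → ℂ →L[ℝ] ℂ} {f : ℂ → ℂ} {φ : ℂ → ℝ}
  {G1 G2 : ℝ → ℝ}

set_option maxHeartbeats 2000000 in
theorem star_plus (hc : ConfData u g R) (hp : Prof f φ g G1 G2 R1) (hE : ExpData u g R E P L)
    (hφ : ∀ x, HasFDerivAt φ (innerSL ℝ (f x)) x) (hf : ContDiff ℝ 1 f) (hR1 : 0 < R1) :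
    ∃ R2, ∀ z, R2 ≤ ‖E z‖ → 0 ≤ φ (E z) → -0.7 * (‖f (E z)‖ * ‖P z‖) < inner ℝ (f (E z)) (P z) := by
  have hφc : Continuous φ := continuous_iff_continuousAt.2 fun x => (hφ x).continuousAt
  have hrc : Continuous rr := contDiff_rr.continuous
  obtain ⟨M, hM⟩ := (isCompact_closedBall (0:ℂ) R1).bddAbove_image
    (f := fun x => φ x + 5 * rr x) (by fun_prop)
  refine ⟨max R1 (M / 5) + 1, ?_⟩
  intro z hz hφz
  by_contra hcon
  push Not at hcon
  obtain ⟨Y, hY0, hY1, hYd, hYn⟩ := hE.curve z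
  have hz0 : 0 < ‖z‖ := by
    have := hE.normE z
    linarith [le_max_left R1 (M / 5)]
  set x : ℝ → ℂ := fun t => (Y t).1 with hx
  set T : ℝ → ℂ := fun t => (Real.exp (-u (x t)) / ‖z‖) • (Y t).2 with hT
  set σ : ℝ → ℝ := fun t => Real.exp (-u (x t)) * ‖z‖ with hσ
  have hσ0 : ∀ t, 0 < σ t := fun t => by positivity
  have hT1 : ∀ t ∈ Icc (0:ℝ) 1, ‖T t‖ = 1 := by
    intro t ht
    simp only [hT]
    rw [norm_smul, hYn t ht, Real.norm_of_nonneg (by positivity), Real.exp_neg]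
    have := (Real.exp_pos (u (x t))).ne'
    field_simp
    rfl
  have e2 : ∀ t, Real.exp (-2 * u (x t)) = Real.exp (-u (x t)) * Real.exp (-u (x t)) := by
    intro t; rw [← Real.exp_add]; congr 1; ring
  have hx' : ∀ t ∈ Icc (0:ℝ) 1, HasDerivAt x (σ t • T t) t := by
    intro t ht
    have h1 : HasDerivAt (fun t => (Y t).1) (hamF u g (Y t)).1 t := (hYd t ht).fst
    refine h1.congr_deriv ?_
    simp only [hamF, hσ, hT, smul_smul]
    rw [show -2 * u (Y t).1 = -2 * u (x t) from rfl, e2 t]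
    congr 1
    field_simp
  have hp' : ∀ t ∈ Icc (0:ℝ) 1, HasDerivAt (fun t => (Y t).2) ((‖z‖ ^ 2) • g (x t)) t := by
    intro t ht
    have h1 : HasDerivAt (fun t => (Y t).2) (hamF u g (Y t)).2 t := (hYd t ht).snd
    refine h1.congr_deriv ?_
    simp only [hamF]
    rw [hYn t ht, show -2 * u (Y t).1 = -2 * u (x t) from rfl, e2 t, Real.exp_neg]
    congr 1
    have := (Real.exp_pos (u (x t))).ne'
    field_simp
    rfl
  have hux : ∀ t ∈ Icc (0:ℝ) 1, HasDerivAt (fun t => u (x t)) (σ t * inner ℝ (g (x t)) (T t)) t := by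
    intro t ht
    refine ((hc.grad (x t)).comp_hasDerivAt t (hx' t ht)).congr_deriv ?_
    rw [innerSL_apply_apply, inner_smul_right]
  have hT' : ∀ t ∈ Icc (0:ℝ) 1, HasDerivAt T (σ t • g (x t) - (σ t * inner ℝ (g (x t)) (T t)) • T t) t := by
    intro t ht
    refine ((((hux t ht).neg.exp).div_const ‖z‖).smul (hp' t ht)).congr_deriv ?_
    simp only [Pi.neg_apply, smul_smul]
    rw [sub_eq_add_neg, ← neg_smul]
    congr 1
    · congr 1
      simp only [hσ]; field_simp
    · rw [show T t = (Real.exp (-u (x t)) / ‖z‖) • (Y t).2 from rfl, smul_smul]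
      congr 1
      ring
  have hxc : ContinuousOn x (Icc 0 1) := fun t ht => (hx' t ht).continuousAt.continuousWithinAt
  have hTc : ContinuousOn T (Icc 0 1) := fun t ht => (hT' t ht).continuousAt.continuousWithinAt
  have hx1 : x 1 = E z := by simp [hx, hY1]
  have hx0 : x 0 = 0 := by simp [hx, hY0]
  -- last time in the ball
  have hcomp : IsCompact {t ∈ Icc (0:ℝ) 1 | ‖x t‖ ≤ R1} :=
    isCompact_Icc.of_isClosed_subset (isClosed_Icc.isClosed_le hxc.norm continuousOn_const) (fun t ht => ht.1)
  obtain ⟨tc, ⟨htc, htcR⟩, hmax⟩ := hcomp.exists_isGreatest ⟨0, by simp [hx0, hR1.le]⟩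
  have hout : ∀ t ∈ Ioc tc 1, R1 < ‖x t‖ := by
    intro t ht
    by_contra hle
    push Not at hle
    have := hmax (show t ∈ _ from ⟨⟨htc.1.trans ht.1.le, ht.2⟩, hle⟩)
    linarith [ht.1]
  have htc1 : tc < 1 := by
    refine lt_of_le_of_ne htc.2 fun h => ?_
    rw [h, hx1] at htcR
    linarith [le_max_left R1 (M / 5)]
  have hout' : ∀ t ∈ Icc tc 1, R1 ≤ ‖x t‖ := by
    intro t ht
    rcases eq_or_lt_of_le ht.1 with h | h
    · subst h
      have h1 : ContinuousWithinAt (fun t => ‖x t‖) (Ioi tc) tc :=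
        (hx' tc htc).continuousAt.norm.continuousWithinAt
      refine ge_of_tendsto h1 ?_
      filter_upwards [Ioc_mem_nhdsGT htc1] with s hs
      exact (hout s hs).le
    · exact (hout t ⟨h, ht.2⟩).le
  have hsub : ∀ t ∈ Icc tc 1, t ∈ Icc (0:ℝ) 1 := fun t ht => ⟨htc.1.trans ht.1, ht.2⟩
  -- functions
  set F : ℝ → ℂ := fun t => f (x t) with hF
  set q : ℝ → ℝ := fun t => inner ℝ (F t) (T t) / ‖F t‖ with hq
  set w : ℝ → ℝ := fun t => G1 (rr (x t) + φ (x t)) - G1 (rr (x t)) with hw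
  set H : ℝ → ℝ := fun t => - q t + 0.05 * Real.arctan (w t) with hH
  have hF' : ∀ t ∈ Icc (0:ℝ) 1, HasDerivAt F (fderiv ℝ f (x t) (σ t • T t)) t := fun t ht =>
    ((hf.differentiable (by norm_num) (x t)).hasFDerivAt).comp_hasDerivAt t (hx' t ht)
  have hφ' : ∀ t ∈ Icc (0:ℝ) 1, HasDerivAt (fun t => φ (x t)) (σ t * inner ℝ (F t) (T t)) t := by
    intro t ht
    refine ((hφ (x t)).comp_hasDerivAt t (hx' t ht)).congr_deriv ?_
    rw [innerSL_apply_apply, inner_smul_right]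
  have hr' : ∀ t ∈ Icc (0:ℝ) 1, HasDerivAt (fun t => rr (x t)) (σ t * inner ℝ (rg (x t)) (T t)) t := by
    intro t ht
    refine ((hasFDerivAt_rr (x t)).comp_hasDerivAt t (hx' t ht)).congr_deriv ?_
    rw [innerSL_apply_apply, inner_smul_right]
  have hF10 : ∀ t ∈ Icc tc 1, 10 ≤ ‖F t‖ := fun t ht => (hp.big _ (hout' t ht)).1
  have hFTq : ∀ t ∈ Icc tc 1, inner ℝ (F t) (T t) = q t * ‖F t‖ := by
    intro t ht
    have := hF10 t ht
    simp only [hq]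
    field_simp
  have hrT : ∀ t ∈ Icc (0:ℝ) 1, |(inner ℝ (rg (x t)) (T t) : ℝ)| ≤ 1 := by
    intro t ht
    refine (abs_real_inner_le_norm _ _).trans ?_
    rw [hT1 t ht, mul_one]; exact norm_rg_le _
  have hq' : ∀ t ∈ Icc tc 1, ∃ d, HasDerivAt q d t ∧
      σ t * ((G1 (rr (x t) + φ (x t)) - G1 (rr (x t) - φ (x t))) * ‖F t‖ * (0.9 - q t ^ 2) - ‖fderiv ℝ f (x t)‖) ≤ d ∨
      φ (x t) < 0 := by
    intro t ht
    by_cases hφt : φ (x t) < 0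
    · exact ⟨0, Or.inr hφt⟩
    push Not at hφt
    have h10 := hF10 t ht
    have hn : HasDerivAt (fun t => ‖F t‖) (inner ℝ (F t) (fderiv ℝ f (x t) (σ t • T t)) / ‖F t‖) t := by
      have h1 := ((hF' t (hsub t ht)).norm_sq).sqrt (by positivity)
      have e : (fun y => Real.sqrt (‖F y‖ ^ 2)) = fun t => ‖F t‖ := by
        ext y; exact Real.sqrt_sq (norm_nonneg _)
      rw [e] at h1
      refine h1.congr_deriv ?_
      rw [Real.sqrt_sq (norm_nonneg _), mul_div_mul_left _ _ two_ne_zero]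
    have h2 := (((hF' t (hsub t ht)).inner ℝ (hT' t (hsub t ht))).div hn (by positivity))
    refine ⟨_, Or.inl ⟨h2, ?_⟩⟩
    have hb := q_deriv_bound (F := F t) (T := T t) (ρ := rg (x t)) (F' := fderiv ℝ f (x t) (σ t • T t))
      (gg := g (x t)) (a := G1 (rr (x t) + φ (x t))) (b := G1 (rr (x t))) (c := G1 (rr (x t) - φ (x t)))
      (σ := σ t) (K := ‖fderiv ℝ f (x t)‖) rfl h10 (hT1 t (hsub t ht)) (norm_rg_le _)
      (hp.mono1 (by linarith)) (hp.mono1 (by linarith)) (hσ0 t).le ?_ (hp.form (x t)) (q := q t) rfl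
    · refine hb.trans (le_of_eq ?_)
      have : ‖F t‖ ≠ 0 := by positivity
      field_simp
      ring
    · refine (ContinuousLinearMap.le_opNorm _ _).trans ?_
      rw [norm_smul, hT1 t (hsub t ht), Real.norm_of_nonneg (hσ0 t).le, mul_one, mul_comm]
  have hw' : ∀ t ∈ Icc tc 1, HasDerivAt w (G2 (rr (x t) + φ (x t)) *
      (σ t * inner ℝ (rg (x t)) (T t) + σ t * inner ℝ (F t) (T t)) - G2 (rr (x t)) * (σ t * inner ℝ (rg (x t)) (T t))) t := by
    intro t ht
    exact ((hp.deriv _).comp t ((hr' t (hsub t ht)).add (hφ' t (hsub t ht)))).sub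
      ((hp.deriv _).comp t (hr' t (hsub t ht)))
  have hG1c : Continuous G1 := continuous_iff_continuousAt.2 fun s => (hp.deriv s).continuousAt
  have hxc' : ContinuousOn x (Icc tc 1) := hxc.mono hsub
  have hTc' : ContinuousOn T (Icc tc 1) := hTc.mono hsub
  have hFc : ContinuousOn F (Icc tc 1) := hf.continuous.comp_continuousOn hxc'
  have hqc : ContinuousOn q (Icc tc 1) :=
    (hFc.inner hTc').div hFc.norm fun t ht => by have := hF10 t ht; positivity
  have hwc : ContinuousOn w (Icc tc 1) := fun t ht => (hw' t ht).continuousAt.continuousWithinAt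
  have hHc : ContinuousOn H (Icc tc 1) :=
    hqc.neg.add (continuousOn_const.mul (Real.continuous_arctan.comp_continuousOn hwc))
  have hφxc : ContinuousOn (fun t => φ (x t)) (Icc tc 1) := hφc.comp_continuousOn hxc'
  have harc : ∀ t, Real.arctan (w t) < 1.575 := fun t => by
    have := Real.arctan_lt_pi_div_two (w t)
    linarith [Real.pi_lt_d2]
  have hq57 : ∀ t, 0.65 ≤ H t → q t ≤ -0.57 := by
    intro t ht
    have := harc t
    simp only [hH] at ht
    linarith
  have hmain : Icc tc 1 ⊆ {t | 0.65 ≤ H t ∧ 0 ≤ φ (x t)} := by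
    refine backward_induct htc1.le ?_ ?_ ?_
    · have h1 := (isClosed_Icc (a := tc) (b := 1)).isClosed_le (continuousOn_const (c := (0.65:ℝ))) hHc
      have h2 := (isClosed_Icc (a := tc) (b := 1)).isClosed_le (continuousOn_const (c := (0:ℝ))) hφxc
      convert h1.inter h2 using 1
      ext t
      simp only [mem_inter_iff, mem_setOf_eq]
      tauto
    · have h1 : (1:ℝ) ∈ Icc tc 1 := ⟨htc1.le, le_rfl⟩
      refine ⟨?_, by rw [hx1]; exact hφz⟩
      have hw0 : 0 ≤ w 1 := by
        simp only [hw, hx1]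
        exact sub_nonneg.2 (hp.mono1 (by linarith))
      have ha : 0 ≤ Real.arctan (w 1) := Real.arctan_nonneg.2 hw0
      have hqz : q 1 ≤ -0.7 := by
        have h10 := hF10 1 h1
        simp only [hq]
        rw [div_le_iff₀ (by linarith)]
        have hP : ‖P z‖ = Real.exp (u (E z)) * ‖z‖ := hE.normP z
        simp only [hF, hT, hx1, hY1, inner_smul_right]
        rw [hP] at hcon
        have h3 : (0:ℝ) < Real.exp (-u (E z)) / ‖z‖ := by positivity
        have h4 := mul_le_mul_of_nonneg_left hcon h3.le
        have h5 : Real.exp (-u (E z)) / ‖z‖ * (-0.7 * (‖f (E z)‖ * (Real.exp (u (E z)) * ‖z‖))) = -0.7 * ‖f (E z)‖ := by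
          rw [Real.exp_neg]
          have := (Real.exp_pos (u (E z))).ne'
          field_simp
        linarith
      simp only [hH]
      linarith
    · rintro t ⟨⟨hHt, hφt⟩, ht⟩
      have ht' : t ∈ Icc tc 1 := ⟨ht.1.le, ht.2⟩
      have hqt := hq57 t hHt
      have h10 := hF10 t ht'
      have hFT := hFTq t ht'
      have hσt := hσ0 t
      have hφneg : σ t * inner ℝ (F t) (T t) < 0 := by
        rw [hFT]
        exact mul_neg_of_pos_of_neg hσt (mul_neg_of_neg_of_pos (by linarith) (by linarith))
      have ev1 := eventually_gt_left (hφ' t (hsub t ht')) hφneg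
      have ev2 : ∀ᶠ s in 𝓝[<] t, 0.65 ≤ H s := by
        obtain ⟨d, hd | hd⟩ := hq' t ht'
        swap
        · exact absurd hd (not_lt.2 hφt)
        have hHd : HasDerivAt H _ t := hd.1.neg.add (((hw' t ht').arctan).const_mul 0.05)
        rcases eq_or_lt_of_le hHt with heq | hlt
        · refine (eventually_gt_left hHd ?_).mono fun s hs => by linarith
          set a := G1 (rr (x t) + φ (x t)) with ha
          set c := G1 (rr (x t) - φ (x t)) with hcdef
          have hw0 : 0 ≤ w t := sub_nonneg.2 (hp.mono1 (by linarith))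
          have ha0 : 0 ≤ Real.arctan (w t) := Real.arctan_nonneg.2 hw0
          have hqlow : -0.65 ≤ q t := by simp only [hH] at heq; linarith
          have hq2 : q t ^ 2 ≤ 0.43 := by nlinarith
          have hcb : c ≤ G1 (rr (x t)) := hp.mono1 (by linarith)
          have hm : 10 * w t ≤ (a - c) * ‖F t‖ := by
            have : w t ≤ a - c := by simp only [hw]; linarith
            nlinarith
          have hKG := (hp.big _ (hout' t ht')).2
          have hHi := H_ineq hw0 (norm_nonneg (fderiv ℝ f (x t))) hKG hq2 hm
          have hG2nn := hp.nonneg2 (rr (x t))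
          have hGG : G2 (rr (x t)) ≤ G2 (rr (x t) + φ (x t)) := hp.mono2 (by linarith)
          have hrt := abs_le.1 (hrT t (hsub t ht'))
          have hwle : G2 (rr (x t) + φ (x t)) * (σ t * inner ℝ (rg (x t)) (T t) + σ t * inner ℝ (F t) (T t))
              - G2 (rr (x t)) * (σ t * inner ℝ (rg (x t)) (T t)) ≤ -(σ t * (3 * G2 (rr (x t)))) := by
            have k1 : inner ℝ (F t) (T t) ≤ (-5 : ℝ) := by rw [hFT]; nlinarith
            have k2 : G2 (rr (x t) + φ (x t)) * (inner ℝ (rg (x t)) (T t) + inner ℝ (F t) (T t))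
              - G2 (rr (x t)) * (inner ℝ (rg (x t)) (T t)) ≤ -(3 * G2 (rr (x t))) := by nlinarith
            nlinarith
          have hd2 := hd.2
          have h5 : 1 / (1 + w t ^ 2) * (G2 (rr (x t) + φ (x t)) * (σ t * inner ℝ (rg (x t)) (T t) + σ t * inner ℝ (F t) (T t))
              - G2 (rr (x t)) * (σ t * inner ℝ (rg (x t)) (T t))) ≤ 1 / (1 + w t ^ 2) * (-(σ t * (3 * G2 (rr (x t))))) := by
            gcongr
          have h6 : σ t * (-((a - c) * ‖F t‖ * (0.9 - q t ^ 2) - ‖fderiv ℝ f (x t)‖) -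
            0.05 * (3 * G2 (rr (x t))) / (1 + w t ^ 2)) < 0 := mul_neg_of_pos_of_neg hσt hHi
          have h7 : 0.05 * (1 / (1 + w t ^ 2) * (-(σ t * (3 * G2 (rr (x t)))))) =
            - (σ t * (0.05 * (3 * G2 (rr (x t))) / (1 + w t ^ 2))) := by ring
          linarith
        · have h1 := hHd.continuousAt.eventually (lt_mem_nhds hlt)
          exact (h1.filter_mono nhdsWithin_le_nhds).mono fun s hs => hs.le
      filter_upwards [ev1, ev2] with s h1 h2
      exact ⟨h2, by linarith⟩
  have hanti : AntitoneOn (fun t => φ (x t) + 5 * rr (x t)) (Icc tc 1) := by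
    refine antitoneOn_of_hasDerivWithinAt_nonpos (convex_Icc _ _)
      (hφxc.add (continuousOn_const.mul (hrc.comp_continuousOn hxc')))
      (f' := fun t => σ t * inner ℝ (F t) (T t) + 5 * (σ t * inner ℝ (rg (x t)) (T t))) ?_ ?_
    · intro t ht
      have ht := hsub t (interior_subset ht)
      exact ((hφ' t ht).add ((hr' t ht).const_mul 5)).hasDerivWithinAt
    · intro t ht
      have ht := interior_subset ht
      have h1 := hq57 t (hmain ht).1
      have h10 := hF10 t ht
      have hrt := abs_le.1 (hrT t (hsub t ht))
      rw [hFTq t ht]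
      have : q t * ‖F t‖ + 5 * inner ℝ (rg (x t)) (T t) ≤ 0 := by nlinarith
      have hσt := hσ0 t
      nlinarith
  have hfin := hanti ⟨le_rfl, htc1.le⟩ ⟨htc1.le, le_rfl⟩ htc1.le
  simp only [hx1] at hfin
  have h1 : φ (x tc) + 5 * rr (x tc) ≤ M := hM ⟨x tc, by simpa using htcR, rfl⟩
  have h2 := norm_le_rr (E z)
  have h3 := le_max_right R1 (M / 5)
  linarith

theorem star_minus (hc : ConfData u g R) (hp : Prof f φ g G1 G2 R1) (hE : ExpData u g R E P L)
    (hφ : ∀ x, HasFDerivAt φ (innerSL ℝ (f x)) x) (hf : ContDiff ℝ 1 f) (hR1 : 0 < R1) :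
    ∃ R2, ∀ z, R2 ≤ ‖E z‖ → φ (E z) ≤ 0 → inner ℝ (f (E z)) (P z) < 0.7 * (‖f (E z)‖ * ‖P z‖) := by
  have hp2 : Prof (fun x => -f x) (fun x => -φ x) g G1 G2 R1 := by
    refine ⟨fun x => ?_, hp.deriv, hp.mono1, hp.mono2, hp.nonneg2, fun x hx => ?_⟩
    · rw [hp.form x, sub_neg_eq_add, sub_neg_eq_add, ← sub_eq_add_neg, ← sub_eq_add_neg]
      abel
    · have := hp.big x hx
      rw [show fderiv ℝ (fun x => -f x) x = -fderiv ℝ f x from fderiv_neg, norm_neg, norm_neg]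
      exact this
  obtain ⟨R2, h⟩ := star_plus hc hp2 hE (fun x => by rw [map_neg]; exact (hφ x).neg) hf.neg hR1
  refine ⟨R2, fun z hz hφz => ?_⟩
  have := h z hz (by linarith)
  rw [norm_neg, inner_neg_left] at this
  linarith
end
end

noncomputable section
open scoped NNReal Topology

/-- degree theory transported to the complex plane -/
structure CDeg where
  deg : (ℂ → ℂ) → Set ℂ → ℤ
  normalized : ∀ Ω : Set ℂ, IsOpen Ω → Bornology.IsBounded Ω → (0 : ℂ) ∈ Ω → deg id Ω = 1
  additive : ∀ (f : ℂ → ℂ) (Ω Ω₁ Ω₂ : Set ℂ),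
    IsOpen Ω → Bornology.IsBounded Ω → IsOpen Ω₁ → IsOpen Ω₂ →
    Ω₁ ⊆ Ω → Ω₂ ⊆ Ω → Disjoint Ω₁ Ω₂ →
    ContinuousOn f (closure Ω) →
    (∀ x ∈ closure Ω \ (Ω₁ ∪ Ω₂), f x ≠ 0) →
    deg f Ω = deg f Ω₁ + deg f Ω₂
  homotopyInv : ∀ (h : ℝ → ℂ → ℂ) (Ω : Set ℂ),
    IsOpen Ω → Bornology.IsBounded Ω →
    ContinuousOn (fun p : ℝ × ℂ => h p.1 p.2) (Icc 0 1 ×ˢ closure Ω) →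
    (∀ t ∈ Icc (0:ℝ) 1, ∀ x ∈ frontier Ω, h t x ≠ 0) →
    deg (h 0) Ω = deg (h 1) Ω

/-- the identification of the plane with the complex numbers -/
def JJ : ℂ ≃ₗᵢ[ℝ] Euc 2 := Complex.orthonormalBasisOneI.repr

def DegreeTheory.toC (D : DegreeTheory 2) : CDeg where
  deg f Ω := D.deg (fun x => JJ (f (JJ.symm x))) (JJ '' Ω)
  normalized Ω h1 h2 h3 := by
    have := D.normalized (JJ '' Ω) (JJ.toHomeomorph.isOpenMap _ h1) (JJ.isometry.lipschitz.isBounded_image h2)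
      ⟨0, h3, by simp⟩
    simpa [Function.id_def] using this
  additive f Ω Ω₁ Ω₂ h1 h2 h3 h4 h5 h6 h7 h8 h9 := by
    have hcl : closure (JJ '' Ω) = JJ '' closure Ω := (JJ.toHomeomorph.image_closure Ω).symm
    refine D.additive _ _ _ _ (JJ.toHomeomorph.isOpenMap _ h1) (JJ.isometry.lipschitz.isBounded_image h2)
      (JJ.toHomeomorph.isOpenMap _ h3) (JJ.toHomeomorph.isOpenMap _ h4) (image_mono h5) (image_mono h6)
      ((disjoint_image_iff JJ.injective).2 h7) ?_ ?_
    · rw [hcl]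
      refine JJ.continuous.comp_continuousOn (h8.comp JJ.symm.continuous.continuousOn ?_)
      rintro _ ⟨z, hz, rfl⟩
      simpa using hz
    · rw [hcl]
      rintro _ ⟨⟨z, hz, rfl⟩, hz2⟩
      have : f z ≠ 0 := by
        refine h9 z ⟨hz, fun h => hz2 ?_⟩
        rw [← image_union]
        exact ⟨z, h, rfl⟩
      simpa using this
  homotopyInv h Ω h1 h2 h3 h4 := by
    have hcl : closure (JJ '' Ω) = JJ '' closure Ω := (JJ.toHomeomorph.image_closure Ω).symm
    have hfr : frontier (JJ '' Ω) = JJ '' frontier Ω := (JJ.toHomeomorph.image_frontier Ω).symm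
    refine D.homotopyInv (fun t x => JJ (h t (JJ.symm x))) _ (JJ.toHomeomorph.isOpenMap _ h1)
      (JJ.isometry.lipschitz.isBounded_image h2) ?_ ?_
    · rw [hcl]
      refine JJ.continuous.comp_continuousOn (h3.comp (f := fun p : ℝ × Euc 2 => (p.1, JJ.symm p.2)) ?_ ?_)
      · exact (continuous_fst.prodMk (JJ.symm.continuous.comp continuous_snd)).continuousOn
      · rintro ⟨t, _⟩ ⟨ht, z, hz, rfl⟩
        exact ⟨ht, by simpa using hz⟩
    · rw [hfr]
      rintro t ht _ ⟨z, hz, rfl⟩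
      have := h4 t ht z hz
      simpa using this

namespace CDeg
variable (D : CDeg)

lemma deg_empty (f : ℂ → ℂ) : D.deg f ∅ = 0 := by
  have := D.additive f ∅ ∅ ∅ isOpen_empty Bornology.isBounded_empty isOpen_empty isOpen_empty
    (by simp) (by simp) (by simp) (by simp) (by simp)
  linarith

/-- homotopy invariance on balls, for everywhere continuous homotopies -/
lemma hom_ball (h : ℝ → ℂ → ℂ) (c : ℂ) {S : ℝ} (hc : Continuous fun p : ℝ × ℂ => h p.1 p.2)
    (h0 : ∀ t ∈ Icc (0:ℝ) 1, ∀ x, dist x c = S → h t x ≠ 0) :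
    D.deg (h 0) (ball c S) = D.deg (h 1) (ball c S) := by
  refine D.homotopyInv h _ isOpen_ball isBounded_ball hc.continuousOn ?_
  intro t ht x hx
  exact h0 t ht x (frontier_ball_subset_sphere hx)

def Q (n : ℤ) (z : ℂ) : ℂ := (‖z‖ : ℂ) * (z / ‖z‖) ^ n

lemma norm_Q (n : ℤ) (z : ℂ) : ‖Q n z‖ = ‖z‖ := by
  by_cases h : z = 0
  · simp [Q, h]
  · simp [Q, h, norm_zpow]

lemma Q_ne {n : ℤ} {z : ℂ} (h : z ≠ 0) : Q n z ≠ 0 := by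
  rw [← norm_ne_zero_iff, norm_Q]; simpa using h

lemma cont_Q (n : ℤ) : Continuous (Q n) := by
  rw [continuous_iff_continuousAt]
  intro z
  by_cases h : z = 0
  · subst h
    have : Q n 0 = 0 := by simp [Q]
    rw [ContinuousAt, this, tendsto_zero_iff_norm_tendsto_zero]
    simp only [norm_Q]
    simpa using (continuous_norm.tendsto (0:ℂ))
  · have h1 : (‖z‖ : ℂ) ≠ 0 := by simpa using h
    have h2 : ContinuousAt (fun z : ℂ => (‖z‖ : ℂ)) z := by fun_prop
    exact h2.mul ((continuousAt_id.div h2 h1).zpow₀ n (Or.inl (div_ne_zero h h1)))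

lemma Q_one : Q 1 = id := by
  ext z
  by_cases h : z = 0
  · simp [Q, h]
  · have h1 : (‖z‖ : ℂ) ≠ 0 := by simpa using h
    simp only [Q, zpow_one, id]; field_simp

lemma Q_mul (a b : ℤ) (z : ℂ) : Q a z * Q b z = ‖z‖ * Q (a + b) z := by
  by_cases h : z = 0
  · simp [Q, h]
  · have h1 : (‖z‖ : ℂ) ≠ 0 := by simpa using h
    simp only [Q, zpow_add₀ (div_ne_zero h h1)]; ring

lemma deg_scale (K : ℂ → ℂ) (hK : Continuous K) (c : ℂ) {S : ℝ} {l : ℂ} (hl : l ≠ 0)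
    (h0 : ∀ x, dist x c = S → K x ≠ 0) :
    D.deg (fun z => K z * l) (ball c S) = D.deg K (ball c S) := by
  have := D.hom_ball (fun t z => K z * Complex.exp (t * Complex.log l)) c (S := S) (by fun_prop)
    (fun t _ x hx => mul_ne_zero (h0 x hx) (Complex.exp_ne_zero _))
  simp only [Complex.ofReal_zero, zero_mul, Complex.exp_zero, mul_one, Complex.ofReal_one, one_mul,
    Complex.exp_log hl] at this
  exact this.symm

lemma deg_shift (a b : ℤ) {S : ℝ} (hS : 0 < S) {p q : ℂ} (hp : ‖p‖ = S) (hq : q = -p) :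
    D.deg (fun z => Q a (z - p) * Q b (z - q)) (ball p S) = D.deg (Q a) (ball 0 (2 * S)) := by
  have hpq : ‖p - q‖ = 2 * S := by
    rw [hq, sub_neg_eq_add, ← two_mul, norm_mul, hp]; simp
  have cQa := cont_Q a
  have cQb := cont_Q b
  -- freeze the second factor
  have s1 := D.hom_ball (fun t z => Q a (z - p) * Q b (p + (1 - t) * (z - p) - q)) p (S := S)
    (by fun_prop) (by
      intro t ht x hx
      have hx0 : ‖x - p‖ = S := by rw [← dist_eq_norm]; exact hx
      refine mul_ne_zero (Q_ne ?_) (Q_ne ?_)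
      · intro h; rw [h] at hx0; simp at hx0; linarith
      · intro h
        have h1 : p - q = -((1 - t : ℂ) * (x - p)) := by linear_combination h
        have h2 : ‖p - q‖ ≤ S := by
          rw [h1, norm_neg, norm_mul, hx0]
          have : ‖(1 - t : ℂ)‖ ≤ 1 := by
            rw [← Complex.ofReal_one, ← Complex.ofReal_sub, Complex.norm_real, Real.norm_of_nonneg (by linarith [ht.2])]
            linarith [ht.1]
          nlinarith
        linarith)
  have e0 : (fun z => Q a (z - p) * Q b (p + (1 - ((0:ℝ):ℂ)) * (z - p) - q)) =
      fun z => Q a (z - p) * Q b (z - q) := by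
    ext z; congr 2; push_cast; ring
  have e1 : (fun z => Q a (z - p) * Q b (p + (1 - ((1:ℝ):ℂ)) * (z - p) - q)) =
      fun z => Q a (z - p) * Q b (p - q) := by
    ext z; congr 2; push_cast; ring
  simp only [e0, e1] at s1
  rw [s1, D.deg_scale (fun z => Q a (z - p)) (by fun_prop) p]
  · -- enlarge
    have s2 := D.additive (fun z => Q a (z - p)) (ball 0 (2 * S)) (ball p S) ∅ isOpen_ball isBounded_ball
      isOpen_ball isOpen_empty (ball_subset_ball' (by rw [dist_zero_right, hp]; linarith)) (by simp) (by simp)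
      (by fun_prop) (by
        rintro x ⟨_, hx⟩
        refine Q_ne fun h => hx (Or.inl ?_)
        rw [sub_eq_zero.1 h]; simpa using hS)
    rw [D.deg_empty, add_zero] at s2
    rw [← s2]
    have s3 := D.hom_ball (fun t z => Q a (z - (1 - t) * p)) 0 (S := 2 * S) (by fun_prop) (by
      intro t ht x hx
      rw [dist_zero_right] at hx
      refine Q_ne fun h => ?_
      rw [sub_eq_zero.1 h, norm_mul, hp] at hx
      have : ‖(1 - t : ℂ)‖ ≤ 1 := by
        rw [← Complex.ofReal_one, ← Complex.ofReal_sub, Complex.norm_real, Real.norm_of_nonneg (by linarith [ht.2])]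
        linarith [ht.1]
      nlinarith)
    simpa using s3
  · exact Q_ne (by rw [← norm_ne_zero_iff, hpq]; positivity)
  · intro x hx
    refine Q_ne fun h => ?_
    rw [dist_eq_norm, h] at hx; simp at hx; linarith

lemma deg_Q_add (a b : ℤ) {S : ℝ} (hS : 0 < S) :
    D.deg (Q (a + b)) (ball 0 (2 * S)) = D.deg (Q a) (ball 0 (2 * S)) + D.deg (Q b) (ball 0 (2 * S)) := by
  obtain ⟨p, hp⟩ : ∃ p : ℂ, p = (S : ℂ) := ⟨_, rfl⟩
  have hpn : ‖p‖ = S := by rw [hp, Complex.norm_real, Real.norm_of_nonneg hS.le]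
  have cQa := cont_Q a
  have cQb := cont_Q b
  have cQab := cont_Q (a + b)
  have h1 := D.deg_shift a b hS (p := p) (q := -p) hpn rfl
  have h2 := D.deg_shift b a hS (p := -p) (q := p) (by simpa using hpn) (by simp)
  have e : (fun z => Q b (z - -p) * Q a (z - p)) = fun z => Q a (z - p) * Q b (z - -p) := by
    ext z; ring
  rw [e] at h2
  have h3 := D.additive (fun z => Q a (z - p) * Q b (z - -p)) (ball 0 (2 * S)) (ball p S) (ball (-p) S)
    isOpen_ball isBounded_ball isOpen_ball isOpen_ball
    (ball_subset_ball' (by rw [dist_zero_right, hpn]; linarith))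
    (ball_subset_ball' (by rw [dist_zero_right, norm_neg, hpn]; linarith))
    (ball_disjoint_ball (by
      rw [dist_eq_norm, sub_neg_eq_add, ← two_mul p, norm_mul, hpn]; simp; linarith))
    (by fun_prop) (by
      rintro x ⟨_, hx⟩
      refine mul_ne_zero (Q_ne fun h => hx (Or.inl ?_)) (Q_ne fun h => hx (Or.inr ?_))
      · rw [sub_eq_zero.1 h]; simpa using hS
      · rw [sub_eq_zero.1 h]; simpa using hS)
  rw [h1, h2] at h3
  rw [← h3]
  have ht1 : ∀ t ∈ Icc (0:ℝ) 1, ‖(1 - t : ℂ)‖ ≤ 1 := by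
    intro t ht
    rw [← Complex.ofReal_one, ← Complex.ofReal_sub, Complex.norm_real, Real.norm_of_nonneg (by linarith [ht.2])]
    linarith [ht.1]
  have s := D.hom_ball (fun t z => Q a (z - (1 - t) * p) * Q b (z - (1 - t) * -p)) 0 (S := 2 * S) (by fun_prop) (by
      intro t ht x hx
      rw [dist_zero_right] at hx
      have := ht1 t ht
      refine mul_ne_zero (Q_ne fun h => ?_) (Q_ne fun h => ?_)
      · rw [sub_eq_zero.1 h, norm_mul, hpn] at hx; nlinarith
      · rw [sub_eq_zero.1 h, norm_mul, norm_neg, hpn] at hx; nlinarith)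
  simp only [Complex.ofReal_zero, Complex.ofReal_one, sub_zero, one_mul, sub_self, zero_mul, Q_mul] at s
  rw [s]
  have s4 := D.hom_ball (fun t z => (((1 - t) + t * ‖z‖ : ℝ) : ℂ) * Q (a + b) z) 0 (S := 2 * S) (by fun_prop) (by
      intro t ht x hx
      rw [dist_zero_right] at hx
      refine mul_ne_zero ?_ (Q_ne ?_)
      · rw [hx, Complex.ofReal_ne_zero]
        rcases eq_or_lt_of_le ht.1 with h | h
        · rw [← h]; norm_num
        · have := mul_pos h (show 0 < 2 * S by linarith)
          linarith [ht.2]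
      · rw [← norm_ne_zero_iff, hx]; positivity)
  simpa using s4

lemma deg_Q (n : ℤ) {S : ℝ} (hS : 0 < S) : D.deg (Q n) (ball 0 S) = n := by
  have hadd := fun a b => D.deg_Q_add a b (half_pos hS)
  rw [mul_div_cancel₀ S two_ne_zero] at hadd
  let A : ℤ →+ ℤ := AddMonoidHom.mk' (fun n => D.deg (Q n) (ball 0 S)) hadd
  have h1 : A 1 = 1 := by
    change D.deg (Q 1) (ball 0 S) = 1
    rw [Q_one]
    exact D.normalized _ isOpen_ball isBounded_ball (by simpa using hS)
  have : A = AddMonoidHom.id ℤ := AddMonoidHom.ext_int (by simpa using h1)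
  exact DFunLike.congr_fun this n

/-- Winding: if `K = exp(c) * Q n` on the circle then the degree of `K` is `n`. -/
lemma deg_of_circle {K : ℂ → ℂ} (hK : Continuous K) {S : ℝ} (hS : 0 < S) (n : ℤ) (c : ℂ → ℂ)
    (hc : ∀ z, z ≠ 0 → ContinuousAt c z) (hb : ∃ M, ∀ z, z ≠ 0 → ‖c z‖ ≤ M)
    (hcirc : ∀ z, ‖z‖ = S → K z = Complex.exp (c z) * Q n z) : D.deg K (ball 0 S) = n := by
  obtain ⟨M, hM⟩ := hb
  have hcont : Continuous fun p : ℝ × ℂ => Complex.exp (p.1 * c p.2) * Q n p.2 := by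
    rw [continuous_iff_continuousAt]
    rintro ⟨t, z⟩
    by_cases hz : z = 0
    · subst hz
      have : Q n 0 = 0 := by simp [Q]
      rw [ContinuousAt]
      simp only [this, mul_zero]
      have hlim : Tendsto (fun p : ℝ × ℂ => Real.exp (|p.1| * M) * ‖p.2‖) (𝓝 (t, 0)) (𝓝 0) := by
        have : Continuous fun p : ℝ × ℂ => Real.exp (|p.1| * M) * ‖p.2‖ := by fun_prop
        simpa using this.tendsto (t, 0)
      refine squeeze_zero_norm (fun p => ?_) hlim
      by_cases hp : p.2 = 0
      · simp [hp, this]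
      · rw [norm_mul, norm_Q, Complex.norm_exp]
        gcongr
        refine (Complex.re_le_norm _).trans ?_
        rw [norm_mul, Complex.norm_real, Real.norm_eq_abs]
        gcongr
        exact hM _ hp
    · have h1 : ContinuousAt (fun p : ℝ × ℂ => c p.2) (t, z) := ContinuousAt.comp (f := Prod.snd) (hc z hz) continuousAt_snd
      have h2 : ContinuousAt (fun p : ℝ × ℂ => (p.1 : ℂ)) (t, z) := by fun_prop
      exact (h2.mul h1).cexp.mul ((cont_Q n).continuousAt.comp continuousAt_snd)
  have h1 := D.hom_ball (fun t z => Complex.exp (t * c z) * Q n z) 0 (S := S) hcont (by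
    intro t ht x hx
    rw [dist_zero_right] at hx
    refine mul_ne_zero (Complex.exp_ne_zero _) (Q_ne ?_)
    rw [← norm_ne_zero_iff, hx]; positivity)
  simp only [Complex.ofReal_zero, zero_mul, Complex.exp_zero, one_mul, Complex.ofReal_one] at h1
  have hc1 : Continuous fun z => Complex.exp (c z) * Q n z := by
    have := hcont.comp (continuous_const (y := (1:ℝ)) |>.prodMk continuous_id)
    simpa [Function.comp_def] using this
  have h2 := D.hom_ball (fun t z => (1 - t : ℂ) * (Complex.exp (c z) * Q n z) + t * K z) 0 (S := S) (by
      have hc2 : Continuous fun p : ℝ × ℂ => Complex.exp (c p.2) * Q n p.2 := hc1.comp continuous_snd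
      fun_prop) (by
    intro t ht x hx
    rw [dist_zero_right] at hx
    rw [hcirc x hx, ← add_mul, sub_add_cancel, one_mul]
    refine mul_ne_zero (Complex.exp_ne_zero _) (Q_ne ?_)
    rw [← norm_ne_zero_iff, hx]; positivity)
  simp only [Complex.ofReal_zero, Complex.ofReal_one, sub_zero, one_mul, zero_mul, add_zero, sub_self, zero_add] at h2
  rw [← h2, ← h1]
  exact D.deg_Q n hS

/-- If the degree is one, there is a periodic logarithm relative to the identity. -/
lemma exists_periodic_log {K : ℂ → ℂ} (hK : Continuous K) {S : ℝ} (hS : 0 < S)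
    (h0 : ∀ z, ‖z‖ = S → K z ≠ 0) (h1 : D.deg K (ball 0 S) = 1) :
    ∃ c : ℝ → ℂ, Continuous c ∧ (∀ θ, c (θ + 2 * Real.pi) = c θ) ∧
      ∀ θ : ℝ, K (S * Complex.exp (θ * Complex.I)) = Complex.exp (c θ) * Complex.exp (θ * Complex.I) := by
  have hne : ∀ θ : ℝ, K (S * Complex.exp (θ * Complex.I)) ≠ 0 := fun θ => h0 _ (by
    rw [norm_mul, Complex.norm_exp_ofReal_mul_I, Complex.norm_real, Real.norm_of_nonneg hS.le, mul_one])
  let r : C(ℝ, ℂ) := ⟨fun θ => K (S * Complex.exp (θ * Complex.I)) * Complex.exp (-(θ * Complex.I)), by fun_prop⟩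
  have hr : ∀ θ, r θ ≠ 0 := fun θ => mul_ne_zero (hne θ) (Complex.exp_ne_zero _)
  obtain ⟨F, ⟨-, hF⟩, -⟩ := Complex.isCoveringMapOn_exp.existsUnique_continuousMap_lifts r
    (a₀ := 0) (e₀ := Complex.log (r 0)) (Complex.exp_log (hr 0)) (fun a => hr a)
  have hF' : ∀ θ, Complex.exp (F θ) = r θ := fun θ => congrFun hF θ
  have hper : ∀ θ : ℝ, Complex.exp (((θ + 2 * Real.pi : ℝ) : ℂ) * Complex.I) = Complex.exp (θ * Complex.I) := by
    intro θ
    push_cast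
    rw [add_mul, Complex.exp_add, Complex.exp_two_pi_mul_I, mul_one]
  have hrp : ∀ θ, r (θ + 2 * Real.pi) = r θ := by
    intro θ
    change K _ * _ = K _ * _
    rw [Complex.exp_neg, Complex.exp_neg, hper θ]
  have hn : ∀ θ, ∃ n : ℤ, F (θ + 2 * Real.pi) = F θ + n * (2 * Real.pi * Complex.I) := by
    intro θ
    exact Complex.exp_eq_exp_iff_exists_int.1 (by rw [hF', hF', hrp])
  choose N hN using hn
  have hNc : Continuous N := by
    have h2 : Continuous fun θ => (N θ : ℝ) := by
      have : (fun θ => (N θ : ℝ)) = fun θ => (F (θ + 2 * Real.pi) - F θ).im / (2 * Real.pi) := by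
        ext θ
        rw [hN θ]
        have := Real.pi_pos.ne'
        simp [this]
      rw [this]
      fun_prop
    exact (Int.isClosedEmbedding_coe_real.isInducing.continuous_iff).2 h2
  obtain ⟨w, hw⟩ : ∃ w, ∀ θ, N θ = w := ⟨N 0, fun θ => PreconnectedSpace.constant inferInstance hNc⟩
  -- periodic part
  let C : ℝ → ℂ := fun θ => F θ - w * θ * Complex.I
  have hCc : Continuous C := by fun_prop
  have hCp : Function.Periodic C (2 * Real.pi) := by
    intro θ
    simp only [C]
    rw [hN θ, hw]; push_cast; ring
  have hKC : ∀ θ : ℝ, K (S * Complex.exp (θ * Complex.I)) = Complex.exp (C θ) * Complex.exp (((1 + w : ℤ) : ℂ) * (θ * Complex.I)) := by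
    intro θ
    rw [← Complex.exp_add]
    have e : C θ + ((1 + w : ℤ) : ℂ) * (θ * Complex.I) = F θ + θ * Complex.I := by
      simp only [C]; push_cast; ring
    rw [e, Complex.exp_add, hF']
    change _ = K _ * _ * _
    rw [mul_assoc, ← Complex.exp_add]; simp
  have hw0 : w = 0 := by
    have hlc : Continuous (hCp.lift : Real.Angle → ℂ) := by
      exact continuous_quot_lift _ hCc
    obtain ⟨M, hM⟩ : ∃ M, ∀ a : Real.Angle, ‖hCp.lift a‖ ≤ M := by
      haveI : Fact (0 < 2 * Real.pi) := ⟨Real.two_pi_pos⟩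
      haveI : CompactSpace Real.Angle := inferInstanceAs (CompactSpace (AddCircle (2 * Real.pi)))
      obtain ⟨M, hM⟩ := (isCompact_univ (X := Real.Angle)).bddAbove_image (f := fun a => ‖hCp.lift a‖) hlc.norm.continuousOn
      exact ⟨M, fun a => hM ⟨a, trivial, rfl⟩⟩
    have := D.deg_of_circle hK hS (1 + w) (fun z => hCp.lift (z.arg : Real.Angle) - (Real.log S : ℂ)) (fun z hz => by
        exact (ContinuousAt.comp (f := fun z : ℂ => (z.arg : Real.Angle)) hlc.continuousAt (Complex.continuousAt_arg_coe_angle hz)).sub continuousAt_const)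
        ⟨M + ‖(Real.log S : ℂ)‖, fun z _ => (norm_sub_le _ _).trans (by gcongr; exact hM _)⟩ (by
          intro z hz
          have hz0 : z ≠ 0 := by rw [← norm_ne_zero_iff, hz]; positivity
          have e : z = S * Complex.exp (z.arg * Complex.I) := by
            rw [← hz]; exact (Complex.norm_mul_exp_arg_mul_I z).symm
          have e2 : z / ‖z‖ = Complex.exp (z.arg * Complex.I) := by
            rw [div_eq_iff (by simpa using hz0), mul_comm, Complex.norm_mul_exp_arg_mul_I]
          have e3 : Complex.exp (Real.log S : ℂ) = S := by
            rw [← Complex.ofReal_exp, Real.exp_log hS]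
          have hS' : (S : ℂ) ≠ 0 := by simpa using hS.ne'
          have e4 : hCp.lift (z.arg : Real.Angle) = C z.arg := hCp.lift_coe _
          rw [e4, Complex.exp_sub, e3, Q, e2, ← Complex.exp_int_mul, hz]
          nth_rewrite 1 [e]
          rw [hKC]
          field_simp)
    rw [h1] at this
    linarith
  refine ⟨C, hCc, hCp, fun θ => ?_⟩
  rw [hKC θ, hw0]; simp
end CDeg
end

noncomputable section
open scoped NNReal Topology

lemma eventually_lt_left' {h : ℝ → ℝ} {h' t : ℝ} (hd : HasDerivAt h h' t) (hpos : 0 < h') :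
    ∀ᶠ s in 𝓝[<] t, h s < h t := by
  have h2 := hasDerivWithinAt_iff_tendsto_slope.1 (hd.hasDerivWithinAt (s := Iio t))
  have h3 : ∀ᶠ s in 𝓝[Iio t \ {t}] t, 0 < slope h t s := h2.eventually (lt_mem_nhds hpos)
  have e : Iio t \ {t} = Iio t := by simp
  rw [e] at h3
  filter_upwards [h3, self_mem_nhdsWithin] with s hs hs0
  rw [slope_def_field] at hs
  have := mem_Iio.1 hs0
  rcases div_pos_iff.1 hs with h | h
  · linarith
  · linarith

lemma eventually_gt_right' {h : ℝ → ℝ} {h' t : ℝ} (hd : HasDerivAt h h' t) (hpos : 0 < h') :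
    ∀ᶠ s in 𝓝[>] t, h t < h s := by
  have h2 := hasDerivWithinAt_iff_tendsto_slope.1 (hd.hasDerivWithinAt (s := Ioi t))
  have h3 : ∀ᶠ s in 𝓝[Ioi t \ {t}] t, 0 < slope h t s := h2.eventually (lt_mem_nhds hpos)
  have e : Ioi t \ {t} = Ioi t := by simp
  rw [e] at h3
  filter_upwards [h3, self_mem_nhdsWithin] with s hs hs0
  rw [slope_def_field] at hs
  have := mem_Ioi.1 hs0
  rcases div_pos_iff.1 hs with h | h
  · linarith
  · linarith

/-- Going back from a zero where `ψ` increases one meets a zero with strictly larger angle. -/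
lemma prev_zero {ψ ω d : ℝ → ℝ} (hψ : ∀ θ, HasDerivAt ψ (d θ * Real.sin (ω θ)) θ) (hd : ∀ θ, 0 < d θ)
    (hω : Continuous ω) (h2 : ∀ θ, ψ θ ≤ 0 → Real.cos (ω θ) < 1) (h3 : ∀ θ, 0 ≤ ψ θ → -1 < Real.cos (ω θ))
    (hpψ : ∀ θ, ψ (θ + 2 * Real.pi) = ψ θ) {θ0 : ℝ} (h0 : ψ θ0 = 0) (hs : 0 < Real.sin (ω θ0)) :
    ∃ θ1, ψ θ1 = 0 ∧ ω θ0 < ω θ1 := by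
  have hψc : Continuous ψ := continuous_iff_continuousAt.2 fun θ => (hψ θ).continuousAt
  have hπ := Real.pi_pos
  have hev := eventually_lt_left' (hψ θ0) (mul_pos (hd θ0) hs)
  obtain ⟨l, hl, hlt⟩ := (mem_nhdsLT_iff_exists_Ioo_subset' (show θ0 - 2 * Real.pi < θ0 by linarith)).1 hev
  -- l < θ0, ψ<0 on (l,θ0)
  have hl0 : l < θ0 := hl
  have hcomp : IsCompact {θ ∈ Icc (θ0 - 2 * Real.pi) l | ψ θ = 0} :=
    isCompact_Icc.of_isClosed_subset (isClosed_Icc.inter (isClosed_eq hψc continuous_const)) (fun t ht => ht.1)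
  have hm : ψ (θ0 - 2 * Real.pi) = 0 := by
    rw [← hpψ, sub_add_cancel, h0]
  have hlm : θ0 - 2 * Real.pi ≤ l := by
    by_contra hcon
    push Not at hcon
    have := hlt (show θ0 - 2 * Real.pi ∈ Ioo l θ0 from ⟨hcon, by linarith⟩)
    simp only [mem_setOf_eq] at this
    linarith
  obtain ⟨θ1, ⟨hθ1, hz1⟩, hmax⟩ := hcomp.exists_isGreatest ⟨θ0 - 2 * Real.pi, ⟨le_rfl, hlm⟩, hm⟩
  have h10 : θ1 < θ0 := lt_of_le_of_lt hθ1.2 hl0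
  have hnz : ∀ θ ∈ Ioo θ1 θ0, ψ θ ≠ 0 := by
    intro θ hθ hz
    by_cases hθl : θ ≤ l
    · have := hmax ⟨⟨hθ1.1.trans hθ.1.le, hθl⟩, hz⟩
      linarith [hθ.1]
    · have := hlt (show θ ∈ Ioo l θ0 from ⟨by linarith, hθ.2⟩)
      simp only [mem_setOf_eq] at this
      linarith
  have hneg : ∀ θ ∈ Ioo θ1 θ0, ψ θ < 0 := by
    intro θ hθ
    by_contra hcon
    push Not at hcon
    -- a negative point near θ0
    set s := max ((l + θ0) / 2) ((θ + θ0) / 2) with hsdef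
    have hs1 : s < θ0 := max_lt (by linarith) (by linarith [hθ.2])
    have hs2 : l < s := lt_of_lt_of_le (by linarith) (le_max_left _ _)
    have hs3 : θ < s := lt_of_lt_of_le (by linarith [hθ.2]) (le_max_right _ _)
    have hsn : ψ s < 0 := by
      have := hlt (show s ∈ Ioo l θ0 from ⟨hs2, hs1⟩)
      simp only [mem_setOf_eq] at this
      linarith
    obtain ⟨ξ, hξ, hξ0⟩ := intermediate_value_Icc' hs3.le hψc.continuousOn (show (0:ℝ) ∈ Icc (ψ s) (ψ θ) from ⟨hsn.le, hcon⟩)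
    exact hnz ξ ⟨hθ.1.trans_le hξ.1, hξ.2.trans_lt hs1⟩ hξ0
  have hle : ∀ θ ∈ Icc θ1 θ0, ψ θ ≤ 0 := by
    intro θ hθ
    rcases eq_or_lt_of_le hθ.1 with h | h
    · rw [← h, hz1]
    rcases eq_or_lt_of_le hθ.2 with h' | h'
    · rw [h', h0]
    exact (hneg θ ⟨h, h'⟩).le
  -- sin at θ1
  have hs1 : Real.sin (ω θ1) < 0 := by
    have hle0 : Real.sin (ω θ1) ≤ 0 := by
      by_contra hcon
      push Not at hcon
      have hev := eventually_gt_right' (hψ θ1) (mul_pos (hd θ1) hcon)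
      have hev2 : ∀ᶠ s in 𝓝[>] θ1, s ∈ Ioo θ1 θ0 := Ioo_mem_nhdsGT h10
      obtain ⟨s, hs1, hs2⟩ := (hev.and hev2).exists
      linarith [hneg s hs2]
    refine lt_of_le_of_ne hle0 fun h => ?_
    have c1 := h2 θ1 hz1.le
    have c2 := h3 θ1 hz1.ge
    nlinarith [Real.sin_sq_add_cos_sq (ω θ1)]
  -- locate ω
  obtain ⟨m, hm1, hm2⟩ : ∃ m : ℤ, 2 * Real.pi * m < ω θ0 ∧ ω θ0 < 2 * Real.pi * m + Real.pi := by
    refine ⟨⌊ω θ0 / (2 * Real.pi)⌋, ?_, ?_⟩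
    · have h := Int.floor_le (ω θ0 / (2 * Real.pi))
      rw [le_div_iff₀ (by positivity)] at h
      refine lt_of_le_of_ne (by linarith) fun h' => ?_
      rw [← h', mul_comm, Real.sin_eq_zero_iff.2 ⟨2 * ⌊ω θ0 / (2 * Real.pi)⌋, by push_cast; ring⟩] at hs
      exact lt_irrefl _ hs
    · have h := Int.lt_floor_add_one (ω θ0 / (2 * Real.pi))
      rw [div_lt_iff₀ (by positivity)] at h
      set m := ⌊ω θ0 / (2 * Real.pi)⌋
      by_contra hcon
      push Not at hcon
      have : Real.sin (ω θ0 - m * (2 * Real.pi)) = Real.sin (ω θ0) := Real.sin_sub_int_mul_two_pi _ _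
      have h5 : 0 ≤ Real.sin (ω θ0 - m * (2 * Real.pi) - Real.pi) :=
        Real.sin_nonneg_of_nonneg_of_le_pi (by linarith) (by linarith)
      rw [Real.sin_sub_pi] at h5
      linarith
  have hne : ∀ k : ℤ, ∀ θ ∈ Icc θ1 θ0, ω θ ≠ 2 * Real.pi * k := by
    intro k θ hθ h
    have := h2 θ (hle θ hθ)
    rw [h, mul_comm, Real.cos_int_mul_two_pi] at this
    exact lt_irrefl _ this
  have hgt : 2 * Real.pi * m < ω θ1 := by
    by_contra hcon
    push Not at hcon
    obtain ⟨ξ, hξ, hξ0⟩ := intermediate_value_Icc h10.le hω.continuousOn (show 2 * Real.pi * m ∈ Icc (ω θ1) (ω θ0) from ⟨hcon, hm1.le⟩)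
    exact hne m ξ hξ hξ0
  refine ⟨θ1, hz1, ?_⟩
  by_contra hcon
  push Not at hcon
  have : Real.sin (ω θ1 - m * (2 * Real.pi)) = Real.sin (ω θ1) := Real.sin_sub_int_mul_two_pi _ _
  have h5 : 0 ≤ Real.sin (ω θ1 - m * (2 * Real.pi)) :=
        Real.sin_nonneg_of_nonneg_of_le_pi (by linarith) (by linarith)
  linarith

lemma no_zero {ψ ω d : ℝ → ℝ} (hψ : ∀ θ, HasDerivAt ψ (d θ * Real.sin (ω θ)) θ) (hd : ∀ θ, 0 < d θ)
    (hω : Continuous ω) (h2 : ∀ θ, ψ θ ≤ 0 → Real.cos (ω θ) < 1) (h3 : ∀ θ, 0 ≤ ψ θ → -1 < Real.cos (ω θ))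
    (hpψ : ∀ θ, ψ (θ + 2 * Real.pi) = ψ θ) (hpω : ∀ θ, ω (θ + 2 * Real.pi) = ω θ) (θ : ℝ) : ψ θ ≠ 0 := by
  intro hθ
  have hψc : Continuous ψ := continuous_iff_continuousAt.2 fun θ => (hψ θ).continuousAt
  have hred : ∀ θ, ∃ η ∈ Icc 0 (2 * Real.pi), ψ η = ψ θ ∧ ω η = ω θ := by
    intro θ
    obtain ⟨η, hη, h⟩ := Function.Periodic.exists_mem_Ico₀ (f := fun θ => (ψ θ, ω θ)) (c := 2 * Real.pi)
      (fun θ => by simp only [hpψ, hpω]) Real.two_pi_pos θ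
    exact ⟨η, Ico_subset_Icc_self hη, (Prod.ext_iff.1 h).1.symm, (Prod.ext_iff.1 h).2.symm⟩
  have hcomp : IsCompact {θ ∈ Icc 0 (2 * Real.pi) | ψ θ = 0} :=
    isCompact_Icc.of_isClosed_subset (isClosed_Icc.inter (isClosed_eq hψc continuous_const)) (fun t ht => ht.1)
  obtain ⟨η, hη, hη1, -⟩ := hred θ
  obtain ⟨θ0, ⟨-, hz0⟩, hmax⟩ := hcomp.exists_isMaxOn ⟨η, hη, hη1.trans hθ⟩ hω.continuousOn
  have hmax' : ∀ θ, ψ θ = 0 → ω θ ≤ ω θ0 := by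
    intro θ hθ
    obtain ⟨η, hη, hη1, hη2⟩ := hred θ
    rw [← hη2]
    exact hmax ⟨hη, hη1.trans hθ⟩
  have hsne : Real.sin (ω θ0) ≠ 0 := by
    intro h
    have c1 := h2 θ0 hz0.le
    have c2 := h3 θ0 hz0.ge
    nlinarith [Real.sin_sq_add_cos_sq (ω θ0)]
  rcases lt_or_gt_of_ne hsne with h | h
  · obtain ⟨θ1, hz1, hlt⟩ := prev_zero (ψ := fun θ => -ψ θ) (ω := fun θ => ω θ + Real.pi) (d := d)
      (fun θ => (hψ θ).neg.congr_deriv (by rw [Real.sin_add_pi]; ring)) hd (by fun_prop)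
      (fun θ hθ => by rw [Real.cos_add_pi]; linarith [h3 θ (by linarith)])
      (fun θ hθ => by rw [Real.cos_add_pi]; linarith [h2 θ (by linarith)])
      (fun θ => by simp only [hpψ]) (θ0 := θ0) (by simp only [hz0, neg_zero]) (by simp only [Real.sin_add_pi]; linarith)
    have := hmax' θ1 (by linarith)
    linarith
  · obtain ⟨θ1, hz1, hlt⟩ := prev_zero hψ hd hω h2 h3 hpψ hz0 h
    linarith [hmax' θ1 hz1]
end

noncomputable section
open scoped NNReal Topology

lemma ratio_cont {E : ℂ → ℂ} (hE : Continuous E) {R : ℝ} (hR : 0 < R) (near : ∀ z, ‖z‖ < R → E z = z)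
    (hne : ∀ z, z ≠ 0 → E z ≠ 0) :
    ∃ κ : ℂ → ℂ, Continuous κ ∧ (∀ z, κ z ≠ 0) ∧ (∀ z, E z = z * κ z) ∧ κ 0 = 1 := by
  classical
  refine ⟨fun z => if z = 0 then 1 else E z / z, ?_, ?_, ?_, by simp⟩
  · rw [continuous_iff_continuousAt]
    intro z
    by_cases hz : z = 0
    · subst hz
      have : (fun z => if z = 0 then 1 else E z / z) =ᶠ[𝓝 0] fun _ => (1:ℂ) := by
        filter_upwards [ball_mem_nhds (0:ℂ) hR] with z hz
        by_cases h : z = 0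
        · simp [h]
        · simp only [h, if_false]
          rw [near z (by simpa using hz), div_self h]
      exact continuousAt_const.congr this.symm
    · have : (fun z => if z = 0 then 1 else E z / z) =ᶠ[𝓝 z] fun z => E z / z := by
        filter_upwards [isOpen_ne.mem_nhds hz] with y hy
        rw [if_neg hy]
      exact (hE.continuousAt.div continuousAt_id hz).congr this.symm
  · intro z
    by_cases h : z = 0
    · simp [h]
    · simp only [h, if_false]
      exact div_ne_zero (hne z h) h
  · intro z
    by_cases h : z = 0
    · subst h; simp [near 0 (by simpa using hR)]
    · simp only [h, if_false]; field_simp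

section
variable {u : ℂ → ℝ} {g : ℂ → ℂ} {R : ℝ} {E P : ℂ → ℂ} {L : ℂ → ℂ →L[ℝ] ℂ} {f : ℂ → ℂ} {φ : ℂ → ℝ}

lemma deg_comp (D : CDeg) (hEc : Continuous E) (hR : 0 < R) (near : ∀ z, ‖z‖ < R → E z = z)
    (hne : ∀ z, z ≠ 0 → E z ≠ 0) (hprop : ∀ M, ∃ ρ, ∀ z, ρ ≤ ‖z‖ → M ≤ ‖E z‖) (hf : Continuous f)
    {ρ : ℝ} (hnz : ∀ x, ρ ≤ ‖x‖ → f x ≠ 0) : ∃ ρ', ∀ S, ρ' ≤ S → D.deg (fun z => f (E z)) (ball 0 S) = D.deg f (ball 0 S) := by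
  obtain ⟨κ, hκc, hκ0, hκ, hκ1⟩ := ratio_cont hEc hR near hne
  obtain ⟨S1, hS1⟩ := hprop ρ
  obtain ⟨z0, -, hz0⟩ := (isCompact_closedBall (0:ℂ) |S1|).exists_isMinOn ⟨0, by simp⟩
    (f := fun z => ‖κ z‖) (by fun_prop)
  have hm : 0 < ‖κ z0‖ := by simpa using hκ0 z0
  refine ⟨max (ρ / ‖κ z0‖) 1, fun S hS => ?_⟩
  have hSpos : 0 < S := lt_of_lt_of_le one_pos ((le_max_right _ _).trans hS)
  have h := D.hom_ball (fun t y => f (y * κ (t * y))) 0 (S := S) (by fun_prop) (by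
    intro t ht y hy
    rw [dist_zero_right] at hy
    refine hnz _ ?_
    rw [norm_mul]
    have hty : ‖(t : ℂ) * y‖ = t * ‖y‖ := by rw [norm_mul, Complex.norm_real, Real.norm_of_nonneg ht.1]
    by_cases hc : ‖(t : ℂ) * y‖ ≤ |S1|
    · have h1 : ‖κ z0‖ ≤ ‖κ (t * y)‖ := hz0 (by simpa using hc)
      have h2 : ρ / ‖κ z0‖ ≤ S := (le_max_left _ _).trans hS
      rw [div_le_iff₀ hm] at h2
      rw [hy]
      nlinarith
    · push Not at hc
      have h1 := hS1 (t * y) ((le_abs_self _).trans hc.le)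
      rw [hκ, norm_mul] at h1
      refine h1.trans ?_
      gcongr
      rw [hty]
      have := mul_le_mul_of_nonneg_right ht.2 (norm_nonneg y)
      linarith)
  simp only [Complex.ofReal_zero, zero_mul, hκ1, mul_one, Complex.ofReal_one, one_mul, ← hκ] at h
  exact h.symm

lemma deg_twist (D : CDeg) (hEc : Continuous P) (hR : 0 < R) (near : ∀ z, ‖z‖ < R → P z = z)
    (hne : ∀ z, z ≠ 0 → P z ≠ 0) {k : ℂ → ℂ} (hk : Continuous k) {S : ℝ} (hS : 0 < S)
    (hnz : ∀ x, ‖x‖ = S → k x ≠ 0) (hdeg : D.deg k (ball 0 S) = 1) :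
    ∃ c : ℝ → ℂ, Continuous c ∧ (∀ θ, c (θ + 2 * Real.pi) = c θ) ∧
      ∀ θ : ℝ, k (S * Complex.exp (θ * Complex.I)) * (starRingEnd ℂ) (P (S * Complex.exp (θ * Complex.I))) = S * Complex.exp (c θ) := by
  obtain ⟨κ, hκc, hκ0, hκ, hκ1⟩ := ratio_cont hEc hR near hne
  have h := D.hom_ball (fun t y => k y * (starRingEnd ℂ) (κ (t * y))) 0 (S := S)
    (by
      have : Continuous fun p : ℝ × ℂ => (starRingEnd ℂ) (κ (p.1 * p.2)) := Complex.continuous_conj.comp (by fun_prop)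
      fun_prop) (by
    intro t ht y hy
    rw [dist_zero_right] at hy
    refine mul_ne_zero (hnz y hy) (by simpa using hκ0 _))
  simp only [Complex.ofReal_zero, zero_mul, hκ1, mul_one, Complex.ofReal_one, one_mul, map_one] at h
  obtain ⟨c, hc, hcp, hce⟩ := D.exists_periodic_log (K := fun y => k y * (starRingEnd ℂ) (κ y))
    (hk.mul (Complex.continuous_conj.comp hκc)) hS (fun z hz => mul_ne_zero (hnz z hz) (by simpa using hκ0 _))
    (h.symm.trans hdeg)
  refine ⟨c, hc, hcp, fun θ => ?_⟩
  have h1 := hce θ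
  rw [hκ, map_mul, mul_comm ((starRingEnd ℂ) _) , ← mul_assoc, h1, map_mul, Complex.conj_ofReal, ← Complex.exp_conj]
  simp only [map_mul, Complex.conj_ofReal, Complex.conj_I]
  rw [show Complex.exp (c θ) * Complex.exp (θ * Complex.I) * (S * Complex.exp (θ * -Complex.I)) =
    S * Complex.exp (c θ) * (Complex.exp (θ * Complex.I) * Complex.exp (θ * -Complex.I)) by ring, ← Complex.exp_add]
  simp

theorem sign_const (D : CDeg) (hE : ExpData u g R E P L) (hR : 0 < R) {Si : ℂ → ℂ} (hSi : Continuous Si)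
    (hSE : ∀ z, Si (E z) = z) (hf : Continuous f)
    (hφ : ∀ x, HasFDerivAt φ (innerSL ℝ (f x)) x) {R2 ρ : ℝ}
    (hs1 : ∀ z, R2 ≤ ‖E z‖ → 0 ≤ φ (E z) → -0.7 * (‖f (E z)‖ * ‖P z‖) < inner ℝ (f (E z)) (P z))
    (hs2 : ∀ z, R2 ≤ ‖E z‖ → φ (E z) ≤ 0 → inner ℝ (f (E z)) (P z) < 0.7 * (‖f (E z)‖ * ‖P z‖))
    (hnz : ∀ x, ρ ≤ ‖x‖ → f x ≠ 0) (hdeg : ∀ S, ρ ≤ S → 0 < S → D.deg f (ball 0 S) = 1) :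
    ∃ S0, (∀ z, S0 ≤ ‖z‖ → 0 < φ (E z)) ∨ (∀ z, S0 ≤ ‖z‖ → φ (E z) < 0) := by
  have hE0 : E 0 = 0 := (hE.near 0 (by simpa using hR)).1
  have hEc := hE.continuous
  have hEne : ∀ z, z ≠ 0 → E z ≠ 0 := by
    intro z hz h
    apply hz
    have h1 := hSE z
    rw [h, ← hE0, hSE] at h1
    exact h1.symm
  have hPne : ∀ z, z ≠ 0 → P z ≠ 0 := by
    intro z hz
    rw [← norm_ne_zero_iff, hE.normP]
    have := norm_pos_iff.2 hz
    positivity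
  have hprop : ∀ M, ∃ ρ, ∀ z, ρ ≤ ‖z‖ → M ≤ ‖E z‖ := by
    intro M
    obtain ⟨B, hB⟩ := (isCompact_closedBall (0:ℂ) M).bddAbove_image (f := fun x => ‖Si x‖) hSi.norm.continuousOn
    refine ⟨B + 1, fun z hz => ?_⟩
    by_contra hc
    push Not at hc
    have := hB ⟨E z, by simpa using hc.le, rfl⟩
    simp only [hSE] at this
    linarith
  obtain ⟨ρ', hρ'⟩ := deg_comp D hEc hR (fun z hz => (hE.near z hz).1) hEne hprop hf hnz
  obtain ⟨ρ2, hρ2⟩ := hprop (max R2 ρ)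
  set S0 := max (max ρ' ρ) (max ρ2 1) with hS0
  have hne : ∀ z, S0 ≤ ‖z‖ → φ (E z) ≠ 0 := by
    intro z0 hz0
    set S := ‖z0‖ with hS
    have b1 : ρ' ≤ S := (le_max_left _ _).trans ((le_max_left _ _).trans hz0)
    have b2 : ρ ≤ S := (le_max_right _ _).trans ((le_max_left _ _).trans hz0)
    have b3 : ρ2 ≤ S := (le_max_left _ _).trans ((le_max_right _ _).trans hz0)
    have b4 : 1 ≤ S := (le_max_right _ _).trans ((le_max_right _ _).trans hz0)
    have hSpos : 0 < S := by linarith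
    have hR2 : ∀ z, ‖z‖ = S → R2 ≤ ‖E z‖ := fun z hz => (le_max_left _ _).trans (hρ2 z (by rw [hz]; exact b3))
    have hk0 : ∀ z, ‖z‖ = S → f (E z) ≠ 0 := fun z hz => hnz _ ((le_max_right _ _).trans (hρ2 z (by rw [hz]; exact b3)))
    obtain ⟨c, hcc, hcp, hce⟩ := deg_twist D hE.contP hR (fun z hz => (hE.near z hz).2) hPne
      (hf.comp hEc) hSpos hk0 ((hρ' S b1).trans (hdeg S b2 hSpos))
    set y : ℝ → ℂ := fun θ => S * Complex.exp (θ * Complex.I) with hy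
    have hyn : ∀ θ, ‖y θ‖ = S := fun θ => by
      simp only [hy]
      rw [norm_mul, Complex.norm_exp_ofReal_mul_I, Complex.norm_real, Real.norm_of_nonneg hSpos.le, mul_one]
    have hy0 : ∀ θ, y θ ≠ 0 := fun θ => by rw [← norm_ne_zero_iff, hyn]; positivity
    have hyd : ∀ θ, HasDerivAt y (Complex.I * y θ) θ := by
      intro θ
      have h1 : HasDerivAt (fun θ : ℝ => (θ : ℂ) * Complex.I) (1 * Complex.I) θ :=
        (Complex.ofRealCLM.hasDerivAt (x := θ)).mul_const _
      refine (h1.cexp.const_mul (S : ℂ)).congr_deriv ?_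
      simp only [hy]; ring
    have hyp : ∀ θ, y (θ + 2 * Real.pi) = y θ := by
      intro θ
      simp only [hy]
      push_cast
      rw [add_mul, Complex.exp_add, Complex.exp_two_pi_mul_I, mul_one]
    choose η hη hηL using fun θ => hE.jac (y θ) (hy0 θ)
    -- inner products
    have hip : ∀ θ, inner ℝ (f (E (y θ))) (P (y θ)) = S * (Real.exp (c θ).re * Real.cos (c θ).im) := by
      intro θ
      have := congrArg Complex.re (hce θ)
      rw [Complex.re_ofReal_mul, Complex.exp_re] at this
      rw [← this, cinner, Complex.mul_re, Complex.conj_re, Complex.conj_im]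
      simp only [Function.comp, hy]
      ring
    have hip2 : ∀ θ, inner ℝ (f (E (y θ))) (Complex.I * P (y θ)) = S * (Real.exp (c θ).re * Real.sin (c θ).im) := by
      intro θ
      have := congrArg Complex.im (hce θ)
      rw [Complex.im_ofReal_mul, Complex.exp_im] at this
      rw [← this, cinner]
      simp only [Function.comp, hy, Complex.mul_im (f _), Complex.conj_re, Complex.conj_im, Complex.I_mul_re, Complex.I_mul_im]
    have hnn : ∀ θ, ‖f (E (y θ))‖ * ‖P (y θ)‖ = S * Real.exp (c θ).re := by
      intro θ
      have := congrArg norm (hce θ)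
      rw [norm_mul, norm_mul, Complex.norm_exp, Complex.norm_real, Real.norm_of_nonneg hSpos.le, Complex.norm_conj] at this
      exact this
    have key := no_zero (ψ := fun θ => φ (E (y θ))) (ω := fun θ => (c θ).im)
      (d := fun θ => η θ * (S * Real.exp (c θ).re)) (by
        intro θ
        have h1 := ((hφ (E (y θ))).comp_hasDerivAt θ (((hE.strict (y θ)).hasFDerivAt).comp_hasDerivAt θ (hyd θ)))
        refine h1.congr_deriv ?_
        rw [hηL, innerSL_apply_apply, inner_smul_right, hip2]
        ring) (fun θ => mul_pos (hη θ) (by positivity)) (Complex.continuous_im.comp hcc)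
      (by
        intro θ hθ
        have := hs2 (y θ) (hR2 _ (hyn θ)) hθ
        rw [hip, hnn, ← mul_assoc] at this
        have hp : 0 < S * Real.exp (c θ).re := by positivity
        nlinarith)
      (by
        intro θ hθ
        have := hs1 (y θ) (hR2 _ (hyn θ)) hθ
        rw [hip, hnn, ← mul_assoc] at this
        have hp : 0 < S * Real.exp (c θ).re := by positivity
        nlinarith)
      (fun θ => by simp only [hyp]) (fun θ => by simp only [hcp]) z0.arg
    have e : y z0.arg = z0 := Complex.norm_mul_exp_arg_mul_I z0
    simpa only [e] using key
  refine ⟨S0, ?_⟩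
  have hS0p : 0 < S0 := lt_of_lt_of_le one_pos ((le_max_right _ _).trans (le_max_right _ _))
  -- connectedness
  have hφc : Continuous φ := continuous_iff_continuousAt.2 fun x => (hφ x).continuousAt
  let m : ℝ × ℝ → ℝ := fun p => φ (E (p.1 * Complex.exp (p.2 * Complex.I)))
  have hmc : Continuous m := by fun_prop
  have hpre : IsPreconnected (Ici S0 ×ˢ (univ : Set ℝ)) := isPreconnected_Ici.prod isPreconnected_univ
  have hm0 : ∀ p ∈ Ici S0 ×ˢ (univ : Set ℝ), m p ≠ 0 := by
    rintro ⟨r, θ⟩ ⟨hr, -⟩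
    apply hne
    simp only
    rw [norm_mul, Complex.norm_exp_ofReal_mul_I, Complex.norm_real, Real.norm_eq_abs, mul_one]
    exact (mem_Ici.1 hr).trans (le_abs_self _)
  have hrep : ∀ z, S0 ≤ ‖z‖ → ∃ p ∈ Ici S0 ×ˢ (univ : Set ℝ), φ (E z) = m p := by
    intro z hz
    refine ⟨(‖z‖, z.arg), ⟨hz, trivial⟩, ?_⟩
    simp only [m]
    rw [Complex.norm_mul_exp_arg_mul_I]
  have himg := (hpre.image m hmc.continuousOn).ordConnected
  by_cases hpos : ∀ p ∈ Ici S0 ×ˢ (univ : Set ℝ), 0 < m p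
  · left
    intro z hz
    obtain ⟨p, hp, e⟩ := hrep z hz
    rw [e]; exact hpos p hp
  · right
    push Not at hpos
    obtain ⟨p0, hp0, hle⟩ := hpos
    intro z hz
    obtain ⟨p, hp, e⟩ := hrep z hz
    rw [e]
    by_contra hcon
    push Not at hcon
    obtain ⟨p', hp', h0⟩ := himg.out ⟨p0, hp0, rfl⟩ ⟨p, hp, rfl⟩ ⟨hle, hcon⟩
    exact hm0 p' hp' h0
end
end

noncomputable section
open scoped NNReal Topology

/-- proper gradient homotopy on the complex plane -/
def CHom (f g : ℂ → ℂ) : Prop :=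
  ∃ h : ℝ → ℂ → ℂ, (Continuous fun p : ℝ × ℂ => h p.1 p.2) ∧
    (∀ t ∈ Icc (0:ℝ) 1, ∃ φ : ℂ → ℝ, ∀ x, HasFDerivAt φ (innerSL ℝ (h t x)) x) ∧
    (∀ M : ℝ, ∃ ρ : ℝ, ∀ t ∈ Icc (0:ℝ) 1, ∀ x, ρ ≤ ‖x‖ → M ≤ ‖h t x‖) ∧ h 0 = f ∧ h 1 = g

lemma CHom.trans {f g k : ℂ → ℂ} (h1 : CHom f g) (h2 : CHom g k) : CHom f k := by
  obtain ⟨a, ac, ag, ap, a0, a1⟩ := h1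
  obtain ⟨b, bc, bg, bp, b0, b1⟩ := h2
  refine ⟨fun t => if t ≤ 1 / 2 then a (2 * t) else b (2 * t - 1), ?_, ?_, ?_, ?_, ?_⟩
  · have e : (fun p : ℝ × ℂ => (if p.1 ≤ 1 / 2 then a (2 * p.1) else b (2 * p.1 - 1)) p.2) =
        fun p : ℝ × ℂ => if p.1 ≤ 1 / 2 then a (2 * p.1) p.2 else b (2 * p.1 - 1) p.2 := by
      ext p; split_ifs <;> rfl
    rw [e]
    refine Continuous.if_le (ac.comp (by fun_prop : Continuous fun p : ℝ × ℂ => (2 * p.1, p.2)))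
      (bc.comp (by fun_prop : Continuous fun p : ℝ × ℂ => (2 * p.1 - 1, p.2))) continuous_fst continuous_const ?_
    rintro ⟨t, x⟩ ht
    simp only at ht
    simp only [Function.comp, ht]
    norm_num
    rw [a1, b0]
  · intro t ht
    by_cases h : t ≤ 1 / 2
    · simp only [h, if_true]; exact ag _ ⟨by linarith [ht.1], by linarith⟩
    · simp only [h, if_false]; exact bg _ ⟨by linarith, by linarith [ht.2]⟩
  · intro M
    obtain ⟨ρ1, h1⟩ := ap M
    obtain ⟨ρ2, h2⟩ := bp M
    refine ⟨max ρ1 ρ2, fun t ht x hx => ?_⟩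
    by_cases h : t ≤ 1 / 2
    · simp only [h, if_true]; exact h1 _ ⟨by linarith [ht.1], by linarith⟩ x ((le_max_left _ _).trans hx)
    · simp only [h, if_false]; exact h2 _ ⟨by linarith, by linarith [ht.2]⟩ x ((le_max_right _ _).trans hx)
  · simp [a0]
  · norm_num [b1]

lemma CHom.linear {f g : ℂ → ℂ} {φ ψ : ℂ → ℝ} (hf : Continuous f) (hg : Continuous g)
    (hφ : ∀ x, HasFDerivAt φ (innerSL ℝ (f x)) x) (hψ : ∀ x, HasFDerivAt ψ (innerSL ℝ (g x)) x)
    (hp : ∀ M : ℝ, ∃ ρ : ℝ, ∀ t ∈ Icc (0:ℝ) 1, ∀ x, ρ ≤ ‖x‖ → M ≤ ‖(1 - t) • f x + t • g x‖) : CHom f g := by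
  refine ⟨fun t x => (1 - t) • f x + t • g x, by fun_prop, ?_, hp, by simp, by simp⟩
  intro t _
  refine ⟨fun x => (1 - t) • φ x + t • ψ x, fun x => ?_⟩
  rw [map_add, map_smul, map_smul]
  exact ((hφ x).const_smul (1 - t)).add ((hψ x).const_smul t)

lemma isGradient_of_C {F : ℂ → ℂ} (hF : Continuous F) {φ : ℂ → ℝ} (hφ : ∀ x, HasFDerivAt φ (innerSL ℝ (F x)) x) :
    IsGradient (fun x : Euc 2 => JJ (F (JJ.symm x))) := by
  have h1 : ∀ x : Euc 2, HasGradientAt (fun x => φ (JJ.symm x)) (JJ (F (JJ.symm x))) x := by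
    intro x
    rw [hasGradientAt_iff_hasFDerivAt]
    have h2 := (hφ (JJ.symm x)).comp x (JJ.symm.toContinuousLinearEquiv.hasFDerivAt (x := x))
    refine h2.congr_fderiv ?_
    ext v
    simp only [ContinuousLinearMap.comp_apply, innerSL_apply_apply, InnerProductSpace.toDual_apply_apply]
    have := JJ.inner_map_map (F (JJ.symm x)) (JJ.symm v)
    rw [JJ.apply_symm_apply] at this
    rw [this]; rfl
  refine ⟨fun x => φ (JJ.symm x), ?_, fun x => (h1 x).gradient⟩
  have hfd : fderiv ℝ (fun x : Euc 2 => φ (JJ.symm x)) = fun x => InnerProductSpace.toDual ℝ (Euc 2) (JJ (F (JJ.symm x))) := by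
    ext1 x
    exact (hasGradientAt_iff_hasFDerivAt.1 (h1 x)).fderiv
  rw [contDiff_one_iff_fderiv]
  refine ⟨fun x => (hasGradientAt_iff_hasFDerivAt.1 (h1 x)).differentiableAt, ?_⟩
  rw [hfd]
  exact (LinearIsometryEquiv.continuous _).comp (JJ.continuous.comp (hF.comp JJ.symm.continuous))

lemma CHom.toEuc {f g : ℂ → ℂ} (H : CHom f g) :
    ProperGradientHomotopic (fun x : Euc 2 => JJ (f (JJ.symm x))) (fun x => JJ (g (JJ.symm x))) := by
  obtain ⟨h, hc, hg, hp, h0, h1⟩ := H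
  have hcont : Continuous fun p : ℝ × Euc 2 => JJ (h p.1 (JJ.symm p.2)) :=
    JJ.continuous.comp (hc.comp (continuous_fst.prodMk (JJ.symm.continuous.comp continuous_snd)))
  refine ⟨fun t x => JJ (h t (JJ.symm x)), ⟨hcont.continuousOn, ?_, ?_⟩, by simp only [h0], by simp only [h1]⟩
  · intro t ht
    obtain ⟨φ, hφ⟩ := hg t ht
    exact isGradient_of_C (hc.comp (continuous_const.prodMk continuous_id)) hφ
  · intro K hK
    obtain ⟨M, hM⟩ := hK.isBounded.exists_norm_le
    obtain ⟨ρ, hρ⟩ := hp (M + 1)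
    refine ((isCompact_Icc (a := (0:ℝ)) (b := 1)).prod (isCompact_closedBall (0 : Euc 2) ρ)).of_isClosed_subset ?_ ?_
    · exact (isClosed_Icc.preimage continuous_fst).inter (hK.isClosed.preimage hcont)
    · rintro ⟨t, x⟩ ⟨ht, hx⟩
      refine ⟨ht, ?_⟩
      by_contra hcon
      simp only [mem_closedBall, dist_zero_right, not_le] at hcon
      have h2 := hρ t ht (JJ.symm x) (by rw [JJ.symm.norm_map]; exact hcon.le)
      have h3 := hM _ hx
      simp only [JJ.norm_map] at h3
      linarith

lemma C_of_gradient {f : Euc 2 → Euc 2} (h : IsGradient f) : ∃ φ : ℂ → ℝ,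
    (∀ x, HasFDerivAt φ (innerSL ℝ (JJ.symm (f (JJ x)))) x) ∧ Continuous f := by
  obtain ⟨φ, hφ, hg⟩ := h
  have hd : ∀ x, HasFDerivAt φ (InnerProductSpace.toDual ℝ (Euc 2) (f x)) x := by
    intro x
    have := (hφ.differentiable (by norm_num) x).hasGradientAt
    rw [hg x] at this
    exact hasGradientAt_iff_hasFDerivAt.1 this
  refine ⟨fun x => φ (JJ x), fun x => ?_, ?_⟩
  · refine ((hd (JJ x)).comp x (JJ.toContinuousLinearEquiv.hasFDerivAt (x := x))).congr_fderiv ?_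
    ext v
    simp only [ContinuousLinearMap.comp_apply, innerSL_apply_apply, InnerProductSpace.toDual_apply_apply]
    have := JJ.inner_map_map (JJ.symm (f (JJ x))) v
    rw [JJ.apply_symm_apply] at this
    rw [← this]; rfl
  · have h1 : Continuous (fderiv ℝ φ) := hφ.continuous_fderiv (by norm_num)
    have : f = fun x => (InnerProductSpace.toDual ℝ (Euc 2)).symm (fderiv ℝ φ x) := by
      ext1 x
      rw [(hd x).fderiv, LinearIsometryEquiv.symm_apply_apply]
    rw [this]
    exact (LinearIsometryEquiv.continuous _).comp h1

lemma C_of_proper {f : Euc 2 → Euc 2} (h : IsProper f) (M : ℝ) : ∃ ρ, ∀ x : ℂ, ρ ≤ ‖x‖ → M ≤ ‖JJ.symm (f (JJ x))‖ := by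
  obtain ⟨B, hB⟩ := (h (closedBall 0 M) (isCompact_closedBall _ _)).isBounded.exists_norm_le
  refine ⟨B + 1, fun x hx => ?_⟩
  by_contra hc
  push Not at hc
  rw [JJ.symm.norm_map] at hc
  have := hB (JJ x) (by simpa using hc.le)
  rw [JJ.norm_map] at this
  linarith

lemma C_of_deg (D : DegreeTheory 2) {f : Euc 2 → Euc 2} (h : HasDeg D f 1) {ρ : ℝ}
    (hρ : ∀ x : ℂ, ρ ≤ ‖x‖ → JJ.symm (f (JJ x)) ≠ 0) (S : ℝ) (hS : ρ ≤ S) (hS0 : 0 < S) :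
    D.toC.deg (fun x => JJ.symm (f (JJ x))) (ball 0 S) = 1 := by
  change D.deg _ _ = 1
  have e : JJ '' ball 0 S = ball 0 S := by simp
  simp only [JJ.apply_symm_apply, e]
  refine h S hS0 ?_
  intro x hx
  simp only [mem_preimage, mem_singleton_iff] at hx
  by_contra hc
  simp only [mem_ball, dist_zero_right, not_lt] at hc
  exact hρ (JJ.symm x) (by rw [JJ.symm.norm_map]; linarith) (by simp [hx])
end

noncomputable section
open scoped NNReal Topology

lemma CHom.neg {f g : ℂ → ℂ} (H : CHom f g) : CHom (fun x => -f x) (fun x => -g x) := by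
  obtain ⟨h, hc, hg, hp, h0, h1⟩ := H
  refine ⟨fun t x => -h t x, hc.neg, ?_, ?_, by simp only [h0], by simp only [h1]⟩
  · intro t ht
    obtain ⟨φ, hφ⟩ := hg t ht
    exact ⟨fun x => -φ x, fun x => by rw [map_neg]; exact (hφ x).neg⟩
  · simpa only [norm_neg] using hp

lemma CHom.angle {f g : ℂ → ℂ} {φ ψ : ℂ → ℝ} (hf : Continuous f) (hg : Continuous g)
    (hφ : ∀ x, HasFDerivAt φ (innerSL ℝ (f x)) x) (hψ : ∀ x, HasFDerivAt ψ (innerSL ℝ (g x)) x)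
    (hpf : ∀ M, ∃ ρ, ∀ x, ρ ≤ ‖x‖ → M ≤ ‖f x‖) (hpg : ∀ M, ∃ ρ, ∀ x, ρ ≤ ‖x‖ → M ≤ ‖g x‖) {ρ0 : ℝ}
    (ha : ∀ x, ρ0 ≤ ‖x‖ → -0.7 * (‖f x‖ * ‖g x‖) ≤ inner ℝ (f x) (g x)) : CHom f g := by
  refine CHom.linear hf hg hφ hψ fun M => ?_
  obtain ⟨ρ1, h1⟩ := hpf (3 * |M|)
  obtain ⟨ρ2, h2⟩ := hpg (3 * |M|)
  refine ⟨max ρ0 (max ρ1 ρ2), fun t ht x hx => ?_⟩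
  have a1 := h1 x (((le_max_left _ _).trans (le_max_right _ _)).trans hx)
  have a2 := h2 x (((le_max_right _ _).trans (le_max_right _ _)).trans hx)
  have a3 := ha x ((le_max_left _ _).trans hx)
  have ht0 := ht.1
  have ht1 : 0 ≤ 1 - t := by linarith [ht.2]
  have e : ‖(1 - t) • f x + t • g x‖ ^ 2 = ((1 - t) * ‖f x‖) ^ 2 + 2 * ((1 - t) * t * inner ℝ (f x) (g x)) + (t * ‖g x‖) ^ 2 := by
    rw [norm_add_sq_real, norm_smul, norm_smul, Real.norm_of_nonneg ht0, Real.norm_of_nonneg ht1, inner_smul_left, inner_smul_right]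
    simp only [RCLike.conj_to_real]
    ring
  have b1 : (1 - t) * t * (-0.7 * (‖f x‖ * ‖g x‖)) ≤ (1 - t) * t * inner ℝ (f x) (g x) :=
    mul_le_mul_of_nonneg_left a3 (mul_nonneg ht1 ht0)
  set a := (1 - t) * ‖f x‖ with hadef
  set b := t * ‖g x‖ with hbdef
  have ha' : (1 - t) * (3 * |M|) ≤ a := mul_le_mul_of_nonneg_left a1 ht1
  have hb' : t * (3 * |M|) ≤ b := mul_le_mul_of_nonneg_left a2 ht0
  have hab : 3 * |M| ≤ a + b := by linarith
  have b2 : (1 - t) * t * (-0.7 * (‖f x‖ * ‖g x‖)) = -0.7 * (a * b) := by rw [hadef, hbdef]; ring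
  have hM0 := abs_nonneg M
  have : |M| ^ 2 ≤ ‖(1 - t) • f x + t • g x‖ ^ 2 := by
    rw [e]
    nlinarith [sq_nonneg (a - b)]
  exact (le_abs_self M).trans ((sq_le_sq₀ hM0 (norm_nonneg _)).1 this)

lemma CHom.scale {V : ℂ → ℂ} {Dd : ℂ → ℝ} (hV : Continuous V) {R : ℝ} (hR : 0 < R) (near : ∀ z, ‖z‖ < R → V z = z)
    (hle : ∀ z, ‖z‖ ≤ ‖V z‖) (hD : ∀ x, HasFDerivAt Dd (innerSL ℝ (V x)) x) : CHom V (fun x => x) := by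
  obtain ⟨κ, hκc, hκ0, hκ, hκ1⟩ := ratio_cont hV hR near (fun z hz h => hz (by
    have := hle z; rw [h, norm_zero] at this; exact norm_le_zero_iff.1 this))
  have hk1 : ∀ z, 1 ≤ ‖κ z‖ := by
    intro z
    by_cases hz : z = 0
    · rw [hz, hκ1]; simp
    · have := hle z
      rw [hκ, norm_mul] at this
      have := norm_pos_iff.2 hz
      nlinarith
  refine ⟨fun t x => x * κ ((1 - t : ℝ) • x), by fun_prop, ?_, ?_, ?_, ?_⟩
  · intro t ht
    by_cases h1 : t = 1
    · subst h1
      refine ⟨fun x => ‖x‖ ^ 2 / 2, fun x => ?_⟩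
      have h2 := ((hasStrictFDerivAt_norm_sq x).hasFDerivAt).const_smul (1 / 2 : ℝ)
      simp only [sub_self, zero_smul, hκ1, mul_one]
      have e : (fun x : ℂ => ‖x‖ ^ 2 / 2) = (1 / 2 : ℝ) • fun x : ℂ => ‖x‖ ^ 2 := by
        ext x; simp; ring
      rw [e]
      refine h2.congr_fderiv ?_
      ext1 v
      simp
      ring
    · have hs : (1 - t) ≠ 0 := sub_ne_zero.2 (Ne.symm h1)
      refine ⟨fun x => ((1 - t) ^ 2)⁻¹ • Dd ((1 - t) • x), fun x => ?_⟩
      have h2 : HasFDerivAt (fun x : ℂ => (1 - t) • x) ((1 - t) • ContinuousLinearMap.id ℝ ℂ) x :=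
        (hasFDerivAt_id x).const_smul (1 - t)
      have h3 := ((hD ((1 - t) • x)).comp x h2).const_smul (((1 - t) ^ 2)⁻¹)
      refine h3.congr_fderiv ?_
      ext1 v
      rw [hκ]
      change ((1 - t) ^ 2)⁻¹ • inner ℝ ((1 - t) • x * κ ((1 - t) • x)) ((1 - t) • v) =
        inner ℝ (x * κ ((1 - t) • x)) v
      rw [inner_smul_right, smul_mul_assoc, inner_smul_left]
      simp only [smul_eq_mul, RCLike.conj_to_real]
      field_simp
  · intro M
    refine ⟨M, fun t _ x hx => ?_⟩
    rw [norm_mul]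
    have := hk1 ((1 - t) • x)
    nlinarith [norm_nonneg x]
  · ext1 x; simp only [sub_zero, one_smul]; exact (hκ x).symm
  · ext1 x; simp [hκ1]

theorem main_smooth (D : CDeg) {f : ℂ → ℂ} {φ : ℂ → ℝ} (hφ : ∀ x, HasFDerivAt φ (innerSL ℝ (f x)) x)
    (hf : ContDiff ℝ 1 f) (hpf : ∀ M, ∃ ρ, ∀ x, ρ ≤ ‖x‖ → M ≤ ‖f x‖)
    {ρ : ℝ} (hdeg : ∀ S, ρ ≤ S → 0 < S → D.deg f (ball 0 S) = 1) :
    CHom f (fun x => x) ∨ CHom f (fun x => -x) := by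
  obtain ⟨ρ1, hρ1⟩ := hpf 10
  set R := max (max ρ ρ1) 1 with hRdef
  have hR : 0 < R := lt_of_lt_of_le one_pos (le_max_right _ _)
  have hfR : ∀ x, R ≤ ‖x‖ → 10 ≤ ‖f x‖ := fun x hx => hρ1 x (((le_max_right _ _).trans (le_max_left _ _)).trans hx)
  obtain ⟨u, g, G1, G2, R1, hc, hp, hRR1⟩ := exists_conf hφ hf hR hfR
  obtain ⟨E, P, L, hE⟩ := hc.exists_exp
  obtain ⟨Si, hSi, hES, hSE⟩ := hE.exists_inv hc.contDiff_u.continuous hR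
  have hR1 : 0 < R1 := lt_of_lt_of_le hR hRR1
  obtain ⟨R2, hs1⟩ := star_plus hc hp hE hφ hf hR1
  obtain ⟨R2', hs2⟩ := star_minus hc hp hE hφ hf hR1
  obtain ⟨S0, hsign⟩ := sign_const D hE hR hSi hSE hf.continuous hφ (R2 := max R2 R2') (ρ := R)
    (fun z hz => hs1 z ((le_max_left _ _).trans hz)) (fun z hz => hs2 z ((le_max_right _ _).trans hz))
    (fun x hx h => by have := hfR x hx; rw [h, norm_zero] at this; linarith)
    (fun S hS => hdeg S (((le_max_left _ _).trans (le_max_left _ _)).trans hS))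
  have hle : ∀ x, ‖x‖ ≤ ‖Si x‖ := fun x => by
    have := hE.normE (Si x)
    rwa [hES] at this
  set V : ℂ → ℂ := fun x => P (Si x) with hV
  have hVc : Continuous V := hE.contP.comp hSi
  have hVn : ∀ x, ‖x‖ ≤ ‖V x‖ := by
    intro x
    simp only [hV]
    rw [hE.normP, hES]
    have h1 := hle x
    have h2 : 1 ≤ Real.exp (u x) := Real.one_le_exp (hc.nonneg x)
    nlinarith [norm_nonneg (Si x)]
  have hVnear : ∀ z, ‖z‖ < R → V z = z := by
    intro z hz
    have h1 := hE.near z hz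
    have h2 : Si z = z := by
      have := hSE z
      rwa [h1.1] at this
    simp only [hV]
    rw [h2, h1.2]
  have hD := hE.dist_grad hSi hES
  have hscale : CHom V (fun x => x) := CHom.scale hVc hR hVnear hVn hD
  have hVp : ∀ M, ∃ ρ, ∀ x, ρ ≤ ‖x‖ → M ≤ ‖V x‖ := fun M => ⟨M, fun x hx => hx.trans (hVn x)⟩
  rcases hsign with hs | hs
  · left
    refine CHom.trans (CHom.angle hf.continuous hVc hφ hD hpf hVp (ρ0 := max S0 R2) ?_) hscale
    intro x hx
    have h1 := hs (Si x) (((le_max_left _ _).trans hx).trans (hle x))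
    have h2 := hs1 (Si x) (by rw [hES]; exact (le_max_right _ _).trans hx) h1.le
    rw [hES] at h2
    exact h2.le
  · right
    refine CHom.trans (CHom.angle (g := fun x => -V x) hf.continuous hVc.neg hφ
      (ψ := fun x => -(‖Si x‖ ^ 2 / 2)) (fun x => by rw [map_neg]; exact (hD x).neg) hpf (by simpa only [norm_neg] using hVp)
      (ρ0 := max S0 R2') ?_) hscale.neg
    intro x hx
    have h1 := hs (Si x) (((le_max_left _ _).trans hx).trans (hle x))
    have h2 := hs2 (Si x) (by rw [hES]; exact (le_max_right _ _).trans hx) h1.le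
    rw [hES] at h2
    rw [norm_neg, inner_neg_right]
    simp only [hV]
    linarith
end

noncomputable section
open scoped NNReal Topology

open MeasureTheory in
lemma mollify_piece {p : ℂ → ℝ} (hp : ContDiff ℝ 1 p) (hc : HasCompactSupport p) {ε : ℝ} (hε : 0 < ε) :
    ∃ q : ℂ → ℝ, ContDiff ℝ 2 q ∧ (∀ x, ‖fderiv ℝ q x - fderiv ℝ p x‖ ≤ ε) ∧
      ∀ x, (∀ y ∈ ball x 1, p y = 0) → q x = 0 := by
  have hfc : Continuous (fderiv ℝ p) := hp.continuous_fderiv (by norm_num)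
  have hu : UniformContinuous (fderiv ℝ p) := (hc.fderiv ℝ).uniformContinuous_of_continuous hfc
  obtain ⟨δ, hδ, hδ2⟩ := Metric.uniformContinuous_iff.1 hu ε hε
  have hm : 0 < min δ 1 := lt_min hδ one_pos
  let ψ : ContDiffBump (0 : ℂ) := ⟨min δ 1 / 2, min δ 1, by positivity, by linarith⟩
  have hout : ψ.rOut = min δ 1 := rfl
  have hψi : LocallyIntegrable (ψ.normed volume) (volume : Measure ℂ) :=
    (ψ.continuous_normed (μ := volume)).locallyIntegrable
  have hpi : LocallyIntegrable p (volume : Measure ℂ) := hp.continuous.locallyIntegrable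
  refine ⟨MeasureTheory.convolution (ψ.normed volume) p (ContinuousLinearMap.lsmul ℝ ℝ) volume, ?_, ?_, ?_⟩
  · exact ψ.hasCompactSupport_normed.contDiff_convolution_left (n := 2) _ ψ.contDiff_normed hpi
  · intro x
    have h1 := hc.hasFDerivAt_convolution_right (ContinuousLinearMap.lsmul ℝ ℝ) hψi hp x
    rw [h1.fderiv, ← dist_eq_norm]
    have h2 := ψ.dist_normed_convolution_le (μ := volume) (x₀ := x) (ε := ε) (g := fderiv ℝ p)
      hfc.aestronglyMeasurable (fun y hy => (hδ2 (lt_of_lt_of_le (mem_ball.1 hy) (by rw [hout]; exact min_le_left _ _))).le)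
    convert h2 using 3
    ext a b c
    rfl
  · intro x hx
    have h2 := ψ.dist_normed_convolution_le (μ := volume) (x₀ := x) (ε := 0) (g := p)
      hp.continuous.aestronglyMeasurable (fun y hy => by
        have h3 : y ∈ ball x 1 := lt_of_lt_of_le (mem_ball.1 hy) (by rw [hout]; exact min_le_right _ _)
        rw [hx y h3, hx x (mem_ball_self one_pos), dist_self])
    rw [dist_le_zero] at h2
    rw [h2, hx x (mem_ball_self one_pos)]

def cutP (φ : ℂ → ℝ) (n : ℕ) (x : ℂ) : ℝ := Real.smoothTransition (n - ‖x‖ ^ 2) * φ x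

lemma cutP_one {φ : ℂ → ℝ} {n : ℕ} {x : ℂ} (h : ‖x‖ ^ 2 + 1 ≤ n) : cutP φ n x = φ x := by
  rw [cutP, Real.smoothTransition.one_of_one_le (by linarith), one_mul]

lemma cutP_zero {φ : ℂ → ℝ} {n : ℕ} {x : ℂ} (h : n ≤ ‖x‖ ^ 2) : cutP φ n x = 0 := by
  rw [cutP, Real.smoothTransition.zero_of_nonpos (by linarith), zero_mul]

lemma cutP_contDiff {φ : ℂ → ℝ} (h : ContDiff ℝ 1 φ) (n : ℕ) : ContDiff ℝ 1 (cutP φ n) := by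
  unfold cutP
  exact (Real.smoothTransition.contDiff.comp (contDiff_const.sub (contDiff_norm_sq ℝ))).mul h

lemma cutP_supp (φ : ℂ → ℝ) (n : ℕ) : HasCompactSupport (cutP φ n) := by
  refine HasCompactSupport.intro (isCompact_closedBall (0:ℂ) n) fun x hx => cutP_zero ?_
  simp only [mem_closedBall, dist_zero_right, not_le] at hx
  have h0 : (0:ℝ) ≤ n := Nat.cast_nonneg n
  rcases Nat.eq_zero_or_pos n with h | h
  · subst h; simp
  · have : (1:ℝ) ≤ n := by exact_mod_cast h
    nlinarith

theorem smoothing {f : ℂ → ℂ} {φ : ℂ → ℝ} (hφ : ∀ x, HasFDerivAt φ (innerSL ℝ (f x)) x) (hf : Continuous f) :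
    ∃ (f' : ℂ → ℂ) (φ' : ℂ → ℝ), (∀ x, HasFDerivAt φ' (innerSL ℝ (f' x)) x) ∧ ContDiff ℝ 1 f' ∧
      ∀ x, ‖f' x - f x‖ ≤ 1 := by
  have hφ1 : ContDiff ℝ 1 φ := by
    rw [contDiff_one_iff_fderiv]
    refine ⟨fun x => (hφ x).differentiableAt, ?_⟩
    have : fderiv ℝ φ = fun x => innerSL ℝ (f x) := by ext1 x; exact (hφ x).fderiv
    rw [this]
    exact (innerSL ℝ).continuous.comp hf
  have hpc : ∀ n, ContDiff ℝ 1 (fun x => cutP φ (n+1) x - cutP φ n x) := fun n =>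
    (cutP_contDiff hφ1 (n+1)).sub (cutP_contDiff hφ1 n)
  have hps : ∀ n, HasCompactSupport (fun x => cutP φ (n+1) x - cutP φ n x) := fun n =>
    (cutP_supp φ (n+1)).sub (cutP_supp φ n)
  choose q hq1 hq2 hq3 using fun n : ℕ => mollify_piece (hpc n) (hps n) (ε := (1/2)^n / 2) (by positivity)
  set φ' : ℂ → ℝ := fun x => ∑' n, q n x with hφ'
  have key : ∀ r : ℝ, 0 < r → ∃ M : ℕ, (∀ x ∈ ball (0:ℂ) r, φ' x = ∑ n ∈ Finset.range M, q n x) ∧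
      ∀ x ∈ ball (0:ℂ) r, φ x = ∑ n ∈ Finset.range M, (cutP φ (n+1) x - cutP φ n x) := by
    intro r hr
    obtain ⟨M, hM⟩ := exists_nat_ge ((r+1)^2 + 1)
    refine ⟨M, fun x hx => ?_, fun x hx => ?_⟩
    · simp only [hφ']
      refine tsum_eq_sum fun n hn => ?_
      have hn' : (M:ℝ) ≤ n := by
        have : M ≤ n := by simpa using hn
        exact_mod_cast this
      refine hq3 n x fun y hy => ?_
      simp only [mem_ball, dist_zero_right] at hx
      have h1 : ‖y‖ ≤ r + 1 := by
        have := norm_le_norm_add_norm_sub x y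
        have h2 := mem_ball.1 hy
        rw [dist_eq_norm, ] at h2
        rw [norm_sub_rev] at this
        linarith
      have h2 : ‖y‖^2 ≤ (r+1)^2 := by gcongr
      rw [cutP_one (by push_cast; linarith), cutP_one (by linarith), sub_self]
    · simp only [mem_ball, dist_zero_right] at hx
      rw [Finset.sum_range_sub (fun n => cutP φ n x), cutP_one, cutP_zero]
      · ring
      · simp
      · have : ‖x‖^2 ≤ (r+1)^2 := by gcongr; linarith
        linarith
  have hφ'2 : ContDiff ℝ 2 φ' := by
    rw [contDiff_iff_contDiffAt]
    intro x
    obtain ⟨M, hM, -⟩ := key (‖x‖ + 1) (by positivity)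
    have h1 : ContDiffAt ℝ 2 (fun x => ∑ n ∈ Finset.range M, q n x) x :=
      (ContDiff.sum fun n _ => hq1 n).contDiffAt
    refine h1.congr_of_eventuallyEq ?_
    filter_upwards [isOpen_ball.mem_nhds (show x ∈ ball (0:ℂ) (‖x‖ + 1) by simp)] with y hy using hM y hy
  have herr : ∀ x, ‖fderiv ℝ φ' x - fderiv ℝ φ x‖ ≤ 1 := by
    intro x
    obtain ⟨M, hM, hM2⟩ := key (‖x‖ + 1) (by positivity)
    have hnh := isOpen_ball.mem_nhds (show x ∈ ball (0:ℂ) (‖x‖ + 1) by simp)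
    have e1 : φ' =ᶠ[𝓝 x] fun x => ∑ n ∈ Finset.range M, q n x := by
      filter_upwards [hnh] with y hy using hM y hy
    have e2 : φ =ᶠ[𝓝 x] fun x => ∑ n ∈ Finset.range M, (cutP φ (n+1) x - cutP φ n x) := by
      filter_upwards [hnh] with y hy using hM2 y hy
    rw [e1.fderiv_eq, e2.fderiv_eq, fderiv_fun_sum (fun n _ => (hq1 n).differentiable (by norm_num) x),
      fderiv_fun_sum (fun n _ => (hpc n).differentiable (by norm_num) x), ← Finset.sum_sub_distrib]
    refine (norm_sum_le_of_le _ fun n _ => hq2 n x).trans ?_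
    rw [← Finset.sum_div]
    have := sum_geometric_two_le M
    linarith
  have hfd : ContDiff ℝ 1 (fderiv ℝ φ') := hφ'2.fderiv_right (by norm_num)
  have e : ∀ v : ℂ, innerSL ℝ v = InnerProductSpace.toDual ℝ ℂ v := fun v => by
    ext w; rw [innerSL_apply_apply, InnerProductSpace.toDual_apply_apply]
  refine ⟨fun x => (InnerProductSpace.toDual ℝ ℂ).symm (fderiv ℝ φ' x), φ', fun x => ?_, ?_, fun x => ?_⟩
  · rw [e, LinearIsometryEquiv.apply_symm_apply]
    exact (hφ'2.differentiable (by norm_num) x).hasFDerivAt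
  · exact (LinearIsometryEquiv.contDiff (𝕜 := ℝ) (InnerProductSpace.toDual ℝ ℂ).symm).comp hfd
  · have h1 := herr x
    rw [(hφ x).fderiv, e] at h1
    have h2 := (InnerProductSpace.toDual ℝ ℂ).norm_map ((InnerProductSpace.toDual ℝ ℂ).symm (fderiv ℝ φ' x) - f x)
    rw [map_sub, LinearIsometryEquiv.apply_symm_apply] at h2
    rwa [← h2]
end

noncomputable section
open scoped NNReal Topology

lemma lin_lower {a b : ℂ} (h : ‖b - a‖ ≤ 1) {t : ℝ} (ht : t ∈ Icc (0:ℝ) 1) :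
    ‖a‖ - 1 ≤ ‖(1 - t) • a + t • b‖ := by
  have e : (1 - t) • a + t • b = a + t • (b - a) := by
    rw [sub_smul, smul_sub, one_smul]; ring
  have h1 : ‖t • (b - a)‖ ≤ 1 := by
    rw [norm_smul, Real.norm_of_nonneg ht.1]
    nlinarith [ht.1, ht.2, norm_nonneg (b - a)]
  have h2 := norm_sub_le (a + t • (b - a)) (t • (b - a))
  rw [add_sub_cancel_right] at h2
  rw [e]
  linarith

theorem main_C (D : CDeg) {f : ℂ → ℂ} {φ : ℂ → ℝ} (hφ : ∀ x, HasFDerivAt φ (innerSL ℝ (f x)) x)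
    (hf : Continuous f) (hpf : ∀ M, ∃ ρ, ∀ x, ρ ≤ ‖x‖ → M ≤ ‖f x‖)
    (hdeg : ∀ ρ : ℝ, (∀ x : ℂ, ρ ≤ ‖x‖ → f x ≠ 0) → ∀ S, ρ ≤ S → 0 < S → D.deg f (ball 0 S) = 1) :
    CHom f (fun x => x) ∨ CHom f (fun x => -x) := by
  obtain ⟨g, ψ, hψ, hg, hfg⟩ := smoothing hφ hf
  have hlow : ∀ t ∈ Icc (0:ℝ) 1, ∀ x, ‖f x‖ - 1 ≤ ‖(1 - t) • f x + t • g x‖ := fun t ht x => lin_lower (hfg x) ht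
  have hL : CHom f g := by
    refine CHom.linear hf hg.continuous hφ hψ fun M => ?_
    obtain ⟨ρ, hρ⟩ := hpf (M + 1)
    exact ⟨ρ, fun t ht x hx => by have := hlow t ht x; have := hρ x hx; linarith⟩
  obtain ⟨ρ, hρ⟩ := hpf 2
  have hpg : ∀ M, ∃ ρ, ∀ x, ρ ≤ ‖x‖ → M ≤ ‖g x‖ := by
    intro M
    obtain ⟨ρ, hρ⟩ := hpf (M + 1)
    refine ⟨ρ, fun x hx => ?_⟩
    have h1 := hlow 1 (by simp) x
    have h2 := hρ x hx
    simp only [sub_self, zero_smul, zero_add, one_smul] at h1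
    linarith
  have hgd : ∀ S, ρ ≤ S → 0 < S → D.deg g (ball 0 S) = 1 := by
    intro S hS hS0
    have h1 := D.hom_ball (fun t x => (1 - t) • f x + t • g x) 0 (S := S)
      (by have := hg.continuous; fun_prop) (fun t ht x hx h0 => by
        have h2 := hlow t ht x
        have h3 := hρ x (by rw [dist_zero_right] at hx; linarith)
        rw [h0, norm_zero] at h2
        linarith)
    simp only [sub_zero, one_smul, zero_smul, add_zero, sub_self, zero_add] at h1
    rw [← hdeg ρ (fun x hx h0 => by have := hρ x hx; rw [h0, norm_zero] at this; linarith) S hS hS0]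
    exact h1.symm
  exact (main_smooth D hψ hg hpg hgd).imp hL.trans hL.trans

theorem final_thm (D : DegreeTheory 2) (f : Euc 2 → Euc 2)
    (hgrad : IsGradient f) (hprop : IsProper f) (hdeg : HasDeg D f 1) :
    ProperGradientHomotopic f (id : Euc 2 → Euc 2) ∨
      ProperGradientHomotopic f (fun x : Euc 2 => -x) := by
  obtain ⟨φ, hφ, hc⟩ := C_of_gradient hgrad
  have hF : Continuous fun x => JJ.symm (f (JJ x)) := JJ.symm.continuous.comp (hc.comp JJ.continuous)
  refine (main_C D.toC hφ hF (C_of_proper hprop) (fun ρ hρ => C_of_deg D hdeg hρ)).imp ?_ ?_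
  · intro h
    have h1 := h.toEuc
    simp only [JJ.apply_symm_apply] at h1
    exact h1
  · intro h
    have h1 := h.toEuc
    simp only [JJ.apply_symm_apply, map_neg] at h1
    exact h1
end

/-- every proper gradient map `f : ℝ² → ℝ²` of Brouwer degree `1` is proper
gradient homotopic to the identity or to the minus identity; hence the set of proper
gradient homotopy classes of degree `1` has at most two elements. -/
theorem proper_gradient_deg_one_id_or_neg_id (D : DegreeTheory 2) (f : Euc 2 → Euc 2)
    (hgrad : IsGradient f) (hprop : IsProper f) (hdeg : HasDeg D f 1) :
    ProperGradientHomotopic f (id : Euc 2 → Euc 2) ∨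
      ProperGradientHomotopic f (fun x : Euc 2 => -x) := by
  exact final_thm D f hgrad hprop hdeg
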